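/- arXiv:math/0410252 — 3 statements merged into one kernel-verified Lean document; each statement's English description precedes it below -/
import Mathlib

section
/- Let f ∈ ℂ[x_0,…,x_4] be homogeneous of degree n with V = {f = 0} ⊂ ℙ⁴(ℂ) nodal, and let k be a positive integer with 2k < n. Let H be a nonzero linear subspace of the space of homogeneous polynomials of degree k in ℂ[x_0,…,x_4] all of whose members vanish at every point of Sing(V), and suppose that the set {x ∈ V : h(x) = 0 for all h ∈ H} is finite. Then the singular points of V impose independent linear conditions on homogeneous polynomials of degree 2n−5: for every point P ∈ Sing(V) there exists a homogeneous polynomial of degree 2n−5 in ℂ[x_0,…,x_4] vanishing at every point of Sing(V) \ {P} and not vanishing at P. -/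
open MvPolynomial

noncomputable section

/-- The projective space `ℙ^N(ℂ)`. -/
abbrev ProjPt (N : ℕ) := Projectivization ℂ (Fin (N + 1) → ℂ)

/-- A (homogeneous) polynomial vanishes at a point of projective space. -/
def VanishesAt {N : ℕ} (F : MvPolynomial (Fin (N + 1)) ℂ) (p : ProjPt N) : Prop :=
  eval p.rep F = 0

/-- The singular locus of the hypersurface `{f = 0} ⊂ ℙ⁴(ℂ)`: points where `f` and all
partial derivatives of `f` vanish. -/
def SingHyp (f : MvPolynomial (Fin 5) ℂ) : Set (ProjPt 4) :=
  {p : ProjPt 4 | eval p.rep f = 0 ∧ ∀ j : Fin 5, eval p.rep (pderiv j f) = 0}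

/-- The Hessian matrix of `f` evaluated at a vector `v`. -/
def HessianAt (f : MvPolynomial (Fin 5) ℂ) (v : Fin 5 → ℂ) : Matrix (Fin 5) (Fin 5) ℂ :=
  Matrix.of fun i j : Fin 5 => eval v (pderiv i (pderiv j f))


/-- The polynomial ring in five variables. -/
abbrev S5 : Type := MvPolynomial (Fin 5) ℂ

/-- An ideal closed under homogeneous components. -/
def HI (I : Ideal S5) : Prop := ∀ g ∈ I, ∀ m, homogeneousComponent m g ∈ I

lemma HI_span {s : Set S5} (hs : ∀ x ∈ s, ∃ e, x.IsHomogeneous e) : HI (Ideal.span s) := by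
  let _ := MvPolynomial.gradedAlgebra (σ := Fin 5) (R := ℂ)
  intro g hg m
  refine homogeneousComponent_mem_of_mem (Ideal.homogeneous_span _ _ ?_) hg m
  intro x hx
  obtain ⟨e, he⟩ := hs x hx
  exact ⟨e, he⟩

lemma hc_mul_zero {b w : S5} {e m : ℕ} (hb : b.IsHomogeneous e) (h : m < e) :
    homogeneousComponent m (w * b) = 0 := by
  let _ := MvPolynomial.gradedAlgebra (σ := Fin 5) (R := ℂ)
  have := DirectSum.coe_decompose_mul_of_right_mem_of_not_le (𝒜 := homogeneousSubmodule (Fin 5) ℂ)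
    (a := w) (b := b) (i := e) (n := m) hb (by omega)
  exact (decomposition.decompose'_apply (w * b) m).symm.trans this

lemma hc_mul {b w : S5} {e : ℕ} (m : ℕ) (hb : b.IsHomogeneous e) :
    homogeneousComponent (m + e) (w * b) = homogeneousComponent m w * b := by
  let _ := MvPolynomial.gradedAlgebra (σ := Fin 5) (R := ℂ)
  have := DirectSum.coe_decompose_mul_of_right_mem_of_le (𝒜 := homogeneousSubmodule (Fin 5) ℂ)
    (a := w) (b := b) (i := e) (n := m + e) hb (by omega)
  rw [Nat.add_sub_cancel] at this
  refine (decomposition.decompose'_apply (w * b) (m+e)).symm.trans (this.trans ?_)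
  congr 1
  exact decomposition.decompose'_apply w m

lemma hc_self {b : S5} {e : ℕ} (hb : b.IsHomogeneous e) : homogeneousComponent e b = b :=
  homogeneousComponent_eq_self hb

lemma hc_ne {b : S5} {e m : ℕ} (hb : b.IsHomogeneous e) (h : m ≠ e) :
    homogeneousComponent m b = 0 := by
  have := homogeneousComponent_of_mem (n := e) (m := m) (p := b) hb
  rw [this, if_neg (by omega)]

lemma mem_of_hc {I : Ideal S5} {u : S5} (h : ∀ m, homogeneousComponent m u ∈ I) : u ∈ I := by
  rw [← sum_homogeneousComponent u]
  exact Ideal.sum_mem _ fun i _ => h i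

/-- `x` is a nonzerodivisor modulo `I`. -/
def NZ (I : Ideal S5) (x : S5) : Prop := ∀ u, u * x ∈ I → u ∈ I

lemma mem_sup_sp {I : Ideal S5} {a u : S5} :
    u ∈ I ⊔ Ideal.span {a} ↔ ∃ w, u - w * a ∈ I := by
  rw [Submodule.mem_sup]
  constructor
  · rintro ⟨y, hy, z, hz, rfl⟩
    obtain ⟨w, rfl⟩ := Ideal.mem_span_singleton'.1 hz
    exact ⟨w, by simpa using hy⟩
  · rintro ⟨w, hw⟩
    exact ⟨_, hw, w * a, Ideal.mem_span_singleton'.2 ⟨w, rfl⟩, by ring⟩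

lemma NZ_swap {I : Ideal S5} {a F : S5} (h1 : NZ I a) (h2 : NZ (I ⊔ Ideal.span {a}) F) :
    NZ (I ⊔ Ideal.span {F}) a := by
  intro u hu
  obtain ⟨v, hv⟩ := mem_sup_sp.1 hu
  have hv2 : v ∈ I ⊔ Ideal.span {a} := h2 v (mem_sup_sp.2 ⟨u, by
    have := I.neg_mem hv
    convert this using 1; ring⟩)
  obtain ⟨w, hw⟩ := mem_sup_sp.1 hv2
  refine mem_sup_sp.2 ⟨w, h1 _ ?_⟩
  have := I.add_mem hv (I.mul_mem_left F hw)
  convert this using 1; ring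

lemma NZ_desc {I : Ideal S5} (hI : HI I) {a F : S5} {e : ℕ} (ha : a.IsHomogeneous e) (he : 1 ≤ e)
    (h1 : NZ I a) (h2 : NZ (I ⊔ Ideal.span {a}) F) : NZ I F := by
  have key : ∀ r : ℕ, ∀ u, u * F ∈ I → ∃ w, u - w * a ^ r ∈ I := by
    intro r
    induction r with
    | zero => intro u _; exact ⟨u, by simp⟩
    | succ r ih =>
      intro u hu
      obtain ⟨v, hv⟩ := mem_sup_sp.1 (h2 u (Ideal.mem_sup_left hu))
      have hvF : v * F ∈ I := h1 _ (by
        have := I.sub_mem hu (I.mul_mem_left F hv)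
        convert this using 1; ring)
      obtain ⟨w, hw⟩ := ih v hvF
      refine ⟨w, ?_⟩
      have := I.add_mem hv (I.mul_mem_left a hw)
      convert this using 1; ring
  intro u hu
  refine mem_of_hc fun m => ?_
  obtain ⟨w, hw⟩ := key (m + 1) u hu
  have := hI _ hw m
  rw [map_sub, hc_mul_zero (ha.pow (m + 1)) (by nlinarith), sub_zero] at this
  exact this

lemma NZ_of_mul_left {I : Ideal S5} {c F : S5} (h : NZ I (c * F)) : NZ I c := fun u hu =>
  h u (by have := I.mul_mem_right F hu; rwa [mul_assoc] at this)

lemma NZ_of_mul_right {I : Ideal S5} {c F : S5} (h : NZ I (c * F)) : NZ I F := fun u hu =>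
  h u (by have := I.mul_mem_left c hu; convert this using 1; ring)

lemma NZ_pow {I : Ideal S5} {a : S5} (h : NZ I a) (N : ℕ) : NZ I (a ^ N) := by
  induction N with
  | zero => intro u hu; simpa using hu
  | succ N ih =>
    intro u hu
    exact ih u (h _ (by rwa [mul_assoc, ← pow_succ]))

lemma NZ_congr {I : Ideal S5} {a b : S5} (h : NZ I a) (hab : a - b ∈ I) : NZ I b := fun u hu =>
  h u (by have := I.add_mem hu (I.mul_mem_left u hab); convert this using 1; ring)

/-- The socle modulo `I` is one-dimensional, concentrated in degree `t`. -/
def Soc (I : Ideal S5) (t : ℕ) : Prop :=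
  ∃ s : S5, s.IsHomogeneous t ∧ s ∉ I ∧ (∀ i, X i * s ∈ I) ∧
    ∀ u, (∀ i, X i * u ∈ I) → ∃ c : ℂ, u - C c * s ∈ I

lemma mul_mem_of_X {I : Ideal S5} {u F : S5} {D : ℕ} (hF : F.IsHomogeneous D) (hD : 1 ≤ D)
    (h : ∀ i, X i * u ∈ I) : u * F ∈ I := by
  have hFm : F ∈ Ideal.span (Set.range (X : Fin 5 → S5)) := by
    have := (mem_pow_idealOfVars_iff' (σ := Fin 5) (R := ℂ) 1 F).2 (by
      intro x hx
      rw [MvPolynomial.IsHomogeneous] at hF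
      by_contra hne
      have := IsHomogeneous.coeff_eq_zero hF (d := x) (by omega)
      exact hne this)
    simpa using this
  refine Submodule.span_induction ?_ ?_ ?_ ?_ hFm
  · rintro _ ⟨i, rfl⟩; rw [mul_comm]; exact h i
  · simp
  · intro x y _ _ hx hy; rw [mul_add]; exact I.add_mem hx hy
  · intro a x _ hx
    have := I.mul_mem_left a hx
    convert this using 1; simp only [smul_eq_mul]; ring

lemma Soc_aux {I : Ideal S5} {c F z : S5} (hc : NZ I c) (h : c * z ∈ I ⊔ Ideal.span {c * F}) :
    z ∈ I ⊔ Ideal.span {F} := by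
  obtain ⟨w, hw⟩ := mem_sup_sp.1 h
  exact mem_sup_sp.2 ⟨w, hc _ (by convert hw using 1; ring)⟩

lemma Soc_aux' {I : Ideal S5} {c F z : S5} (h : z ∈ I ⊔ Ideal.span {F}) :
    c * z ∈ I ⊔ Ideal.span {c * F} := by
  obtain ⟨w, hw⟩ := mem_sup_sp.1 h
  exact mem_sup_sp.2 ⟨w, by convert I.mul_mem_left c hw using 1; ring⟩

lemma Soc_lift {I : Ideal S5} {c F u : S5} {D : ℕ} (hF : F.IsHomogeneous D) (hD : 1 ≤ D)
    (hc : NZ I c) (hNF : NZ I F) (h : ∀ i, X i * u ∈ I ⊔ Ideal.span {c * F}) :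
    ∃ w, u - w * c ∈ I ∧ ∀ w', u - w' * c ∈ I → ∀ i, X i * w' ∈ I ⊔ Ideal.span {F} := by
  obtain ⟨w, hw⟩ := mem_sup_sp.1 (mul_mem_of_X hF hD h)
  refine ⟨w, hNF _ (by convert hw using 1; ring), fun w' hw' i => Soc_aux hc ?_⟩
  have := (I ⊔ Ideal.span {c * F}).sub_mem (h i)
    (Ideal.mem_sup_left (I.mul_mem_left (X i) hw'))
  convert this using 1; ring

lemma Soc_up {I : Ideal S5} {c F : S5} {D e t : ℕ} (hF : F.IsHomogeneous D) (hD : 1 ≤ D)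
    (hce : c.IsHomogeneous e) (hc : NZ I c) (hNF : NZ I F) (h : Soc (I ⊔ Ideal.span {F}) t) :
    Soc (I ⊔ Ideal.span {c * F}) (e + t) := by
  obtain ⟨s, hs, hsI, hXs, hu⟩ := h
  refine ⟨c * s, hce.mul hs, fun h => hsI (Soc_aux hc h), fun i => ?_, fun u hXu => ?_⟩
  · have := Soc_aux' (c := c) (hXs i)
    convert this using 1; ring
  · obtain ⟨w, hw, hw2⟩ := Soc_lift hF hD hc hNF hXu
    obtain ⟨a, ha⟩ := hu w (hw2 w hw)
    refine ⟨a, ?_⟩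
    have := (I ⊔ Ideal.span {c * F}).add_mem (Ideal.mem_sup_left hw) (Soc_aux' (c := c) ha)
    convert this using 1; ring

lemma Soc_down {I : Ideal S5} (hI : HI I) {c F : S5} {D e t : ℕ} (hF : F.IsHomogeneous D)
    (hD : 1 ≤ D) (hce : c.IsHomogeneous e) (hc : NZ I c) (hNF : NZ I F)
    (h : Soc (I ⊔ Ideal.span {c * F}) t) :
    ∃ t', t = t' + e ∧ Soc (I ⊔ Ideal.span {F}) t' := by
  obtain ⟨s, hs, hsI, hXs, hu⟩ := h
  obtain ⟨w, hw, hw2⟩ := Soc_lift hF hD hc hNF hXs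
  have hcomp := hI _ hw t
  rw [map_sub, hc_self hs] at hcomp
  have hle : e ≤ t := by
    by_contra hlt
    rw [hc_mul_zero hce (by omega), sub_zero] at hcomp
    exact hsI (Ideal.mem_sup_left hcomp)
  obtain ⟨t', rfl⟩ := Nat.exists_eq_add_of_le' hle
  rw [hc_mul t' hce] at hcomp
  set w' := homogeneousComponent t' w
  refine ⟨t', rfl, w', homogeneousComponent_isHomogeneous _ _, fun hmem => hsI ?_,
    hw2 w' hcomp, fun u hXu => ?_⟩
  · have := (I ⊔ Ideal.span {c * F}).add_mem (Ideal.mem_sup_left hcomp) (Soc_aux' (c := c) hmem)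
    convert this using 1; ring
  · obtain ⟨a, ha⟩ := hu (c * u) (fun i => by
      have := Soc_aux' (c := c) (hXu i)
      convert this using 1; ring)
    refine ⟨a, Soc_aux hc ?_⟩
    have := (I ⊔ Ideal.span {c * F}).add_mem ha
      (Ideal.mem_sup_left (I.mul_mem_left (C a) hcomp))
    convert this using 1; ring

lemma exchange {I : Ideal S5} (hI : HI I) {l F : S5} {D N t : ℕ} (hl : l.IsHomogeneous 1)
    (hF : F.IsHomogeneous D) (hD : 1 ≤ D) (hNl : NZ I l) (hN : l ^ N ∈ I ⊔ Ideal.span {F})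
    (h : Soc (I ⊔ Ideal.span {l}) t) :
    NZ I F ∧ Soc (I ⊔ Ideal.span {F}) (t + D - 1) := by
  have hN' : l ^ (N + D) ∈ I ⊔ Ideal.span {F} := by
    rw [pow_add]; exact Ideal.mul_mem_right _ _ hN
  obtain ⟨c0, hc0⟩ := mem_sup_sp.1 hN'
  have hcomp := hI _ hc0 (N + D)
  have hlp : (l ^ (N + D)).IsHomogeneous (N + D) := by simpa using hl.pow (N + D)
  rw [map_sub, hc_self hlp, hc_mul N hF] at hcomp
  set c := homogeneousComponent N c0
  have hce : c.IsHomogeneous N := homogeneousComponent_isHomogeneous _ _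
  have hcF : NZ I (c * F) := NZ_congr (NZ_pow hNl _) hcomp
  have hc := NZ_of_mul_left hcF
  have hNF := NZ_of_mul_right hcF
  refine ⟨hNF, ?_⟩
  have e1 : I ⊔ Ideal.span {c * F} = I ⊔ Ideal.span {l ^ (N + D - 1) * l} := by
    rw [← pow_succ, Nat.sub_add_cancel (by omega)]
    apply le_antisymm
    · refine sup_le le_sup_left ((Ideal.span_singleton_le_iff_mem _).2 ?_)
      refine mem_sup_sp.2 ⟨1, ?_⟩
      convert I.neg_mem hcomp using 1; ring
    · refine sup_le le_sup_left ((Ideal.span_singleton_le_iff_mem _).2 ?_)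
      refine mem_sup_sp.2 ⟨1, ?_⟩
      convert hcomp using 1; ring
  have hup := Soc_up hl le_rfl (by simpa using hl.pow (N + D - 1)) (NZ_pow hNl (N + D - 1)) hNl h
  rw [← e1] at hup
  obtain ⟨t', ht', hs⟩ := Soc_down hI hF hD hce hc hNF hup
  convert hs using 1
  omega

/-- Every element of the tuple is a nonzerodivisor modulo any set of the others. -/
def AllReg (a : Fin 5 → S5) : Prop := ∀ T : Set (Fin 5), ∀ i ∉ T, NZ (Ideal.span (a '' T)) (a i)

lemma span_insert_image (a : Fin 5 → S5) (i : Fin 5) (T : Set (Fin 5)) :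
    Ideal.span (a '' insert i T) = Ideal.span (a '' T) ⊔ Ideal.span {a i} := by
  rw [Set.image_insert_eq, Ideal.span_insert, sup_comm]

lemma update_image (a : Fin 5 → S5) (i : Fin 5) (F : S5) {T : Set (Fin 5)} (h : i ∉ T) :
    Function.update a i F '' T = a '' T := by
  apply Set.image_congr
  intro j hj
  rw [Function.update_of_ne]
  rintro rfl
  exact h hj

lemma AllReg_update {a : Fin 5 → S5} (ha : AllReg a) (hom : ∀ j, ∃ e, 1 ≤ e ∧ (a j).IsHomogeneous e)
    {i : Fin 5} {F : S5} (hF : NZ (Ideal.span (a '' {i}ᶜ)) F) : AllReg (Function.update a i F) := by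
  have hHI : ∀ T : Set (Fin 5), HI (Ideal.span (a '' T)) := fun T => HI_span (by
    rintro _ ⟨j, _, rfl⟩
    obtain ⟨e, _, he⟩ := hom j
    exact ⟨e, he⟩)
  have key : ∀ m : ℕ, ∀ T : Set (Fin 5), (insert i T)ᶜ.ncard = m → i ∉ T →
      NZ (Ideal.span (a '' T)) F := by
    intro m
    induction m with
    | zero =>
      intro T hT hiT
      rw [Set.ncard_eq_zero (Set.toFinite _)] at hT
      have : T = {i}ᶜ := by
        ext j
        simp only [Set.mem_compl_iff, Set.mem_singleton_iff]
        constructor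
        · rintro hj rfl; exact hiT hj
        · intro hj
          have : j ∈ insert i T := by
            rw [Set.compl_empty_iff] at hT
            rw [hT]; trivial
          exact (Set.mem_insert_iff.1 this).resolve_left hj
      rw [this]; exact hF
    | succ m ih =>
      intro T hT hiT
      obtain ⟨j, hj⟩ := Set.nonempty_of_ncard_ne_zero (s := (insert i T)ᶜ) (by omega)
      rw [Set.mem_compl_iff, Set.mem_insert_iff, not_or] at hj
      obtain ⟨e, he, hje⟩ := hom j
      refine NZ_desc (hHI T) hje he (ha T j hj.2) ?_
      rw [← span_insert_image]
      apply ih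
      · have : (insert i (insert j T))ᶜ = (insert i T)ᶜ \ {j} := by
          ext x; simp only [Set.mem_compl_iff, Set.mem_insert_iff, Set.mem_sdiff,
            Set.mem_singleton_iff]; tauto
        rw [this, Set.ncard_diff_singleton_of_mem, hT]; · rfl
        rw [Set.mem_compl_iff, Set.mem_insert_iff, not_or]; exact hj
      · rw [Set.mem_insert_iff, not_or]; exact ⟨fun h => hj.1 h.symm, hiT⟩
  intro T j hj
  by_cases hi : i ∈ T
  · have hji : j ≠ i := by rintro rfl; exact hj hi
    have hT : T = insert i (T \ {i}) := by
      rw [Set.insert_diff_singleton, Set.insert_eq_of_mem hi]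
    have h1 : i ∉ T \ {i} := by simp
    rw [hT, span_insert_image, update_image _ _ _ h1, Function.update_self,
      Function.update_of_ne hji]
    apply NZ_swap
    · exact ha _ _ (fun h => hj h.1)
    · rw [← span_insert_image]
      apply key _ _ rfl
      rw [Set.mem_insert_iff, not_or]; exact ⟨fun h => hji h.symm, h1⟩
  · rw [update_image _ _ _ hi]
    by_cases hji : j = i
    · subst hji; rw [Function.update_self]; exact key _ _ rfl hi
    · rw [Function.update_of_ne hji]; exact ha T j hj

/-- A regular tuple of forms with one-dimensional socle in degree `t`. -/
def Good (a : Fin 5 → S5) (t : ℕ) : Prop :=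
  AllReg a ∧ (∀ j, ∃ e, 1 ≤ e ∧ (a j).IsHomogeneous e) ∧ Soc (Ideal.span (Set.range a)) t

lemma range_split (a : Fin 5 → S5) (i : Fin 5) :
    Ideal.span (Set.range a) = Ideal.span (a '' {i}ᶜ) ⊔ Ideal.span {a i} := by
  rw [← span_insert_image, ← Set.image_univ]
  congr 2
  ext x; simp only [Set.mem_univ, Set.mem_insert_iff, Set.mem_compl_iff, Set.mem_singleton_iff]
  tauto

lemma Good_exchange {a : Fin 5 → S5} {t : ℕ} (h : Good a t) {i : Fin 5} (hi : (a i).IsHomogeneous 1)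
    {F : S5} {D N : ℕ} (hF : F.IsHomogeneous D) (hD : 1 ≤ D)
    (hN : (a i) ^ N ∈ Ideal.span (Set.range (Function.update a i F))) :
    Good (Function.update a i F) (t + D - 1) := by
  obtain ⟨h1, h2, h3⟩ := h
  have hni : i ∉ ({i}ᶜ : Set (Fin 5)) := by simp
  rw [range_split _ i, update_image _ _ _ hni, Function.update_self] at hN
  rw [range_split _ i] at h3
  have hHI : HI (Ideal.span (a '' {i}ᶜ)) := HI_span (by
    rintro _ ⟨j, _, rfl⟩
    obtain ⟨e, _, he⟩ := h2 j
    exact ⟨e, he⟩)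
  obtain ⟨hNF, hs⟩ := exchange hHI hi hF hD (h1 _ i hni) hN h3
  refine ⟨AllReg_update h1 h2 hNF, ?_, ?_⟩
  · intro j
    by_cases hj : j = i
    · subst hj; rw [Function.update_self]; exact ⟨D, hD, hF⟩
    · rw [Function.update_of_ne hj]; exact h2 j
  · rw [range_split _ i, update_image _ _ _ hni, Function.update_self]; exact hs

/-- chain of exchanges -/
lemma Good_chain {F L : Fin 5 → S5} {d : Fin 5 → ℕ} (hL : ∀ j, (L j).IsHomogeneous 1)
    (hF : ∀ j, (F j).IsHomogeneous (d j)) (hd : ∀ j, 1 ≤ d j) (h0 : Good L 0)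
    (hrad : ∀ i : ℕ, i ≤ 5 → ∀ l : S5, l.IsHomogeneous 1 →
      ∃ N, l ^ N ∈ Ideal.span (Set.range fun j : Fin 5 => if j.1 < i then F j else L j)) :
    Good F (∑ j, (d j - 1)) := by
  have step : ∀ i : ℕ, i ≤ 5 → Good (fun j : Fin 5 => if j.1 < i then F j else L j)
      (∑ j : Fin 5, if j.1 < i then (d j - 1) else 0) := by
    intro i
    induction i with
    | zero => intro _; simpa using h0
    | succ i ih =>
      intro hi
      have ih := ih (by omega)
      have e1 : (fun j : Fin 5 => if j.1 < i + 1 then F j else L j) =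
          Function.update (fun j : Fin 5 => if j.1 < i then F j else L j) ⟨i, by omega⟩
            (F ⟨i, by omega⟩) := by
        funext j
        by_cases hj : j = ⟨i, by omega⟩
        · subst hj; simp
        · rw [Function.update_of_ne hj]
          have : j.1 ≠ i := fun h => hj (Fin.ext h)
          have : (j.1 < i + 1) ↔ j.1 < i := by omega
          simp only [this]
      obtain ⟨N, hN⟩ := hrad (i+1) hi (L ⟨i, by omega⟩) (hL _)
      rw [e1] at hN ⊢
      have e2 : (∑ j : Fin 5, if j.1 < i + 1 then (d j - 1) else 0) =
          (∑ j : Fin 5, if j.1 < i then (d j - 1) else 0) + d ⟨i, by omega⟩ - 1 := by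
        have hh := hd ⟨i, by omega⟩
        rw [Nat.add_sub_assoc hh]
        have : ∀ j : Fin 5, (if j.1 < i + 1 then (d j - 1) else 0) =
          (if j.1 < i then (d j - 1) else 0) + (if j = ⟨i, by omega⟩ then d j - 1 else 0) := by
          intro j
          by_cases hj : j = ⟨i, by omega⟩
          · subst hj; simp
          · have : j.1 ≠ i := fun h => hj (Fin.ext h)
            have : (j.1 < i + 1) ↔ j.1 < i := by omega
            simp [this, hj]
        rw [Finset.sum_congr rfl fun j _ => this j, Finset.sum_add_distrib]
        simp
      rw [e2]
      refine Good_exchange ih (N := N) ?_ (hF _) (hd _) ?_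
      · simp [hL]
      · simpa using hN
  have := step 5 le_rfl
  have e : ∀ j : Fin 5, j.1 < 5 := fun j => j.2
  simpa [e] using this

lemma Good_X : Good (fun i => (X i : S5)) 0 := by
  refine ⟨?_, fun j => ⟨1, le_rfl, isHomogeneous_X _ _⟩, 1, isHomogeneous_one _ _, ?_, ?_, ?_⟩
  · intro T i hi u hu
    rw [mem_ideal_span_X_image] at hu ⊢
    intro m hm
    obtain ⟨j, hj, hne⟩ := hu (m + Finsupp.single i 1) (by
      rw [mem_support_iff, coeff_mul_X]; exact mem_support_iff.1 hm)
    refine ⟨j, hj, ?_⟩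
    have : i ≠ j := by rintro rfl; exact hi hj
    simpa [this] using hne
  · intro h
    have hle : Ideal.span (Set.range fun i => (X i : S5)) ≤ RingHom.ker (eval (0 : Fin 5 → ℂ)) := by
      rw [Ideal.span_le]
      rintro _ ⟨i, rfl⟩
      simp [RingHom.mem_ker]
    have := hle h
    simp [RingHom.mem_ker] at this
  · intro i; exact Ideal.mul_mem_right _ _ (Ideal.subset_span ⟨i, rfl⟩)
  · intro u _
    refine ⟨coeff 0 u, ?_⟩
    have : Set.range (fun i => (X i : S5)) = X '' Set.univ := by simp
    rw [this, mem_ideal_span_X_image]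
    intro m hm
    by_contra hcon
    push Not at hcon
    have hm0 : m = 0 := by ext i; exact hcon i trivial
    subst hm0
    rw [mem_support_iff] at hm
    simp at hm

lemma lin_eq {l : S5} (hl : l.IsHomogeneous 1) : ∃ a : Fin 5 → ℂ, l = ∑ j, C (a j) * X j := by
  have h := hl
  rw [← mem_homogeneousSubmodule, homogeneousSubmodule_one_eq_span_X,
    Submodule.mem_span_range_iff_exists_fun] at h
  obtain ⟨c, hc⟩ := h
  exact ⟨c, by rw [← hc]; simp [smul_eq_C_mul]⟩

lemma lin_hom (a : Fin 5 → ℂ) : (∑ j, C (a j) * X j : S5).IsHomogeneous 1 := by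
  refine IsHomogeneous.sum _ _ _ fun j _ => ?_
  simpa using (isHomogeneous_C (Fin 5) (a j)).mul (isHomogeneous_X ℂ j)

lemma Good_lin {L : Fin 5 → S5} (hL : ∀ j, (L j).IsHomogeneous 1)
    (hz : ∀ x, (∀ i, eval x (L i) = 0) → x = 0) : Good L 0 := by
  choose A hA using fun i => lin_eq (hL i)
  have hinj : Function.Injective (Matrix.mulVec (Matrix.of A)) := by
    refine (injective_iff_map_eq_zero' (Matrix.mulVecLin (Matrix.of A))).2 ?_
    intro x
    constructor
    · intro h
      refine hz x fun i => ?_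
      have := congrFun h i
      rw [hA i]
      simpa [Matrix.mulVec, dotProduct] using this
    · rintro rfl; simp
  rw [Matrix.mulVec_injective_iff_isUnit] at hinj
  obtain ⟨U, hU⟩ := hinj
  have hUi : (↑U⁻¹ : Matrix (Fin 5) (Fin 5) ℂ) * Matrix.of A = 1 := by rw [← hU]; simp
  have hUi2 : Matrix.of A * (↑U⁻¹ : Matrix (Fin 5) (Fin 5) ℂ) = 1 := by rw [← hU]; simp
  generalize (↑U⁻¹ : Matrix (Fin 5) (Fin 5) ℂ) = B at hUi hUi2
  let φ : S5 →ₐ[ℂ] S5 := aeval L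
  let ψ : S5 →ₐ[ℂ] S5 := aeval (fun j => ∑ i, C (B j i) * X i)
  have h1 : ∀ i, ψ (L i) = X i := by
    intro i
    rw [hA i]
    simp only [ψ, map_sum, map_mul, aeval_X, algHom_C, algebraMap_eq, Finset.mul_sum]
    rw [Finset.sum_comm]
    have : ∀ m, ∑ j, C (A i j) * (C (B j m) * X m) = C ((1 : Matrix (Fin 5) (Fin 5) ℂ) i m) * (X m : S5) := by
      intro m
      rw [← hUi2, Matrix.mul_apply, map_sum, Finset.sum_mul]
      simp [mul_assoc]
    simp only [this, Matrix.one_apply]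
    simp
  have h2 : ∀ j, φ (ψ (X j)) = X j := by
    intro j
    simp only [φ, ψ, map_sum, map_mul, aeval_X, algHom_C, algebraMap_eq]
    simp only [hA, Finset.mul_sum]
    rw [Finset.sum_comm]
    have : ∀ m, ∑ i, C (B j i) * (C (A i m) * X m) = C ((1 : Matrix (Fin 5) (Fin 5) ℂ) j m) * (X m : S5) := by
      intro m
      rw [← hUi, Matrix.mul_apply, map_sum, Finset.sum_mul]
      simp [mul_assoc]
    simp only [this, Matrix.one_apply]
    simp
  have h3 : ∀ u, φ (ψ u) = u := by
    intro u
    have : φ.comp ψ = AlgHom.id ℂ S5 := by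
      ext j : 1
      simpa using h2 j
    exact DFunLike.congr_fun this u
  obtain ⟨g1, g2, g3⟩ := Good_X
  refine ⟨?_, fun j => ⟨1, le_rfl, hL j⟩, ?_⟩
  · intro T i hi u hu
    have e1 := Ideal.mem_map_of_mem ψ hu
    rw [Ideal.map_span, Set.image_image, map_mul, h1] at e1
    simp only [h1] at e1
    have e2 := Ideal.mem_map_of_mem φ (g1 T i hi _ e1)
    rw [Ideal.map_span, Set.image_image, h3] at e2
    simpa [φ] using e2
  · have : Ideal.span (Set.range L) = Ideal.span (Set.range fun i => (X i : S5)) := by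
      apply le_antisymm
      · rw [Ideal.span_le]
        rintro _ ⟨i, rfl⟩
        rw [hA i]
        exact Ideal.sum_mem _ fun j _ => Ideal.mul_mem_left _ _ (Ideal.subset_span ⟨j, rfl⟩)
      · rw [Ideal.span_le]
        rintro _ ⟨j, rfl⟩
        show (X j : S5) ∈ _
        rw [← h2 j]
        simp only [φ, ψ, map_sum, map_mul, aeval_X, algHom_C, algebraMap_eq]
        exact Ideal.sum_mem _ fun j _ => Ideal.mul_mem_left _ _ (Ideal.subset_span ⟨j, rfl⟩)
    rw [this]
    exact g3

lemma hom_eval {g : S5} {d : ℕ} (hg : g.IsHomogeneous d) (c : ℂ) (v : Fin 5 → ℂ) :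
    eval (c • v) g = c ^ d * eval v g := by
  rw [eval_eq, eval_eq, Finset.mul_sum]
  refine Finset.sum_congr rfl fun m hm => ?_
  have hd : ∑ i, m i = d := by
    have := hg (mem_support_iff.1 hm)
    rw [← this, Finsupp.weight_apply, Finsupp.sum_fintype _ _ (by simp)]
    simp
  have : ∏ i ∈ m.support, (c • v) i ^ m i = c ^ d * ∏ i ∈ m.support, v i ^ m i := by
    simp only [Pi.smul_apply, smul_eq_mul, mul_pow, Finset.prod_mul_distrib]
    rw [Finset.prod_pow_eq_pow_sum, ← hd]
    congr 2
    refine Finset.sum_subset (Finset.subset_univ _) fun i _ hi => ?_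
    simpa using hi
  rw [this]; ring

/-- Restriction to the line spanned by `v`. -/
def lineHom (v : Fin 5 → ℂ) : S5 →ₐ[ℂ] Polynomial ℂ :=
  aeval (fun i => Polynomial.C (v i) * Polynomial.X)

lemma lineHom_eval (v : Fin 5 → ℂ) (c : ℂ) (g : S5) :
    Polynomial.eval c (lineHom v g) = eval (c • v) g := by
  have : (Polynomial.aeval c).comp (lineHom v) = aeval (c • v) := by
    apply MvPolynomial.algHom_ext
    intro i
    simp only [AlgHom.comp_apply, lineHom, aeval_X, map_mul, Polynomial.aeval_X,
      Polynomial.aeval_C, Pi.smul_apply, smul_eq_mul, Algebra.algebraMap_self, RingHom.id_apply]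
    exact mul_comm _ _
  have h := DFunLike.congr_fun this g
  simpa [Polynomial.coe_aeval_eq_eval] using h

/-- The prime ideal of the line spanned by `v`. -/
def lineI (v : Fin 5 → ℂ) : Ideal S5 := RingHom.ker (lineHom v)

lemma mem_lineI {v : Fin 5 → ℂ} {g : S5} : g ∈ lineI v ↔ ∀ c : ℂ, eval (c • v) g = 0 := by
  rw [lineI, RingHom.mem_ker]
  constructor
  · intro h c
    rw [← lineHom_eval, h, Polynomial.eval_zero]
  · intro h
    exact Polynomial.funext fun c => by rw [lineHom_eval, h, Polynomial.eval_zero]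

lemma mem_lineI_hom {v : Fin 5 → ℂ} {g : S5} {d : ℕ} (hg : g.IsHomogeneous d) :
    g ∈ lineI v ↔ eval v g = 0 := by
  rw [mem_lineI]
  constructor
  · intro h; simpa using h 1
  · intro h c; rw [hom_eval hg, h, mul_zero]

instance lineI_prime (v : Fin 5 → ℂ) : (lineI v).IsPrime := RingHom.ker_isPrime _

lemma lineHom_surj {v : Fin 5 → ℂ} (hv : v ≠ 0) : Function.Surjective (lineHom v) := by
  obtain ⟨i, hi⟩ : ∃ i, v i ≠ 0 := by
    by_contra h; push Not at h; exact hv (funext h)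
  intro g
  refine ⟨Polynomial.aeval (C (v i)⁻¹ * X i : S5) g, ?_⟩
  have : (lineHom v).comp (Polynomial.aeval (C (v i)⁻¹ * X i : S5)) = AlgHom.id ℂ _ := by
    ext : 1
    simp only [AlgHom.comp_apply, Polynomial.aeval_X, map_mul, lineHom, algHom_C, aeval_X,
      AlgHom.id_apply, Polynomial.algebraMap_eq]
    rw [← mul_assoc, ← Polynomial.C_mul, inv_mul_cancel₀ hi, Polynomial.C_1, one_mul]
  exact DFunLike.congr_fun this g

/-- Dimension bound for the affine scheme defined by `I`. -/
def DimLE (I : Ideal S5) (r : ℕ) : Prop :=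
  ∀ p : PrimeSpectrum S5, I ≤ p.asIdeal → Order.coheight p ≤ r

lemma DimLE.mono {I J : Ideal S5} {r : ℕ} (h : DimLE I r) (hIJ : I ≤ J) : DimLE J r :=
  fun p hp => h p (hIJ.trans hp)

lemma DimLE_bot : DimLE ⊥ 5 := by
  intro p _
  have h := Order.coheight_le_krullDim p
  have h2 : Order.krullDim (PrimeSpectrum S5) = 5 := by
    have := MvPolynomial.ringKrullDim_of_isNoetherianRing (R := ℂ) (ι := Fin 5)
    rw [ringKrullDim_eq_zero_of_field] at this
    simpa [ringKrullDim] using this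
  rw [h2] at h
  exact WithBot.coe_le_coe.1 h

lemma DimLE_f {f : S5} (hf : f ≠ 0) : DimLE (Ideal.span {f}) 4 := by
  intro p hp
  have h := DimLE_bot ⟨⊥, Ideal.isPrime_bot⟩ le_rfl
  have hlt : (⟨⊥, Ideal.isPrime_bot⟩ : PrimeSpectrum S5) < p := by
    rw [← PrimeSpectrum.asIdeal_lt_asIdeal]
    refine bot_lt_iff_ne_bot.2 fun h0 => hf ?_
    have := hp (Ideal.mem_span_singleton_self f)
    rw [h0] at this
    simpa using this
  have := (Order.coheight_add_one_le hlt).trans h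
  have h2 : Order.coheight p + 1 ≤ (4 : ℕ∞) + 1 := by
    simpa [show (4 : ℕ∞) + 1 = 5 by norm_num] using this
  have h3 := (ENat.add_le_add_iff_right (by simp)).1 h2
  exact_mod_cast h3

lemma coheight_lineI {v : Fin 5 → ℂ} (hv : v ≠ 0) : Order.coheight (⟨lineI v, inferInstance⟩ : PrimeSpectrum S5) ≤ 1 := by
  have := (Order.coheight_le_coe_iff (x := (⟨lineI v, inferInstance⟩ : PrimeSpectrum S5)) (n := 1)).2 ?_
  · exact_mod_cast this
  intro q hq
  have hq' : lineI v < q.asIdeal := hq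
  have hker : RingHom.ker (lineHom v) ≤ q.asIdeal := hq'.le
  have hp := Ideal.map_isPrime_of_surjective (f := lineHom v) (lineHom_surj hv) hker (I := q.asIdeal)
  have hcm : Ideal.comap (lineHom v) (Ideal.map (lineHom v) q.asIdeal) = q.asIdeal := by
    rw [Ideal.comap_map_of_surjective _ (lineHom_surj hv)]
    exact sup_eq_left.2 hker
  have hne : Ideal.map (lineHom v) q.asIdeal ≠ ⊥ := by
    intro h0
    rw [h0] at hcm
    exact hq'.ne hcm
  have hmax := IsPrime.to_maximal_ideal hne
  have : q.asIdeal.IsMaximal := by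
    rw [← hcm]
    exact Ideal.comap_isMaximal_of_surjective _ (lineHom_surj hv)
  have h0 : Order.coheight q = 0 := by
    rw [Order.coheight_eq_zero, PrimeSpectrum.isMax_iff]
    exact this
  rw [h0]; norm_num

/-- The irrelevant ideal. -/
def mI : Ideal S5 := RingHom.ker (constantCoeff (σ := Fin 5) (R := ℂ))

lemma mI_eq : mI = Ideal.span (Set.range X) := by
  apply le_antisymm
  · intro g hg
    rw [← Set.image_univ, mem_ideal_span_X_image]
    intro m hm
    by_contra h
    have h0 : m = 0 := by
      ext i
      by_contra hi
      exact h ⟨i, trivial, hi⟩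
    rw [mem_support_iff, h0] at hm
    exact hm hg
  · rw [Ideal.span_le]
    rintro _ ⟨i, rfl⟩
    simp [mI, RingHom.mem_ker]

lemma mI_max : mI.IsMaximal := by
  refine RingHom.ker_isMaximal_of_surjective _ fun c => ⟨C c, by simp⟩

lemma mem_mI {g : S5} {d : ℕ} (hg : g.IsHomogeneous d) (hd : 1 ≤ d) : g ∈ mI := by
  rw [mI, RingHom.mem_ker, constantCoeff_eq]
  by_contra h
  have := hg h
  simp at this
  omega

lemma DimLE_mI : DimLE mI 0 := by
  intro p hp
  have : p.asIdeal = mI := (mI_max.eq_of_le p.2.ne_top hp).symm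
  have h0 : Order.coheight p = 0 := by
    rw [Order.coheight_eq_zero, PrimeSpectrum.isMax_iff, this]
    exact mI_max
  rw [h0]; norm_num

lemma avoid {ι : Type} [Finite ι] (I : ι → Ideal S5) (r : ι → ℕ) (h1 : ∀ i, DimLE (I i) (r i + 1))
    (W : Submodule ℂ S5) (h2 : ∀ i, DimLE (I i ⊔ Ideal.span (W : Set S5)) (r i)) :
    ∃ w ∈ W, ∀ i, DimLE (I i ⊔ Ideal.span {w}) (r i) := by
  let B : Set (Ideal S5) := ⋃ i, {q | q ∈ (I i).minimalPrimes ∧ ¬ (W : Set S5) ⊆ q}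
  have hB : B.Finite := Set.finite_iUnion fun i =>
    (Ideal.finite_minimalPrimes_of_isNoetherianRing S5 (I i)).subset fun q hq => hq.1
  have hw : ∃ w ∈ W, ∀ q ∈ B, w ∉ q := by
    by_contra! hcon
    have : Finite B := hB
    obtain ⟨⟨q, hq⟩, hqt⟩ := Subspace.exists_eq_top_of_iUnion_eq_univ (k := ℂ) (E := W) (ι := B)
      (p := fun q => (q.1.restrictScalars ℂ).comap W.subtype) (by
        ext ⟨w, hw⟩
        simp only [Set.mem_iUnion, Set.mem_univ, iff_true]
        obtain ⟨q, hq, hwq⟩ := hcon w hw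
        exact ⟨⟨q, hq⟩, hwq⟩)
    obtain ⟨i, hi⟩ := Set.mem_iUnion.1 hq
    refine hi.2 fun w hw => ?_
    have : (⟨w, hw⟩ : W) ∈ (q.restrictScalars ℂ).comap W.subtype := by
      rw [hqt]; trivial
    exact this
  obtain ⟨w, hwW, hw⟩ := hw
  refine ⟨w, hwW, fun i p hp => ?_⟩
  obtain ⟨q, hq, hqp⟩ := Ideal.exists_minimalPrimes_le (le_sup_left.trans hp)
  have hqprime : q.IsPrime := hq.1.1
  let q' : PrimeSpectrum S5 := ⟨q, hqprime⟩
  have hqp' : q' ≤ p := hqp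
  by_cases hWq : (W : Set S5) ⊆ q
  · exact (Order.coheight_anti hqp').trans (h2 i q' (sup_le hq.1.2 (Ideal.span_le.2 hWq)))
  · have hwq : w ∉ q := hw q (Set.mem_iUnion.2 ⟨i, hq, hWq⟩)
    have hlt : q' < p := by
      refine lt_of_le_of_ne hqp' fun he => hwq ?_
      have : w ∈ p.asIdeal := hp (Ideal.mem_sup_right (Ideal.mem_span_singleton_self w))
      rw [← he] at this
      exact this
    have h3 := (Order.coheight_add_one_le hlt).trans (h1 i q' hq.1.2)
    push_cast at h3
    exact (ENat.add_le_add_iff_right (by simp)).1 h3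

lemma eval_rep {x : Fin 5 → ℂ} (hx : x ≠ 0) : ∃ c : ℂ, c ≠ 0 ∧ x = c • (Projectivization.mk ℂ x hx).rep := by
  have h := Projectivization.mk_rep (Projectivization.mk ℂ x hx)
  rw [Projectivization.mk_eq_mk_iff'] at h
  obtain ⟨a, ha⟩ := h
  have ha0 : a ≠ 0 := by
    rintro rfl
    rw [zero_smul] at ha
    exact Projectivization.rep_nonzero _ ha.symm
  exact ⟨a⁻¹, inv_ne_zero ha0, by rw [← ha, smul_smul, inv_mul_cancel₀ ha0, one_smul]⟩

lemma eval_rep_zero {x : Fin 5 → ℂ} (hx : x ≠ 0) {g : S5} {d : ℕ} (hg : g.IsHomogeneous d) :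
    eval (Projectivization.mk ℂ x hx).rep g = 0 ↔ eval x g = 0 := by
  obtain ⟨c, hc, hx'⟩ := eval_rep hx
  generalize (Projectivization.mk ℂ x hx).rep = v at hx'
  subst hx'
  rw [hom_eval hg]
  simp [hc]

lemma eval_zero_mI {g : S5} (hg : g ∈ mI) : eval (0 : Fin 5 → ℂ) g = 0 := by
  rw [eval_zero]
  exact hg

lemma cover {A : Set (ProjPt 4)} (hA : A.Finite) {I : Ideal S5}
    (h : ∀ x : Fin 5 → ℂ, ∀ hx : x ≠ 0, (∀ g ∈ I, eval x g = 0) → Projectivization.mk ℂ x hx ∈ A)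
    {p : Ideal S5} (hp : p.IsPrime) (hIp : I ≤ p) : mI ≤ p ∨ ∃ P ∈ A, lineI P.rep ≤ p := by
  have key : mI ⊓ hA.toFinset.inf (fun P => lineI P.rep) ≤ p := by
    intro g hg
    obtain ⟨g1, g2⟩ := Submodule.mem_inf.1 hg
    rw [Submodule.mem_finsetInf] at g2
    have : g ∈ I.radical := by
      rw [← vanishingIdeal_zeroLocus_eq_radical (K := ℂ), mem_vanishingIdeal_iff]
      intro x hx
      change eval x g = 0
      by_cases hx0 : x = 0
      · subst hx0; exact eval_zero_mI g1
      · have hm := h x hx0 (fun g hg => mem_zeroLocus_iff.1 hx g hg)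
        obtain ⟨c, hc, hx'⟩ := eval_rep hx0
        have := mem_lineI.1 (g2 _ (hA.mem_toFinset.2 hm)) c
        rw [← hx'] at this
        exact this
    exact (hp.radical_le_iff.2 hIp) this
  rcases (hp.inf_le).1 key with h1 | h1
  · exact Or.inl h1
  · obtain ⟨P, hP, hP'⟩ := (hp.inf_le').1 h1
    exact Or.inr ⟨P, hA.mem_toFinset.1 hP, hP'⟩

lemma DimLE_cover {A : Set (ProjPt 4)} (hA : A.Finite) {I : Ideal S5}
    (h : ∀ x : Fin 5 → ℂ, ∀ hx : x ≠ 0, (∀ g ∈ I, eval x g = 0) → Projectivization.mk ℂ x hx ∈ A) :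
    DimLE I 1 := by
  intro p hp
  rcases cover hA h p.2 hp with h1 | ⟨P, hP, h1⟩
  · exact (DimLE_mI p h1).trans (by norm_num)
  · have : (⟨lineI P.rep, inferInstance⟩ : PrimeSpectrum S5) ≤ p := h1
    exact_mod_cast (Order.coheight_anti this).trans (coheight_lineI P.rep_nonzero)

lemma dim0_zero {s : Set S5} (hs : ∀ a ∈ s, ∃ e, 1 ≤ e ∧ a.IsHomogeneous e)
    (h : DimLE (Ideal.span s) 0) {x : Fin 5 → ℂ} (hx : ∀ a ∈ s, eval x a = 0) : x = 0 := by
  by_contra hx0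
  have h1 : Ideal.span s ≤ lineI x := by
    rw [Ideal.span_le]
    intro a ha
    obtain ⟨e, _, he⟩ := hs a ha
    exact (mem_lineI_hom he).2 (hx a ha)
  have h2 := h ⟨lineI x, inferInstance⟩ h1
  have h3 : Order.coheight (⟨lineI x, inferInstance⟩ : PrimeSpectrum S5) = 0 := by simpa using h2
  rw [Order.coheight_eq_zero, PrimeSpectrum.isMax_iff] at h3
  have h4 : lineI x = mI := by
    refine h3.eq_of_le mI_max.ne_top fun g hg => ?_
    have := mem_lineI.1 hg 0
    rw [zero_smul, eval_zero] at this
    exact this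
  apply hx0
  funext i
  have : (X i : S5) ∈ lineI x := by
    rw [h4]; exact mem_mI (isHomogeneous_X ℂ i) le_rfl
  simpa using (mem_lineI_hom (isHomogeneous_X ℂ i)).1 this

lemma dim0_pow {s : Set S5} (hs : ∀ a ∈ s, ∃ e, 1 ≤ e ∧ a.IsHomogeneous e)
    (h : DimLE (Ideal.span s) 0) {l : S5} (hl : l.IsHomogeneous 1) : ∃ N, l ^ N ∈ Ideal.span s := by
  have : l ∈ (Ideal.span s).radical := by
    rw [← vanishingIdeal_zeroLocus_eq_radical (K := ℂ), mem_vanishingIdeal_iff]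
    intro x hx
    change eval x l = 0
    have : x = 0 := dim0_zero hs h fun a ha => 
      mem_zeroLocus_iff.1 hx a (Ideal.subset_span ha)
    subst this
    exact eval_zero_mI (mem_mI hl le_rfl)
  exact this

/-- The space of linear forms. -/
abbrev Lin : Submodule ℂ S5 := homogeneousSubmodule (Fin 5) ℂ 1

lemma DimLE_Lin (I : Ideal S5) (r : ℕ) : DimLE (I ⊔ Ideal.span (Lin : Set S5)) r := by
  have : DimLE (Ideal.span (Lin : Set S5)) 0 := DimLE_mI.mono (by
    rw [mI_eq, Ideal.span_le]
    rintro _ ⟨i, rfl⟩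
    exact Ideal.subset_span (isHomogeneous_X ℂ i))
  intro p hp
  exact (this p (le_sup_right.trans hp)).trans (by simp)

lemma choose_L {F : Fin 5 → S5}
    (hdim : ∀ i ≤ 5, DimLE (Ideal.span (F '' {j | j.1 < i})) (5 - i)) (m : ℕ) (hm : m ≤ 5) :
    ∃ L : Fin 5 → S5, (∀ j, (L j).IsHomogeneous 1) ∧ ∀ i ≤ 5,
      DimLE (Ideal.span (F '' {j | j.1 < i} ∪ L '' {j | 5 - m ≤ j.1 ∧ i ≤ j.1})) (5 - m - i) := by
  induction m with
  | zero =>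
    refine ⟨fun j => X 0, fun j => isHomogeneous_X _ _, fun i hi => ?_⟩
    have : {j : Fin 5 | 5 - 0 ≤ j.1 ∧ i ≤ j.1} = ∅ := by
      ext j; simp only [Set.mem_setOf_eq, Set.mem_empty_iff_false, iff_false]; omega
    rw [this, Set.image_empty, Set.union_empty]
    exact hdim i hi
  | succ m ih =>
    obtain ⟨L, hL, hLd⟩ := ih (by omega)
    obtain ⟨w, hw, hwd⟩ := avoid (ι := Fin (5 - m))
      (fun i => Ideal.span (F '' {j | j.1 < i.1} ∪ L '' {j | 5 - m ≤ j.1 ∧ i.1 ≤ j.1}))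
      (fun i => 4 - m - i.1)
      (fun i => by
        have := hLd i.1 (by omega)
        rwa [show 4 - m - i.1 + 1 = 5 - m - i.1 by omega])
      Lin (fun i => DimLE_Lin _ _)
    have hj : 4 - m < 5 := by omega
    refine ⟨Function.update L ⟨4 - m, hj⟩ w, ?_, ?_⟩
    · intro j
      by_cases hj' : j = ⟨4 - m, hj⟩
      · subst hj'; simpa using hw
      · simpa [Function.update_of_ne hj'] using hL j
    · intro i hi
      by_cases hi' : i ≤ 4 - m
      · have h := hwd ⟨i, by omega⟩
        simp only at h
        rw [show 5 - (m + 1) - i = 4 - m - i by omega]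
        refine h.mono ?_
        rw [← Ideal.span_union]
        apply Ideal.span_mono
        rintro x ((hx | ⟨j, hj2, rfl⟩) | hx)
        · exact Or.inl hx
        · refine Or.inr ⟨j, ⟨?_, hj2.2⟩, Function.update_of_ne ?_ _ _⟩
          · have := hj2.1; omega
          · have := hj2.1
            rintro rfl
            simp only at this; omega
        · rw [Set.mem_singleton_iff] at hx
          subst hx
          exact Or.inr ⟨⟨4 - m, hj⟩, ⟨by simp only; omega, hi'⟩, by simp⟩
      · have h := hLd i hi
        rw [show 5 - (m + 1) - i = 5 - m - i by omega]
        refine h.mono (Ideal.span_mono ?_)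
        rintro x (hx | ⟨j, hj2, rfl⟩)
        · exact Or.inl hx
        · refine Or.inr ⟨j, ⟨?_, hj2.2⟩, Function.update_of_ne ?_ _ _⟩
          · have := hj2.1; omega
          · have := hj2.1
            rintro rfl
            simp only at this; omega

lemma Good_of_dim {F : Fin 5 → S5} {d : Fin 5 → ℕ} (hF : ∀ j, (F j).IsHomogeneous (d j))
    (hd : ∀ j, 1 ≤ d j)
    (hdim : ∀ i ≤ 5, DimLE (Ideal.span (F '' {j | j.1 < i})) (5 - i)) :
    Good F (∑ j, (d j - 1)) := by
  obtain ⟨L, hL, hLd⟩ := choose_L hdim 5 le_rfl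
  have hrange : ∀ i ≤ 5, DimLE (Ideal.span (Set.range fun j : Fin 5 => if j.1 < i then F j else L j)) 0 := by
    intro i hi
    refine (hLd i hi).mono (Ideal.span_le.2 ?_) |>.mono le_rfl |> fun h => by simpa using h
    rintro x (⟨j, hj, rfl⟩ | ⟨j, hj, rfl⟩)
    · exact Ideal.subset_span ⟨j, if_pos hj⟩
    · exact Ideal.subset_span ⟨j, if_neg (by have := hj.2; omega)⟩
  have hhom : ∀ i, ∀ a ∈ (Set.range fun j : Fin 5 => if j.1 < i then F j else L j), ∃ e, 1 ≤ e ∧ a.IsHomogeneous e := by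
    rintro i _ ⟨j, rfl⟩
    by_cases hj : j.1 < i
    · simp only [if_pos hj]; exact ⟨_, hd j, hF j⟩
    · simp only [if_neg hj]; exact ⟨_, le_rfl, hL j⟩
  refine Good_chain hL hF hd (Good_lin hL fun x hx => ?_) fun i hi l hl => dim0_pow (hhom i) (hrange i hi) hl
  refine dim0_zero (hhom 0) (hrange 0 (by omega)) ?_
  rintro _ ⟨j, rfl⟩
  simpa using hx j

lemma choose_h {f : S5} (hf : f ≠ 0) (H : Submodule ℂ S5)
    (hH : DimLE (Ideal.span {f} ⊔ Ideal.span (H : Set S5)) 1) :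
    ∃ h1 ∈ H, ∃ h2 ∈ H, ∃ h3 ∈ H, ∃ l : S5, l.IsHomogeneous 1 ∧
      DimLE (Ideal.span {f} ⊔ Ideal.span {h1}) 3 ∧
      DimLE (Ideal.span {f} ⊔ Ideal.span {h1} ⊔ Ideal.span {h2}) 2 ∧
      DimLE (Ideal.span {f} ⊔ Ideal.span {h1} ⊔ Ideal.span {h2} ⊔ Ideal.span {h3}) 1 ∧
      DimLE (Ideal.span {f} ⊔ Ideal.span {h1} ⊔ Ideal.span {h2} ⊔ Ideal.span {h3} ⊔ Ideal.span {l}) 0 := by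
  have up : ∀ r, 1 ≤ r → ∀ I : Ideal S5, Ideal.span {f} ≤ I → DimLE (I ⊔ Ideal.span (H : Set S5)) r := by
    intro r hr I hI p hp
    exact (hH p ((sup_le_sup_right hI _).trans hp)).trans (by exact_mod_cast hr)
  obtain ⟨h1, m1, d1⟩ := avoid (ι := Unit) (fun _ => Ideal.span {f}) (fun _ => 3) (fun _ => DimLE_f hf) H
    (fun _ => up _ (by norm_num) _ le_rfl)
  obtain ⟨h2, m2, d2⟩ := avoid (ι := Unit) (fun _ => _) (fun _ => 2) (fun _ => d1 ()) H
    (fun _ => up _ (by norm_num) _ le_sup_left)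
  obtain ⟨h3, m3, d3⟩ := avoid (ι := Unit) (fun _ => _) (fun _ => 1) (fun _ => d2 ()) H
    (fun _ => up _ (by norm_num) _ (le_sup_left.trans le_sup_left))
  obtain ⟨l, m4, d4⟩ := avoid (ι := Unit) (fun _ => _) (fun _ => 0) (fun _ => d3 ()) Lin
    (fun _ => DimLE_Lin _ _)
  exact ⟨h1, m1, h2, m2, h3, m3, l, m4, d1 (), d2 (), d3 (), d4 ()⟩

lemma Good_F {f h1 h2 h3 l : S5} {n k N : ℕ} (hn : 1 ≤ n) (hk : 1 ≤ k) (hN : 1 ≤ N) (hf0 : f ≠ 0)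
    (hf : f.IsHomogeneous n) (hh1 : h1.IsHomogeneous k) (hh2 : h2.IsHomogeneous k)
    (hh3 : h3.IsHomogeneous k) (hl : l.IsHomogeneous 1)
    (d1 : DimLE (Ideal.span {f} ⊔ Ideal.span {h1}) 3)
    (d2 : DimLE (Ideal.span {f} ⊔ Ideal.span {h1} ⊔ Ideal.span {h2}) 2)
    (d3 : DimLE (Ideal.span {f} ⊔ Ideal.span {h1} ⊔ Ideal.span {h2} ⊔ Ideal.span {h3}) 1)
    (d4 : DimLE (Ideal.span {f} ⊔ Ideal.span {h1} ⊔ Ideal.span {h2} ⊔ Ideal.span {h3} ⊔ Ideal.span {l}) 0) :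
    Good ![f, h1, h2, h3, l ^ N] ((n - 1) + (k - 1) + (k - 1) + (k - 1) + (N - 1)) := by
  have key := Good_of_dim (F := ![f, h1, h2, h3, l ^ N]) (d := ![n, k, k, k, N]) ?_ ?_ ?_
  · simpa [Fin.sum_univ_five] using key
  · intro j
    fin_cases j
    · exact hf
    · exact hh1
    · exact hh2
    · exact hh3
    · simpa using hl.pow N
  · intro j
    fin_cases j <;> assumption
  · have m0 : ∀ i : ℕ, 0 < i → f ∈ Ideal.span (![f, h1, h2, h3, l ^ N] '' {j | j.1 < i}) :=
      fun i hi => Ideal.subset_span ⟨0, hi, rfl⟩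
    have m1 : ∀ i : ℕ, 1 < i → h1 ∈ Ideal.span (![f, h1, h2, h3, l ^ N] '' {j | j.1 < i}) :=
      fun i hi => Ideal.subset_span ⟨1, hi, rfl⟩
    have m2 : ∀ i : ℕ, 2 < i → h2 ∈ Ideal.span (![f, h1, h2, h3, l ^ N] '' {j | j.1 < i}) :=
      fun i hi => Ideal.subset_span ⟨2, hi, rfl⟩
    have m3 : ∀ i : ℕ, 3 < i → h3 ∈ Ideal.span (![f, h1, h2, h3, l ^ N] '' {j | j.1 < i}) :=
      fun i hi => Ideal.subset_span ⟨3, hi, rfl⟩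
    have m4 : ∀ i : ℕ, 4 < i → l ^ N ∈ Ideal.span (![f, h1, h2, h3, l ^ N] '' {j | j.1 < i}) :=
      fun i hi => Ideal.subset_span ⟨4, hi, rfl⟩
    have sp : ∀ {I : Ideal S5} {a : S5}, a ∈ I → Ideal.span {a} ≤ I := fun h =>
      (Ideal.span_singleton_le_iff_mem _).2 h
    intro i hi
    interval_cases i
    · exact DimLE_bot.mono bot_le
    · exact (DimLE_f hf0).mono (sp (m0 _ (by norm_num)))
    · exact d1.mono (sup_le (sp (m0 _ (by norm_num))) (sp (m1 _ (by norm_num))))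
    · exact d2.mono (sup_le (sup_le (sp (m0 _ (by norm_num))) (sp (m1 _ (by norm_num))))
        (sp (m2 _ (by norm_num))))
    · exact d3.mono (sup_le (sup_le (sup_le (sp (m0 _ (by norm_num))) (sp (m1 _ (by norm_num))))
        (sp (m2 _ (by norm_num)))) (sp (m3 _ (by norm_num))))
    · intro p hp
      refine d4 p (sup_le (sup_le (sup_le (sup_le (sp (hp (m0 _ (by norm_num))))
        (sp (hp (m1 _ (by norm_num))))) (sp (hp (m2 _ (by norm_num)))))
        (sp (hp (m3 _ (by norm_num))))) (sp ?_))
      exact p.2.mem_of_pow_mem _ (hp (m4 _ (by norm_num)))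

instance fd_hom (M : ℕ) : FiniteDimensional ℂ (homogeneousSubmodule (Fin 5) ℂ M) := by
  have : (homogeneousSubmodule (Fin 5) ℂ M).FG := by
    rw [← homogeneousSubmodule_one_pow]
    apply Submodule.FG.pow
    rw [homogeneousSubmodule_one_eq_span_X]
    exact Submodule.fg_span (Set.finite_range _)
  exact Module.Finite.iff_fg.2 this

lemma large_mem {I : Ideal S5} (h : ∀ l : S5, l.IsHomogeneous 1 → ∃ N, l ^ N ∈ I) :
    ∃ E, ∀ e, E ≤ e → ∀ u : S5, u.IsHomogeneous e → u ∈ I := by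
  have hr : mI ≤ I.radical := by
    rw [mI_eq, Ideal.span_le]
    rintro _ ⟨i, rfl⟩
    exact h _ (isHomogeneous_X ℂ i)
  obtain ⟨E, hE⟩ := I.exists_radical_pow_le_of_fg I.radical.fg_of_isNoetherianRing
  refine ⟨E, fun e he u hu => hE (Ideal.pow_right_mono hr E ?_)⟩
  rw [mI_eq]
  refine (mem_pow_idealOfVars_iff E u).2 fun x hx => ?_
  have := hu (mem_support_iff.1 hx)
  rw [Finsupp.degree_eq_weight_one]
  exact he.trans this.ge

lemma dual {I : Ideal S5} (hI : HI I) {t : ℕ} (hS : Soc I t)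
    (hl : ∃ E, ∀ e, E ≤ e → ∀ u : S5, u.IsHomogeneous e → u ∈ I) :
    ∃ τ : S5 →ₗ[ℂ] ℂ, (∀ u ∈ I, τ u = 0) ∧ ∀ e (u : S5), u.IsHomogeneous e → u ∉ I →
      ∃ e', ∃ v : S5, v.IsHomogeneous e' ∧ e + e' = t ∧ τ (u * v) ≠ 0 := by
  obtain ⟨s, hs, hsI, -, hsu⟩ := hS
  obtain ⟨E, hE⟩ := hl
  obtain ⟨τ, hτs, hτI⟩ := Submodule.exists_le_ker_of_notMem (p := I.restrictScalars ℂ) (v := s) hsI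
  have hτ : ∀ u ∈ I, τ u = 0 := fun u hu => hτI hu
  refine ⟨τ, hτ, ?_⟩
  have key : ∀ m e, E - e = m → ∀ (u : S5), u.IsHomogeneous e → u ∉ I →
      ∃ e', ∃ v : S5, v.IsHomogeneous e' ∧ e + e' = t ∧ τ (u * v) ≠ 0 := by
    intro m
    induction m with
    | zero => exact fun e he u hu hn => absurd (hE e (by omega) u hu) hn
    | succ m ih =>
      intro e he u hu hn
      by_cases hX : ∀ i, X i * u ∈ I
      · obtain ⟨c, hc⟩ := hsu u hX
        have het : e = t := by
          by_contra hne
          apply hn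
          have := hI _ hc e
          rw [map_sub, hc_self hu, homogeneousComponent_C_mul, hc_ne hs hne] at this
          simpa using this
        have hc0 : c ≠ 0 := by
          rintro rfl
          apply hn
          simpa using hc
        refine ⟨0, 1, isHomogeneous_one _ _, by omega, ?_⟩
        have h2 := hτ _ hc
        rw [map_sub, ← smul_eq_C_mul, map_smul, sub_eq_zero] at h2
        rw [mul_one, h2]
        exact mul_ne_zero hc0 hτs
      · push Not at hX
        obtain ⟨i, hi⟩ := hX
        have hXu : (X i * u).IsHomogeneous (e + 1) := by
          rw [add_comm]; exact (isHomogeneous_X ℂ i).mul hu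
        obtain ⟨e', v, hv, het, hne⟩ := ih (e + 1) (by omega) _ hXu hi
        refine ⟨1 + e', X i * v, (isHomogeneous_X ℂ i).mul hv, by omega, ?_⟩
        rwa [show u * (X i * v) = X i * u * v by ring]
  exact fun e u => key _ e rfl u

lemma dual_rep {I : Ideal S5} {t : ℕ} {τ : S5 →ₗ[ℂ] ℂ}
    (hdual : ∀ e (u : S5), u.IsHomogeneous e → u ∉ I →
      ∃ e', ∃ v : S5, v.IsHomogeneous e' ∧ e + e' = t ∧ τ (u * v) ≠ 0)
    {M : ℕ} (lam : S5 →ₗ[ℂ] ℂ) (hlam : ∀ w ∈ I, w.IsHomogeneous M → lam w = 0)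
    (hne : ∃ w : S5, w.IsHomogeneous M ∧ lam w ≠ 0) :
    ∃ e', M + e' = t ∧ ∃ q : S5, q.IsHomogeneous e' ∧ ∀ w : S5, w.IsHomogeneous M → τ (q * w) = lam w := by
  obtain ⟨w, hw, hwl⟩ := hne
  obtain ⟨e', -, -, het, -⟩ := hdual M w hw (fun h => hwl (hlam w h hw))
  refine ⟨e', het, ?_⟩
  let Φ : homogeneousSubmodule (Fin 5) ℂ e' →ₗ[ℂ] (homogeneousSubmodule (Fin 5) ℂ M →ₗ[ℂ] ℂ) :=
    (((LinearMap.mul ℂ S5).compr₂ τ).domRestrict₁₂ _ _)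
  have hΦ : ∀ q w, Φ q w = τ (q.1 * w.1) := fun q w => rfl
  have := FiniteDimensional.mem_span_of_iInf_ker_le_ker (𝕜 := ℂ)
    (L := fun q => Φ q) (K := lam.domRestrict (homogeneousSubmodule (Fin 5) ℂ M)) (by
      intro w hw
      rw [LinearMap.mem_ker, LinearMap.domRestrict_apply]
      refine hlam _ ?_ w.2
      by_contra hwI
      obtain ⟨e'', v, hv, he2, hne⟩ := hdual M w.1 w.2 hwI
      have : e'' = e' := by omega
      subst this
      rw [Submodule.mem_iInf] at hw
      have h2 := hw ⟨v, hv⟩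
      rw [LinearMap.mem_ker, hΦ, mul_comm] at h2
      exact hne h2)
  have h2 : lam.domRestrict (homogeneousSubmodule (Fin 5) ℂ M) ∈ LinearMap.range Φ := by
    refine Submodule.span_le.2 ?_ this
    rintro _ ⟨q, rfl⟩
    exact ⟨q, rfl⟩
  obtain ⟨q, hq⟩ := h2
  exact ⟨q.1, q.2, fun w hw => LinearMap.congr_fun hq ⟨w, hw⟩⟩

lemma sep {v w : Fin 5 → ℂ} (hw : w ≠ 0) (h : ¬ ∃ c : ℂ, v = c • w) :
    ∃ l : S5, l.IsHomogeneous 1 ∧ eval w l = 0 ∧ eval v l ≠ 0 := by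
  obtain ⟨i, hi⟩ : ∃ i, w i ≠ 0 := by
    by_contra h; push Not at h; exact hw (funext h)
  by_contra! hcon
  apply h
  refine ⟨v i / w i, funext fun j => ?_⟩
  have := hcon (C (w i) * X j - C (w j) * X i) ?_ ?_
  · simp only [map_sub, map_mul, eval_C, eval_X] at this
    simp only [Pi.smul_apply, smul_eq_mul]
    field_simp
    linear_combination this
  · apply IsHomogeneous.sub
    · simpa using (isHomogeneous_C (Fin 5) (w i)).mul (isHomogeneous_X ℂ j)
    · simpa using (isHomogeneous_C (Fin 5) (w j)).mul (isHomogeneous_X ℂ i)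
  · simp [mul_comm]

lemma sep_pt {P Q : ProjPt 4} (h : Q ≠ P) :
    ∃ l : S5, l.IsHomogeneous 1 ∧ eval Q.rep l = 0 ∧ eval P.rep l ≠ 0 := by
  refine sep Q.rep_nonzero ?_
  rintro ⟨c, hc⟩
  apply h
  rw [← P.mk_rep, ← Q.mk_rep, eq_comm, Projectivization.mk_eq_mk_iff']
  exact ⟨c, hc.symm⟩

lemma sep_prod (A : Finset (ProjPt 4)) (P : ProjPt 4) :
    ∃ D, ∃ s : S5, s.IsHomogeneous D ∧ D ≤ A.card ∧ (∀ Q ∈ A, Q ≠ P → eval Q.rep s = 0) ∧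
      eval P.rep s ≠ 0 := by
  classical
  induction A using Finset.induction_on with
  | empty => exact ⟨0, 1, isHomogeneous_one _ _, by simp, by simp, by simp⟩
  | insert Q A hQ ih =>
    obtain ⟨D, s, hs, hD, hsQ, hsP⟩ := ih
    rw [Finset.card_insert_of_notMem hQ]
    by_cases hQP : Q = P
    · refine ⟨D, s, hs, by omega, ?_, hsP⟩
      intro R hR hRP
      rcases Finset.mem_insert.1 hR with rfl | hR
      · exact absurd hQP hRP
      · exact hsQ R hR hRP
    · obtain ⟨l, hl, hlQ, hlP⟩ := sep_pt hQP
      refine ⟨D + 1, s * l, hs.mul hl, by omega, ?_, by simp [hlP, hsP]⟩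
      intro R hR hRP
      rcases Finset.mem_insert.1 hR with rfl | hR
      · simp [hlQ]
      · simp [hsQ R hR hRP]

lemma no_sq {f a : S5} {n : ℕ} (hf : f.IsHomogeneous n) (hfin : (SingHyp f).Finite)
    (ha : Prime a) (haf : a * a ∣ f) : False := by
  obtain ⟨c, rfl⟩ := haf
  set f := a * a * c with hfdef
  have hprime : (Ideal.span {a}).IsPrime := (Ideal.span_singleton_prime ha.ne_zero).2 ha
  have hcov := cover hfin (I := Ideal.span {a}) (fun x hx h => by
    have hxa : eval x a = 0 := h a (Ideal.mem_span_singleton_self a)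
    refine ⟨(eval_rep_zero hx hf).2 (by simp [hfdef, hxa]), fun j => (eval_rep_zero hx hf.pderiv).2 ?_⟩
    simp [hfdef, hxa, Derivation.leibniz]) hprime le_rfl
  obtain ⟨v, hv, hvl⟩ : ∃ v : Fin 5 → ℂ, v ≠ 0 ∧ ∀ l : S5, l.IsHomogeneous 1 → eval v l = 0 → a ∣ l := by
    rcases hcov with h | ⟨P, -, h⟩
    · exact ⟨fun _ => 1, fun h => one_ne_zero (congrFun h 0), fun l hl _ =>
        Ideal.mem_span_singleton.1 (h (mem_mI hl le_rfl))⟩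
    · exact ⟨P.rep, P.rep_nonzero, fun l hl hlv =>
        Ideal.mem_span_singleton.1 (h ((mem_lineI_hom hl).2 hlv))⟩
  obtain ⟨i, hi⟩ : ∃ i, v i ≠ 0 := by
    by_contra h; push Not at h; exact hv (funext h)
  obtain ⟨j, j', hji, hji', hjj⟩ : ∃ j j' : Fin 5, j ≠ i ∧ j' ≠ i ∧ j ≠ j' := by
    clear * -
    revert i; decide
  have hform : ∀ m, (C (v i) * X m - C (v m) * X i : S5).IsHomogeneous 1 := by
    intro m
    apply IsHomogeneous.sub
    · simpa using (isHomogeneous_C (Fin 5) (v i)).mul (isHomogeneous_X ℂ m)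
    · simpa using (isHomogeneous_C (Fin 5) (v m)).mul (isHomogeneous_X ℂ i)
  have hconst : ∀ m, m ≠ i → ∃ c : ℂ, C (v i) * X m - C (v m) * X i = a * C c := by
    intro m hm
    obtain ⟨b, hb⟩ := hvl _ (hform m) (by simp [mul_comm])
    have hne : (C (v i) * X m - C (v m) * X i : S5) ≠ 0 := by
      intro h0
      have := congrArg (eval (Pi.single m 1)) h0
      simp [Pi.single_apply, hm.symm, hi] at this
    have hdeg := (hform m).totalDegree hne
    rw [hb, totalDegree_mul_of_isDomain ha.ne_zero (by rintro rfl; exact hne (by rw [hb, mul_zero]))] at hdeg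
    have ha1 : a.totalDegree ≠ 0 := by
      intro h0
      rw [totalDegree_eq_zero_iff_eq_C] at h0
      apply ha.not_unit
      rw [h0]
      refine (IsUnit.mk0 _ ?_).map C
      intro h1
      rw [h1, map_zero] at h0
      exact ha.ne_zero h0
    have hb0 : b.totalDegree = 0 := by omega
    rw [totalDegree_eq_zero_iff_eq_C] at hb0
    exact ⟨_, by rw [hb, ← hb0]⟩
  obtain ⟨c1, hc1⟩ := hconst j hji
  obtain ⟨c2, hc2⟩ := hconst j' hji'
  have e1 := congrArg (eval (Pi.single j 1)) hc1
  have e2 := congrArg (eval (Pi.single j 1)) hc2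
  have e3 := congrArg (eval (Pi.single j' 1)) hc2
  simp [Pi.single_apply, hji.symm, hji'.symm, hjj, hjj.symm] at e1 e2 e3
  rcases e2 with e2 | e2
  · rw [e2, zero_mul] at e1; exact hi e1
  · rw [e2, mul_zero] at e3; exact hi e3

lemma f_ne {f : S5} {n : ℕ} (hf : f.IsHomogeneous n) (hfin : (SingHyp f).Finite) : f ≠ 0 := by
  rintro rfl
  exact no_sq hf hfin (a := X 0) X_prime (dvd_zero _)

lemma f_sqf {f : S5} {n : ℕ} (hf : f.IsHomogeneous n) (hfin : (SingHyp f).Finite) : Squarefree f := by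
  rw [squarefree_iff_irreducible_sq_not_dvd_of_ne_zero (f_ne hf hfin)]
  exact fun a ha h => no_sq hf hfin ha.prime h

lemma local_claim {f h1 h2 h3 q g y1 s : S5} {v : Fin 5 → ℂ} (hv : v ≠ 0)
    (hNZ : NZ (Ideal.span {f, h2, h3}) h1)
    (hf0 : eval v f = 0) (hf : ∀ j, eval v (pderiv j f) = 0)
    (hh2 : eval v h2 = 0) (hh3 : eval v h3 = 0) (hgv : eval v g = 0) (hs : eval v s ≠ 0)
    (hq : ∀ z : S5, z.IsHomogeneous 1 → eval v z = 0 →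
      q * (s * z) ∈ Ideal.span {f, h2, h3} ⊔ Ideal.span {h1})
    (hg : q * g - y1 * h1 ∈ Ideal.span {f, h2, h3}) : eval v y1 = 0 := by
  by_contra hy
  let φ : (Fin 5 → ℂ) →ₗ[ℂ] ℂ := ∑ j, v j • LinearMap.proj j
  have hφ : ∀ a, φ a = ∑ j, v j * a j := fun a => by simp [φ]
  let grad : S5 → (Fin 5 → ℂ) := fun u j => eval v (pderiv j u)
  have hle : LinearMap.ker φ ≤ Submodule.span ℂ (Set.range ![grad g, grad h2, grad h3]) := by
    intro a ha
    rw [LinearMap.mem_ker, hφ] at ha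
    set z : S5 := ∑ j, C (a j) * X j with hz
    have hzv : eval v z = 0 := by
      rw [hz]
      simp only [map_sum, map_mul, eval_C, eval_X]
      rw [← ha]
      exact Finset.sum_congr rfl fun j _ => mul_comm _ _
    have hzd : ∀ m, pderiv m z = C (a m) := by
      intro m
      simp [hz, Derivation.leibniz, pderiv_X, Pi.single_apply, smul_eq_mul]
    obtain ⟨w, hw⟩ := mem_sup_sp.1 (hq z (lin_hom a) hzv)
    have h4 : (s * z * y1 - g * w) ∈ Ideal.span {f, h2, h3} := by
      apply hNZ
      have := Ideal.sub_mem _ (Ideal.mul_mem_left _ g hw) (Ideal.mul_mem_left _ (s * z) hg)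
      convert this using 1
      ring
    obtain ⟨α, u, hu, he⟩ := Ideal.mem_span_insert.1 h4
    obtain ⟨β, γ, hu⟩ := Ideal.mem_span_pair.1 hu
    rw [← hu] at he
    have hj : ∀ j, eval v s * eval v y1 * a j =
        eval v w * grad g j + eval v β * grad h2 j + eval v γ * grad h3 j := by
      intro j
      have := congrArg (fun u => eval v (pderiv j u)) he
      simp only [map_sub, map_add, Derivation.leibniz, smul_eq_mul, map_mul, hzv, hgv, hh2, hh3,
        hf0, hf, hzd, eval_C] at this
      simp only [grad]
      linear_combination this
    have hne : eval v s * eval v y1 ≠ 0 := mul_ne_zero hs hy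
    have ha2 : a = (eval v s * eval v y1)⁻¹ • (eval v w • grad g + eval v β • grad h2 + eval v γ • grad h3) := by
      funext j
      simp only [Pi.smul_apply, Pi.add_apply, smul_eq_mul]
      rw [← hj j]
      field_simp
    rw [ha2]
    have hm : ∀ i : Fin 3, ![grad g, grad h2, grad h3] i ∈ Submodule.span ℂ (Set.range ![grad g, grad h2, grad h3]) :=
      fun i => Submodule.subset_span ⟨i, rfl⟩
    exact Submodule.smul_mem _ _ (Submodule.add_mem _ (Submodule.add_mem _
      (Submodule.smul_mem _ _ (hm 0)) (Submodule.smul_mem _ _ (hm 1))) (Submodule.smul_mem _ _ (hm 2)))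
  have c1 := Submodule.finrank_mono hle
  have c2 : Module.finrank ℂ (Submodule.span ℂ (Set.range ![grad g, grad h2, grad h3])) ≤ 3 := by
    exact finrank_range_le_card (R := ℂ) ![grad g, grad h2, grad h3]
  have c3 := φ.finrank_range_add_finrank_ker
  have c4 : Module.finrank ℂ (LinearMap.range φ) ≤ 1 := by
    simpa using Submodule.finrank_le (LinearMap.range φ)
  rw [Module.finrank_fin_fun] at c3
  omega

lemma exists_lam {A : Finset (ProjPt 4)} {l : S5} (hl : l.IsHomogeneous 1)
    (hlA : ∀ Q ∈ A, eval Q.rep l ≠ 0) {P0 : ProjPt 4} (hP0 : P0 ∈ A) {d : ℕ}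
    (hfail : ∀ F : S5, F.IsHomogeneous d → (∀ Q ∈ A, Q ≠ P0 → eval Q.rep F = 0) → eval P0.rep F = 0) :
    ∃ lam : S5 →ₗ[ℂ] ℂ, (∀ w : S5, w.IsHomogeneous d → lam w = 0) ∧
      (∀ (w : S5) (N : ℕ), lam (w * l ^ N) = lam w) ∧
      (∀ w : S5, (∀ Q ∈ A, w ∈ lineI Q.rep) → lam w = 0) ∧
      (∀ (w : S5) (e : ℕ), w.IsHomogeneous e → (∀ Q ∈ A, Q ≠ P0 → eval Q.rep w = 0) →
        eval P0.rep w ≠ 0 → lam w ≠ 0) := by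
  classical
  let nv : ProjPt 4 → (Fin 5 → ℂ) := fun Q => (eval Q.rep l)⁻¹ • Q.rep
  let ev : ProjPt 4 → (S5 →ₗ[ℂ] ℂ) := fun Q => (aeval (nv Q)).toLinearMap
  have hev : ∀ Q w, ev Q w = eval (nv Q) w := fun Q w => rfl
  have hnv : ∀ Q ∈ A, ∀ (w : S5) (e : ℕ), w.IsHomogeneous e → (ev Q w = 0 ↔ eval Q.rep w = 0) := by
    intro Q hQ w e hw
    rw [hev, hom_eval hw]
    simp [hlA Q hQ]
  have hmul : ∀ Q ∈ A, ∀ (w : S5) (N : ℕ), ev Q (w * l ^ N) = ev Q w := by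
    intro Q hQ w N
    have : eval (nv Q) l = 1 := by
      rw [hom_eval hl, pow_one, inv_mul_cancel₀ (hlA Q hQ)]
    simp [hev, this]
  have h := FiniteDimensional.mem_span_of_iInf_ker_le_ker (𝕜 := ℂ) (ι := ↥(A.erase P0))
    (L := fun Q => (ev Q.1).domRestrict (homogeneousSubmodule (Fin 5) ℂ d))
    (K := (ev P0).domRestrict (homogeneousSubmodule (Fin 5) ℂ d)) (by
      intro w hw
      rw [LinearMap.mem_ker, LinearMap.domRestrict_apply, hnv P0 hP0 _ d w.2]
      refine hfail w.1 w.2 fun Q hQ hne => ?_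
      rw [← hnv Q hQ _ d w.2]
      rw [Submodule.mem_iInf] at hw
      exact hw ⟨Q, Finset.mem_erase.2 ⟨hne, hQ⟩⟩)
  rw [Submodule.mem_span_range_iff_exists_fun] at h
  obtain ⟨c, hc⟩ := h
  have hmem : ∀ Q : ↥(A.erase P0), Q.1 ∈ A := fun Q => Finset.mem_of_mem_erase Q.2
  refine ⟨ev P0 - ∑ Q, c Q • ev Q.1, ?_, ?_, ?_, ?_⟩
  · intro w hw
    have := LinearMap.congr_fun hc ⟨w, hw⟩
    simp only [LinearMap.coe_sum, Finset.sum_apply, LinearMap.smul_apply, LinearMap.domRestrict_apply] at this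
    simp only [LinearMap.sub_apply, LinearMap.coe_sum, Finset.sum_apply, LinearMap.smul_apply]
    rw [this, sub_self]
  · intro w N
    simp only [LinearMap.sub_apply, LinearMap.coe_sum, Finset.sum_apply, LinearMap.smul_apply]
    rw [hmul P0 hP0]
    congr 1
    exact Finset.sum_congr rfl fun Q _ => by rw [hmul Q.1 (hmem Q)]
  · intro w hw
    simp only [LinearMap.sub_apply, LinearMap.coe_sum, Finset.sum_apply, LinearMap.smul_apply]
    rw [hev, mem_lineI.1 (hw P0 hP0), Finset.sum_eq_zero, sub_zero]
    intro Q _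
    rw [hev, mem_lineI.1 (hw Q.1 (hmem Q)), smul_zero]
  · intro w e hw h1 h2
    simp only [LinearMap.sub_apply, LinearMap.coe_sum, Finset.sum_apply, LinearMap.smul_apply]
    rw [Finset.sum_eq_zero, sub_zero]
    · rwa [Ne, hnv P0 hP0 _ e hw]
    · intro Q _
      rw [(hnv Q.1 (hmem Q) _ e hw).2 (h1 _ (hmem Q) (Finset.ne_of_mem_erase Q.2)), smul_zero]

lemma get_q {A : Finset (ProjPt 4)} {f h1 h2 h3 l G0 : S5} {N t d D : ℕ}
    (hG : Good ![f, h1, h2, h3, l ^ N] t)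
    (hlarge : ∀ z : S5, z.IsHomogeneous 1 → ∃ m, z ^ m ∈ Ideal.span (Set.range ![f, h1, h2, h3, l ^ N]))
    (hl : l.IsHomogeneous 1)
    (hA : ∀ Q ∈ A, ∀ x ∈ ({f, h1, h2, h3} : Set S5), x ∈ lineI Q.rep)
    {lam : S5 →ₗ[ℂ] ℂ} (L1 : ∀ w : S5, w.IsHomogeneous d → lam w = 0)
    (L2 : ∀ (w : S5) (N : ℕ), lam (w * l ^ N) = lam w)
    (L3 : ∀ w : S5, (∀ Q ∈ A, w ∈ lineI Q.rep) → lam w = 0)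
    (hG0 : G0.IsHomogeneous D) (hD : D ≤ d + N) (hG0l : lam G0 ≠ 0) :
    ∃ e', ∃ q : S5, d + N + e' = t ∧ q.IsHomogeneous e' ∧ q ∉ Ideal.span {f, h1, h2, h3} ∧
      ∀ e, e' + e < N → ∀ g : S5, g.IsHomogeneous e → (∀ Q ∈ A, g ∈ lineI Q.rep) →
        q * g ∈ Ideal.span {f, h1, h2, h3} := by
  obtain ⟨-, hhom, hsoc⟩ := hG
  set I := Ideal.span (Set.range ![f, h1, h2, h3, l ^ N]) with hIdef
  set I1 : Ideal S5 := Ideal.span {f, h1, h2, h3} with hI1def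
  have hIHI : HI I := HI_span (by
    rintro _ ⟨j, rfl⟩
    obtain ⟨e, -, he⟩ := hhom j
    exact ⟨e, he⟩)
  have hI1HI : HI I1 := HI_span (by
    have := fun j => (hhom j)
    rintro x (rfl | rfl | rfl | rfl)
    · obtain ⟨e, -, he⟩ := hhom 0; exact ⟨e, he⟩
    · obtain ⟨e, -, he⟩ := hhom 1; exact ⟨e, he⟩
    · obtain ⟨e, -, he⟩ := hhom 2; exact ⟨e, he⟩
    · obtain ⟨e, -, he⟩ := hhom 3; exact ⟨e, he⟩)
  have hI : I = I1 ⊔ Ideal.span {l ^ N} := by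
    rw [hIdef, hI1def, ← Ideal.span_union]
    congr 1
    ext x
    simp [Fin.exists_fin_succ, eq_comm]
    tauto
  have hlN : (l ^ N).IsHomogeneous N := by simpa using hl.pow N
  have hI1lam : ∀ w ∈ I1, lam w = 0 := fun w hw => L3 w fun Q hQ => Ideal.span_le.2 (hA Q hQ) hw
  obtain ⟨τ, hτI, hdual⟩ := dual hIHI hsoc (large_mem hlarge)
  have hkill : ∀ w ∈ I, w.IsHomogeneous (d + N) → lam w = 0 := by
    intro w hw hwM
    rw [hI] at hw
    obtain ⟨z, hz⟩ := mem_sup_sp.1 hw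
    have h5 := hI1HI _ hz (d + N)
    rw [map_sub, hc_self hwM, hc_mul d hlN] at h5
    have h6 := hI1lam _ h5
    rw [map_sub, L2, L1 _ (homogeneousComponent_isHomogeneous d z), sub_zero] at h6
    exact h6
  have hw0 : (G0 * l ^ (d + N - D)).IsHomogeneous (d + N) := by
    have := hG0.mul (hl.pow (d + N - D))
    rwa [one_mul, Nat.add_sub_cancel' hD] at this
  obtain ⟨e', het, q, hq, hqw⟩ := dual_rep hdual lam hkill ⟨_, hw0, by rwa [L2]⟩
  refine ⟨e', q, het, hq, ?_, ?_⟩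
  · intro hqI
    apply hG0l
    rw [← L2 _ (d + N - D), ← hqw _ hw0]
    apply hτI
    rw [hI]
    exact Ideal.mem_sup_left (Ideal.mul_mem_right _ _ hqI)
  · intro e he g hg hgA
    have hqg : q * g ∈ I := by
      by_contra hcon
      obtain ⟨e'', v, hv, hee, hne⟩ := hdual _ _ (hq.mul hg) hcon
      apply hne
      rw [mul_assoc, hqw]
      · exact L3 _ fun Q hQ => Ideal.mul_mem_right _ _ (hgA Q hQ)
      · have := hg.mul hv
        rwa [show e + e'' = d + N by omega] at this
    rw [hI] at hqg
    obtain ⟨z, hz⟩ := mem_sup_sp.1 hqg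
    have h5 := hI1HI _ hz (e' + e)
    rwa [map_sub, hc_self (hq.mul hg), hc_mul_zero hlN he, sub_zero] at h5

lemma comp_mul {b : S5} {k : ℕ} (hb : b.IsHomogeneous k) (y : S5) (m : ℕ) :
    ∃ y' : S5, homogeneousComponent m (y * b) = y' * b ∧
      (y' = 0 ∨ ∃ j, j + k = m ∧ y'.IsHomogeneous j) := by
  by_cases h : m < k
  · exact ⟨0, by rw [hc_mul_zero hb h, zero_mul], Or.inl rfl⟩
  · obtain ⟨j, rfl⟩ : ∃ j, m = j + k := ⟨m - k, by omega⟩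
    exact ⟨_, hc_mul j hb, Or.inr ⟨j, rfl, homogeneousComponent_isHomogeneous _ _⟩⟩

lemma set_sub1 (f h1 h2 h3 : S5) : ({f, h1, h2, h3} : Set S5) ⊆ {f, h2, h3} ∪ {h1} := by
  rintro u (rfl | rfl | rfl | rfl) <;> simp

lemma set_sub2 (f h1 h2 h3 : S5) : ({f, h1, h2, h3} : Set S5) ⊆ {f, h1, h3} ∪ {h2} := by
  rintro u (rfl | rfl | rfl | rfl) <;> simp

lemma set_sub3 (f h1 h2 h3 : S5) : ({f, h1, h2, h3} : Set S5) ⊆ {f, h1, h2} ∪ {h3} := by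
  rintro u (rfl | rfl | rfl | rfl) <;> simp

lemma nilp {A : Finset (ProjPt 4)} {f h1 h2 h3 q : S5} {n k e' N : ℕ}
    (hf : f.IsHomogeneous n) (hh1 : h1.IsHomogeneous k) (hh2 : h2.IsHomogeneous k)
    (hh3 : h3.IsHomogeneous k) (hq : q.IsHomogeneous e') (he' : e' < k)
    (hN1 : e' + k < N) (hN2 : e' + (A.card + 1) < N)
    (hfA : ∀ Q ∈ A, eval Q.rep f = 0 ∧ ∀ j, eval Q.rep (pderiv j f) = 0)
    (hA1 : ∀ Q ∈ A, eval Q.rep h1 = 0) (hA2 : ∀ Q ∈ A, eval Q.rep h2 = 0)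
    (hA3 : ∀ Q ∈ A, eval Q.rep h3 = 0)
    (z1 : NZ (Ideal.span {f, h2, h3}) h1) (z2 : NZ (Ideal.span {f, h1, h3}) h2)
    (z3 : NZ (Ideal.span {f, h1, h2}) h3)
    (hqg : ∀ e, e' + e < N → ∀ g : S5, g.IsHomogeneous e → (∀ Q ∈ A, g ∈ lineI Q.rep) →
        q * g ∈ Ideal.span {f, h1, h2, h3}) :
    ∀ e, e ≤ k → ∀ g : S5, g.IsHomogeneous e → (∀ Q ∈ A, eval Q.rep g = 0) →
      ∃ r, f ∣ q ^ r * g := by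
  intro e
  induction e using Nat.strong_induction_on with
  | _ e ih =>
  intro hek g hg hgA
  have hmem := hqg e (by omega) g hg fun Q hQ => (mem_lineI_hom hg).2 (hgA Q hQ)
  obtain ⟨y0, y1, y2, y3, hy⟩ : ∃ y0 y1 y2 y3 : S5, q * g = y0 * f + y1 * h1 + y2 * h2 + y3 * h3 := by
    obtain ⟨y0, u, hu, h⟩ := Ideal.mem_span_insert.1 hmem
    obtain ⟨y1, u2, hu2, h'⟩ := Ideal.mem_span_insert.1 hu
    obtain ⟨y2, y3, h''⟩ := Ideal.mem_span_pair.1 hu2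
    exact ⟨y0, y1, y2, y3, by rw [h, h', ← h'']; ring⟩
  obtain ⟨x0, hx0, -⟩ := comp_mul hf y0 (e' + e)
  obtain ⟨x1, hx1, d1⟩ := comp_mul hh1 y1 (e' + e)
  obtain ⟨x2, hx2, d2⟩ := comp_mul hh2 y2 (e' + e)
  obtain ⟨x3, hx3, d3⟩ := comp_mul hh3 y3 (e' + e)
  have hx : q * g = x0 * f + x1 * h1 + x2 * h2 + x3 * h3 := by
    have := congrArg (homogeneousComponent (e' + e)) hy
    rwa [hc_self (hq.mul hg), map_add, map_add, map_add, hx0, hx1, hx2, hx3] at this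
  have sub : ∀ {a b c : S5} {u : S5}, (∃ p r s, u = p * a + r * b + s * c) → u ∈ Ideal.span {a, b, c} := by
    rintro a b c u ⟨p, r, s, rfl⟩
    refine Ideal.add_mem _ (Ideal.add_mem _ ?_ ?_) ?_ <;>
      exact Ideal.mul_mem_left _ _ (Ideal.subset_span (by simp))
  have hloc : ∀ Q ∈ A, ∃ s : S5, eval Q.rep s ≠ 0 ∧ ∀ z : S5, z.IsHomogeneous 1 → eval Q.rep z = 0 →
      q * (s * z) ∈ Ideal.span {f, h1, h2, h3} := by
    intro Q hQ
    obtain ⟨D, s, hs, hD, hsA, hsQ⟩ := sep_prod A Q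
    refine ⟨s, hsQ, fun z hz hzQ => hqg (D + 1) (by omega) _ (hs.mul hz) fun R hR => ?_⟩
    rw [mem_lineI_hom (hs.mul hz)]
    by_cases hRQ : R = Q
    · subst hRQ; simp [hzQ]
    · simp [hsA R hR hRQ]
  have v1 : ∀ Q ∈ A, eval Q.rep x1 = 0 := by
    intro Q hQ
    obtain ⟨s, hsQ, hs⟩ := hloc Q hQ
    refine local_claim Q.rep_nonzero z1 (hfA Q hQ).1 (hfA Q hQ).2 (hA2 Q hQ) (hA3 Q hQ) (hgA Q hQ) hsQ
      (fun z hz hzQ => ?_) (sub ⟨x0, x2, x3, by rw [hx]; ring⟩)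
    rw [← Ideal.span_union]
    exact Ideal.span_mono (set_sub1 f h1 h2 h3) (hs z hz hzQ)
  have v2 : ∀ Q ∈ A, eval Q.rep x2 = 0 := by
    intro Q hQ
    obtain ⟨s, hsQ, hs⟩ := hloc Q hQ
    refine local_claim Q.rep_nonzero z2 (hfA Q hQ).1 (hfA Q hQ).2 (hA1 Q hQ) (hA3 Q hQ) (hgA Q hQ) hsQ
      (fun z hz hzQ => ?_) (sub ⟨x0, x1, x3, by rw [hx]; ring⟩)
    rw [← Ideal.span_union]
    exact Ideal.span_mono (set_sub2 f h1 h2 h3) (hs z hz hzQ)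
  have v3 : ∀ Q ∈ A, eval Q.rep x3 = 0 := by
    intro Q hQ
    obtain ⟨s, hsQ, hs⟩ := hloc Q hQ
    refine local_claim Q.rep_nonzero z3 (hfA Q hQ).1 (hfA Q hQ).2 (hA1 Q hQ) (hA2 Q hQ) (hgA Q hQ) hsQ
      (fun z hz hzQ => ?_) (sub ⟨x0, x1, x2, by rw [hx]; ring⟩)
    rw [← Ideal.span_union]
    exact Ideal.span_mono (set_sub3 f h1 h2 h3) (hs z hz hzQ)
  have nil : ∀ x : S5, (x = 0 ∨ ∃ j, j + k = e' + e ∧ x.IsHomogeneous j) → (∀ Q ∈ A, eval Q.rep x = 0) →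
      ∃ r, f ∣ q ^ r * x := by
    rintro x (rfl | ⟨j, hj, hxj⟩) hxA
    · exact ⟨0, by simp⟩
    · exact ih j (by omega) (by omega) x hxj hxA
  obtain ⟨r1, c1, k1⟩ := nil x1 d1 v1
  obtain ⟨r2, c2, k2⟩ := nil x2 d2 v2
  obtain ⟨r3, c3, k3⟩ := nil x3 d3 v3
  refine ⟨r1 + r2 + r3 + 1, q ^ (r1 + r2 + r3) * x0 + q ^ (r2 + r3) * c1 * h1 + q ^ (r1 + r3) * c2 * h2
    + q ^ (r1 + r2) * c3 * h3, ?_⟩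
  have : q ^ (r1 + r2 + r3 + 1) * g = q ^ (r1 + r2 + r3) * (q * g) := by ring
  rw [this, hx]
  linear_combination q ^ (r2 + r3) * h1 * k1 + q ^ (r1 + r3) * h2 * k2 + q ^ (r1 + r2) * h3 * k3

theorem stmt_4 (n k : ℕ) (f : MvPolynomial (Fin 5) ℂ) (hf : f.IsHomogeneous n)
    (hk : 1 ≤ k) (hkn : 2 * k < n)
    (hSingFin : (SingHyp f).Finite)
    (hnodal : ∀ p ∈ SingHyp f, (HessianAt f p.rep).rank = 4)
    (H : Submodule ℂ (MvPolynomial (Fin 5) ℂ)) (hHne : H ≠ ⊥)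
    (hHhom : ∀ h ∈ H, h.IsHomogeneous k)
    (hHvan : ∀ h ∈ H, ∀ p ∈ SingHyp f, VanishesAt h p)
    (hbase : {p : ProjPt 4 | eval p.rep f = 0 ∧ ∀ h ∈ H, VanishesAt h p}.Finite) :
    ∀ P ∈ SingHyp f, ∃ F : MvPolynomial (Fin 5) ℂ,
      F.IsHomogeneous (2 * n - 5) ∧
      (∀ Q ∈ SingHyp f, Q ≠ P → VanishesAt F Q) ∧ ¬ VanishesAt F P := by
  intro P0 hP0
  by_contra hcon
  push Not at hcon
  have hf0 : f ≠ 0 := f_ne hf hSingFin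
  have hsq : Squarefree f := f_sqf hf hSingFin
  have hdim : DimLE (Ideal.span {f} ⊔ Ideal.span (H : Set S5)) 1 := by
    refine DimLE_cover hbase fun x hx h => ⟨?_, fun g hg => ?_⟩
    · exact (eval_rep_zero hx hf).2 (h f (Ideal.mem_sup_left (Ideal.mem_span_singleton_self f)))
    · exact (eval_rep_zero hx (hHhom g hg)).2 (h g (Ideal.mem_sup_right (Ideal.subset_span hg)))
  obtain ⟨h1, m1, h2, m2, h3, m3, l, hl, d1, d2, d3, d4⟩ := choose_h hf0 H hdim
  have hh1 := hHhom h1 m1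
  have hh2 := hHhom h2 m2
  have hh3 := hHhom h3 m3
  set A := hSingFin.toFinset with hAdef
  have hA : ∀ Q, Q ∈ A ↔ Q ∈ SingHyp f := fun Q => hSingFin.mem_toFinset
  have hA1 : ∀ Q ∈ A, eval Q.rep h1 = 0 := fun Q hQ => hHvan h1 m1 Q ((hA Q).1 hQ)
  have hA2 : ∀ Q ∈ A, eval Q.rep h2 = 0 := fun Q hQ => hHvan h2 m2 Q ((hA Q).1 hQ)
  have hA3 : ∀ Q ∈ A, eval Q.rep h3 = 0 := fun Q hQ => hHvan h3 m3 Q ((hA Q).1 hQ)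
  have hfA : ∀ Q ∈ A, eval Q.rep f = 0 ∧ ∀ j, eval Q.rep (pderiv j f) = 0 :=
    fun Q hQ => (hA Q).1 hQ
  have sp : ∀ {I : Ideal S5} {a : S5}, a ∈ I → Ideal.span {a} ≤ I := fun h =>
    (Ideal.span_singleton_le_iff_mem _).2 h
  have hlA : ∀ Q ∈ A, eval Q.rep l ≠ 0 := by
    intro Q hQ hQl
    refine Q.rep_nonzero (dim0_zero (s := {f, h1, h2, h3, l}) ?_ (d4.mono ?_) ?_)
    · rintro a (rfl | rfl | rfl | rfl | rfl)
      · exact ⟨n, by omega, hf⟩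
      · exact ⟨k, hk, hh1⟩
      · exact ⟨k, hk, hh2⟩
      · exact ⟨k, hk, hh3⟩
      · exact ⟨1, le_rfl, hl⟩
    · refine sup_le (sup_le (sup_le (sup_le ?_ ?_) ?_) ?_) ?_ <;>
        exact sp (Ideal.subset_span (by simp))
    · rintro a (rfl | rfl | rfl | rfl | rfl)
      · exact (hfA Q hQ).1
      · exact hA1 Q hQ
      · exact hA2 Q hQ
      · exact hA3 Q hQ
      · exact hQl
  obtain ⟨lam, L1, L2, L3, L4⟩ := exists_lam (d := 2 * n - 5) hl hlA ((hA P0).2 hP0)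
    (fun F hF h => hcon F hF fun Q hQ hne => h Q ((hA Q).2 hQ) hne)
  obtain ⟨D, G0, hG0, hD, hG0A, hG0P⟩ := sep_prod A P0
  obtain ⟨N, hN⟩ : ∃ N, N = 4 * k + A.card + 2 := ⟨_, rfl⟩
  have hGood := Good_F (N := N) (by omega : 1 ≤ n) hk (by omega) hf0 hf hh1 hh2 hh3 hl d1 d2 d3 d4
  have hlarge : ∀ z : S5, z.IsHomogeneous 1 →
      ∃ m, z ^ m ∈ Ideal.span (Set.range ![f, h1, h2, h3, l ^ N]) := by
    intro z hz
    refine dim0_pow ?_ ?_ hz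
    · rintro _ ⟨j, rfl⟩
      exact hGood.2.1 j
    · intro p hp
      have hm : ∀ j, ![f, h1, h2, h3, l ^ N] j ∈ p.asIdeal := fun j => hp (Ideal.subset_span ⟨j, rfl⟩)
      exact d4 p (sup_le (sup_le (sup_le (sup_le (sp (hm 0)) (sp (hm 1))) (sp (hm 2))) (sp (hm 3)))
        (sp (p.2.mem_of_pow_mem _ (hm 4))))
  obtain ⟨e', q, het, hq, hqI, hqg⟩ := get_q hGood hlarge hl (A := A) (by
      rintro Q hQ x (rfl | rfl | rfl | rfl)
      · exact (mem_lineI_hom hf).2 (hfA Q hQ).1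
      · exact (mem_lineI_hom hh1).2 (hA1 Q hQ)
      · exact (mem_lineI_hom hh2).2 (hA2 Q hQ)
      · exact (mem_lineI_hom hh3).2 (hA3 Q hQ)) L1 L2 L3 hG0 (by omega) (L4 G0 D hG0 hG0A hG0P)
  have hreg := hGood.1
  have z0 : NZ (Ideal.span {f}) h1 := by
    simpa using hreg {0} 1 (by simp)
  have z1 : NZ (Ideal.span {f, h2, h3}) h1 := by
    simpa [Set.image_insert_eq] using hreg {0, 2, 3} 1 (by simp)
  have z2 : NZ (Ideal.span {f, h1, h3}) h2 := by
    simpa [Set.image_insert_eq] using hreg {0, 1, 3} 2 (by simp)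
  have z3 : NZ (Ideal.span {f, h1, h2}) h3 := by
    simpa [Set.image_insert_eq] using hreg {0, 1, 2} 3 (by simp)
  have he' : e' < k := by omega
  obtain ⟨r, hr⟩ := nilp hf hh1 hh2 hh3 hq he' (by omega) (by omega) hfA hA1 hA2 hA3 z1 z2 z3 hqg
    k le_rfl h1 hh1 hA1
  have hfr : f ∣ q ^ r := Ideal.mem_span_singleton.1 (z0 _ (Ideal.mem_span_singleton.2 hr))
  have hfr' : f ∣ q ^ (r + 1) := hfr.trans (pow_dvd_pow q (Nat.le_succ r))
  have hfq : f ∣ q := (hsq.dvd_pow_iff_dvd (Nat.succ_ne_zero r)).1 hfr'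
  apply hqI
  exact Ideal.mem_of_dvd _ hfq (Ideal.subset_span (by simp))
end
end

section
/- Let k ≥ 1 and n be integers with 2k < n, and let Σ ⊂ ℙ⁴(ℂ) be a finite set which is the set-theoretic intersection of hypersurfaces of degree k, i.e. Σ is the set of common zeros in ℙ⁴(ℂ) of some family of homogeneous polynomials of degree k in ℂ[x_0,…,x_4]. Then for every point P ∈ Σ there exists a homogeneous polynomial of degree 2n−5 in ℂ[x_0,…,x_4] that vanishes at every point of Σ \ {P} and does not vanish at P. -/
open MvPolynomial

noncomputable section

open Module

abbrev R5 := MvPolynomial (Fin 5) ℂ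

/-- degree `d` part of the quotient ring -/
def MM (J : Ideal R5) (d : ℕ) : Submodule ℂ (R5 ⧸ J) :=
  (homogeneousSubmodule (Fin 5) ℂ d).map (Ideal.Quotient.mkₐ ℂ J).toLinearMap

/-- Hilbert function -/
def hh (J : Ideal R5) (d : ℕ) : ℕ := finrank ℂ (MM J d)

def HomI (J : Ideal R5) : Prop := ∀ x ∈ J, ∀ d, homogeneousComponent d x ∈ J

lemma mem_MM {J : Ideal R5} {d : ℕ} {y : R5 ⧸ J} :
    y ∈ MM J d ↔ ∃ x : R5, x.IsHomogeneous d ∧ Ideal.Quotient.mk J x = y := by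
  simp [MM, Submodule.mem_map]

instance homFin (d : ℕ) : Module.Finite ℂ (homogeneousSubmodule (Fin 5) ℂ d) :=
  Module.Finite.iff_fg.mpr (homogeneousSubmodule_fg _ _ d)

instance MMFin (J : Ideal R5) (d : ℕ) : Module.Finite ℂ (MM J d) := by
  unfold MM; infer_instance

lemma comp_mul_s5 (f y : R5) (k d : ℕ) (hf : f.IsHomogeneous k) :
    homogeneousComponent (d + k) (f * y) = f * homogeneousComponent d y := by
  induction y using MvPolynomial.induction_on' with
  | monomial e c =>
    have h1 : (monomial e c : R5).IsHomogeneous e.degree := isHomogeneous_monomial c rfl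
    rw [homogeneousComponent_of_mem h1, homogeneousComponent_of_mem (hf.mul h1)]
    by_cases h : d = e.degree
    · simp [h, add_comm]
    · rw [if_neg h, if_neg (by omega), mul_zero]
  | add p q hp hq => simp [map_add, mul_add, hp, hq]

lemma comp_mul_lt (f y : R5) (k d : ℕ) (hf : f.IsHomogeneous k) (hd : d < k) :
    homogeneousComponent d (f * y) = 0 := by
  induction y using MvPolynomial.induction_on' with
  | monomial e c =>
    have h1 : (monomial e c : R5).IsHomogeneous e.degree := isHomogeneous_monomial c rfl
    rw [homogeneousComponent_of_mem (hf.mul h1), if_neg (by omega)]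
  | add p q hp hq => simp [map_add, mul_add, hp, hq]

lemma HomI_bot : HomI ⊥ := by
  intro x hx d
  rw [Ideal.mem_bot] at hx
  simp [hx]

lemma HomI_sup {J : Ideal R5} (hJ : HomI J) {f : R5} {k : ℕ} (hf : f.IsHomogeneous k) :
    HomI (J ⊔ Ideal.span {f}) := by
  intro x hx d
  obtain ⟨a, ha, b, hb, rfl⟩ := Submodule.mem_sup.1 hx
  obtain ⟨c, rfl⟩ := Ideal.mem_span_singleton'.1 hb
  rw [map_add]
  refine Ideal.add_mem _ (Ideal.mem_sup_left (hJ a ha d)) (Ideal.mem_sup_right ?_)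
  rw [mul_comm c f]
  by_cases hd : d < k
  · rw [comp_mul_lt f c k d hf hd]; exact Ideal.zero_mem _
  · obtain ⟨e, rfl⟩ := Nat.exists_eq_add_of_le' (not_lt.1 hd)
    rw [comp_mul_s5 f c k e hf]
    exact Ideal.mul_mem_right _ _ (Ideal.mem_span_singleton_self f)

/-- the multiplication map -/
def mulf (J : Ideal R5) (f : R5) : (R5 ⧸ J) →ₗ[ℂ] (R5 ⧸ J) :=
  LinearMap.mulLeft ℂ (Ideal.Quotient.mk J f)

def rk (J : Ideal R5) (f : R5) (d : ℕ) : ℕ := finrank ℂ ((MM J d).map (mulf J f))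

lemma finrank_proj (J J' : Ideal R5) (hle : J ≤ J') (d : ℕ) (N : Submodule ℂ (R5 ⧸ J))
    (hN : ∀ y, y ∈ N ↔ y ∈ MM J d ∧ Ideal.Quotient.factor hle y = 0) :
    hh J d = hh J' d + finrank ℂ N := by
  let π : (R5 ⧸ J) →ₗ[ℂ] (R5 ⧸ J') := (Ideal.Quotient.factorₐ ℂ hle).toLinearMap
  have h := LinearMap.finrank_range_add_finrank_ker (π.domRestrict (MM J d))
  have h1 : LinearMap.range (π.domRestrict (MM J d)) = MM J' d := by
    rw [LinearMap.range_domRestrict]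
    unfold MM
    rw [← Submodule.map_comp]
    rfl
  have h2 : finrank ℂ (LinearMap.ker (π.domRestrict (MM J d))) = finrank ℂ N := by
    have h3 : (LinearMap.ker (π.domRestrict (MM J d))).map (MM J d).subtype = N := by
      ext y
      rw [hN y]
      simp only [Submodule.mem_map, LinearMap.mem_ker, Submodule.subtype_apply, Subtype.exists,
        LinearMap.domRestrict_apply, exists_and_left, exists_prop, exists_eq_right_right]
      constructor
      · rintro ⟨a, b⟩; exact ⟨b, a⟩
      · rintro ⟨a, b⟩; exact ⟨b, a⟩
    rw [← h3]
    exact (LinearEquiv.finrank_eq (Submodule.equivMapOfInjective _ (MM J d).injective_subtype _))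
  rw [h1, h2] at h
  exact h.symm

lemma hh_add {J : Ideal R5} (hJ : HomI J) {f : R5} {k : ℕ} (hf : f.IsHomogeneous k) (d : ℕ) :
    hh J (d + k) = hh (J ⊔ Ideal.span {f}) (d + k) + rk J f d := by
  apply finrank_proj J _ le_sup_left
  intro y
  constructor
  · rintro ⟨z, hz, rfl⟩
    obtain ⟨x, hx, rfl⟩ := mem_MM.1 hz
    refine ⟨mem_MM.2 ⟨f * x, by rw [add_comm]; exact hf.mul hx, by simp [mulf]⟩, ?_⟩
    simp only [mulf, LinearMap.mulLeft_apply]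
    rw [← map_mul, Ideal.Quotient.factor_mk, Ideal.Quotient.eq_zero_iff_mem]
    exact Ideal.mem_sup_right (Ideal.mul_mem_right _ _ (Ideal.mem_span_singleton_self f))
  · rintro ⟨hy, h0⟩
    obtain ⟨x, hx, rfl⟩ := mem_MM.1 hy
    rw [Ideal.Quotient.factor_mk, Ideal.Quotient.eq_zero_iff_mem] at h0
    obtain ⟨a, ha, b, hb, rfl⟩ := Submodule.mem_sup.1 h0
    obtain ⟨c, rfl⟩ := Ideal.mem_span_singleton'.1 hb
    have h1 := homogeneousComponent_eq_self hx
    rw [map_add, mul_comm c f, comp_mul_s5 f c k d hf] at h1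
    rw [mul_comm c f, ← h1, map_add, Ideal.Quotient.eq_zero_iff_mem.2 (hJ a ha _), zero_add]
    refine ⟨Ideal.Quotient.mk J (homogeneousComponent d c),
      mem_MM.2 ⟨_, homogeneousComponent_isHomogeneous _ _, rfl⟩, by simp [mulf]⟩

lemma hh_lt {J : Ideal R5} (hJ : HomI J) {f : R5} {k : ℕ} (hf : f.IsHomogeneous k) (d : ℕ)
    (hd : d < k) : hh J d = hh (J ⊔ Ideal.span {f}) d := by
  rw [finrank_proj J _ le_sup_left d (⊥ : Submodule ℂ (R5 ⧸ J)), finrank_bot, add_zero]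
  intro y
  constructor
  · intro h
    rw [Submodule.mem_bot] at h
    subst h
    exact ⟨Submodule.zero_mem _, map_zero _⟩
  · rintro ⟨hy, h0⟩
    obtain ⟨x, hx, rfl⟩ := mem_MM.1 hy
    rw [Ideal.Quotient.factor_mk, Ideal.Quotient.eq_zero_iff_mem] at h0
    obtain ⟨a, ha, b, hb, rfl⟩ := Submodule.mem_sup.1 h0
    obtain ⟨c, rfl⟩ := Ideal.mem_span_singleton'.1 hb
    have h1 := homogeneousComponent_eq_self hx
    rw [map_add, mul_comm c f, comp_mul_lt f c k d hf hd, add_zero] at h1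
    rw [mul_comm c f, ← h1, Submodule.mem_bot]
    exact Ideal.Quotient.eq_zero_iff_mem.2 (hJ a ha _)

lemma rk_le (J : Ideal R5) (f : R5) (d : ℕ) : rk J f d ≤ hh J d :=
  Submodule.finrank_map_le _ _

lemma rk_inj {J : Ideal R5} {f : R5} {d : ℕ} (h : hh J d ≤ rk J f d) :
    ∀ y ∈ MM J d, mulf J f y = 0 → y = 0 := by
  have h0 := LinearMap.finrank_range_add_finrank_ker ((mulf J f).domRestrict (MM J d))
  rw [LinearMap.range_domRestrict] at h0
  have h1 : finrank ℂ (LinearMap.ker ((mulf J f).domRestrict (MM J d))) = 0 := by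
    unfold hh rk at h; omega
  rw [Submodule.finrank_eq_zero] at h1
  intro y hy hz
  have : (⟨y, hy⟩ : MM J d) ∈ LinearMap.ker ((mulf J f).domRestrict (MM J d)) := by
    simpa using hz
  rw [h1, Submodule.mem_bot] at this
  simpa using this

lemma inj_rk {J : Ideal R5} {f : R5} {d : ℕ}
    (h : ∀ y ∈ MM J d, mulf J f y = 0 → y = 0) : rk J f d = hh J d := by
  have h0 := LinearMap.finrank_range_add_finrank_ker ((mulf J f).domRestrict (MM J d))
  rw [LinearMap.range_domRestrict] at h0
  have h1 : LinearMap.ker ((mulf J f).domRestrict (MM J d)) = ⊥ := by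
    rw [eq_bot_iff]
    rintro ⟨y, hy⟩ hz
    have := h y hy (by simpa using hz)
    simpa using this
  rw [h1, finrank_bot, add_zero] at h0
  exact h0

lemma hh_zero {J : Ideal R5} {d : ℕ} : hh J d = 0 ↔ ∀ x : R5, x.IsHomogeneous d → x ∈ J := by
  unfold hh
  rw [Submodule.finrank_eq_zero, eq_bot_iff]
  constructor
  · intro h x hx
    have := h (mem_MM.2 ⟨x, hx, rfl⟩)
    exact Ideal.Quotient.eq_zero_iff_mem.1 (by simpa using this)
  · intro h y hy
    obtain ⟨x, hx, rfl⟩ := mem_MM.1 hy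
    simpa using Ideal.Quotient.eq_zero_iff_mem.2 (h x hx)

lemma mulf_mem {J : Ideal R5} {f : R5} {k d : ℕ} (hf : f.IsHomogeneous k) {y : R5 ⧸ J}
    (hy : y ∈ MM J d) : mulf J f y ∈ MM J (d + k) := by
  obtain ⟨x, hx, rfl⟩ := mem_MM.1 hy
  exact mem_MM.2 ⟨f * x, by rw [add_comm]; exact hf.mul hx, by simp [mulf]⟩

lemma finrank_hom (d : ℕ) : finrank ℂ (homogeneousSubmodule (Fin 5) ℂ d) = (d + 4).choose 4 := by
  have hs : {e : Fin 5 →₀ ℕ | e.degree = d} =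
      ((Finset.univ : Finset (Fin 5)).finsuppAntidiag d : Set (Fin 5 →₀ ℕ)) := by
    ext e
    simp [Finset.mem_finsuppAntidiag, Finsupp.degree_eq_sum]
  rw [homogeneousSubmodule_eq_finsupp_supported,
    LinearEquiv.finrank_eq (AddMonoidAlgebra.supportedEquivFinsupp _), hs]
  have := Finset.card_finsuppAntidiag_nat_eq_choose (s := (Finset.univ : Finset (Fin 5))) d
  rw [show finrank ℂ (((Finset.univ : Finset (Fin 5)).finsuppAntidiag d :
    Set (Fin 5 →₀ ℕ)) →₀ ℂ) = Fintype.card ((Finset.univ : Finset (Fin 5)).finsuppAntidiag d) from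
      finrank_finsupp_self ℂ]
  rw [Fintype.card_coe, this]
  simp only [Finset.card_univ, Fintype.card_fin]
  rw [show 5 + d - 1 = d + 4 by omega, Nat.choose_symm_add]

lemma hh_le (J : Ideal R5) (d : ℕ) : hh J d ≤ (d + 4).choose 4 := by
  rw [← finrank_hom]
  exact Submodule.finrank_map_le _ _

lemma hh_bot (d : ℕ) : hh ⊥ d = (d + 4).choose 4 := by
  rw [← finrank_hom]
  refine (LinearEquiv.finrank_eq (Submodule.equivMapOfInjective _ ?_ _)).symm
  intro x y hxy
  have := (Ideal.Quotient.eq (I := (⊥ : Ideal R5))).1 hxy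
  rwa [Ideal.mem_bot, sub_eq_zero] at this

/-- Hilbert series evaluated at a real number -/
def HS (J : Ideal R5) (t : ℝ) : ℝ := ∑' d, (hh J d : ℝ) * t ^ d

lemma HS_summable (J : Ideal R5) {t : ℝ} (h0 : 0 < t) (h1 : t < 1) :
    Summable (fun d => (hh J d : ℝ) * t ^ d) := by
  have h := summable_choose_mul_geometric_of_norm_lt_one (R := ℝ) 4 (r := t)
    (by rw [Real.norm_eq_abs, abs_of_pos h0]; exact h1)
  refine Summable.of_nonneg_of_le (fun d => by positivity) (fun d => ?_) h
  have : (hh J d : ℝ) ≤ ((d + 4).choose 4 : ℕ) := by exact_mod_cast hh_le J d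
  gcongr

lemma HS_bot {t : ℝ} (h0 : 0 < t) (h1 : t < 1) : (1 - t) ^ 5 * HS ⊥ t = 1 := by
  have h := tsum_choose_mul_geometric_of_norm_lt_one 4 (r := t)
    (by rw [Real.norm_eq_abs, abs_of_pos h0]; exact h1)
  unfold HS
  simp_rw [hh_bot]
  rw [h]
  have : (1 - t) ≠ 0 := by linarith
  field_simp

lemma HS_step {J : Ideal R5} (hJ : HomI J) {f : R5} {k : ℕ} (hf : f.IsHomogeneous k)
    {t : ℝ} (h0 : 0 < t) (h1 : t < 1) :
    (1 - t ^ k) * HS J t ≤ HS (J ⊔ Ideal.span {f}) t := by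
  have s1 := HS_summable J h0 h1
  have s2 := HS_summable (J ⊔ Ideal.span {f}) h0 h1
  have e1 := s1.sum_add_tsum_nat_add k
  have e2 := s2.sum_add_tsum_nat_add k
  have e3 : ∑ i ∈ Finset.range k, (hh J i : ℝ) * t ^ i =
      ∑ i ∈ Finset.range k, (hh (J ⊔ Ideal.span {f}) i : ℝ) * t ^ i := by
    refine Finset.sum_congr rfl fun i hi => ?_
    rw [hh_lt hJ hf i (Finset.mem_range.1 hi)]
  have e4 : ∑' i, (hh J (i + k) : ℝ) * t ^ (i + k) ≤
      ∑' i, ((hh (J ⊔ Ideal.span {f}) (i + k) : ℝ) * t ^ (i + k) +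
        t ^ k * ((hh J i : ℝ) * t ^ i)) := by
    refine Summable.tsum_le_tsum (fun i => ?_) ((summable_nat_add_iff k).2 s1)
      (((summable_nat_add_iff k).2 s2).add (s1.mul_left _))
    rw [hh_add hJ hf i]
    have : (rk J f i : ℝ) ≤ hh J i := by exact_mod_cast rk_le J f i
    push_cast
    rw [add_mul, pow_add]
    have h3 : (rk J f i : ℝ) * (t ^ i * t ^ k) ≤ hh J i * (t ^ i * t ^ k) := by gcongr
    linarith
  rw [((summable_nat_add_iff k).2 s2).tsum_add (s1.mul_left _), tsum_mul_left] at e4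
  unfold HS
  linarith

def LB (k : ℕ) (J : Ideal R5) (a b : ℕ) : Prop :=
  ∀ t : ℝ, 0 < t → t < 1 → (1 - t ^ k) ^ a * (1 - t) ^ b ≤ (1 - t) ^ 5 * HS J t

lemma LB_bot (k : ℕ) : LB k ⊥ 0 0 := by
  intro t h0 h1
  rw [HS_bot h0 h1]; simp

lemma LB_g {k : ℕ} {J : Ideal R5} {a b : ℕ} (h : LB k J a b) (hJ : HomI J) {f : R5}
    (hf : f.IsHomogeneous k) : LB k (J ⊔ Ideal.span {f}) (a + 1) b := by
  intro t h0 h1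
  have h2 := HS_step hJ hf h0 h1
  have h3 : 0 ≤ 1 - t ^ k := sub_nonneg.2 (pow_le_one₀ h0.le h1.le)
  have h4 : 0 ≤ (1 - t) := by linarith
  calc (1 - t ^ k) ^ (a + 1) * (1 - t) ^ b = (1 - t ^ k) * ((1 - t ^ k) ^ a * (1 - t) ^ b) := by ring
    _ ≤ (1 - t ^ k) * ((1 - t) ^ 5 * HS J t) := mul_le_mul_of_nonneg_left (h t h0 h1) h3
    _ = (1 - t) ^ 5 * ((1 - t ^ k) * HS J t) := by ring
    _ ≤ _ := by gcongr

lemma LB_l {k : ℕ} {J : Ideal R5} {a b : ℕ} (h : LB k J a b) (hJ : HomI J) {f : R5}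
    (hf : f.IsHomogeneous 1) : LB k (J ⊔ Ideal.span {f}) a (b + 1) := by
  intro t h0 h1
  have h2 := HS_step hJ hf h0 h1
  rw [pow_one] at h2
  have h4 : 0 ≤ (1 - t) := by linarith
  calc (1 - t ^ k) ^ a * (1 - t) ^ (b + 1) = (1 - t) * ((1 - t ^ k) ^ a * (1 - t) ^ b) := by ring
    _ ≤ (1 - t) * ((1 - t) ^ 5 * HS J t) := mul_le_mul_of_nonneg_left (h t h0 h1) h4
    _ = (1 - t) ^ 5 * ((1 - t) * HS J t) := by ring
    _ ≤ _ := by gcongr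

lemma LB_limit {k : ℕ} {J : Ideal R5} {a b K e N : ℕ} (h : LB k J a b) (hab : a + b = 4)
    (hK : ∀ d, hh J d ≤ K) (he : ∀ d, N ≤ d → hh J d ≤ e) : k ^ a ≤ e := by
  have key : ∀ t : ℝ, 0 < t → t < 1 →
      (∑ i ∈ Finset.range k, t ^ i) ^ a ≤ (1 - t) * (N * K) + e := by
    intro t h0 h1
    have h4 : 0 < (1 - t) := by linarith
    have s1 := HS_summable J h0 h1
    have hS : HS J t ≤ N * K + e * (1 - t)⁻¹ := by
      unfold HS
      rw [← s1.sum_add_tsum_nat_add N]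
      apply add_le_add
      · calc ∑ i ∈ Finset.range N, (hh J i : ℝ) * t ^ i ≤ ∑ i ∈ Finset.range N, (K : ℝ) := by
              refine Finset.sum_le_sum fun i _ => ?_
              have a1 : (hh J i : ℝ) ≤ K := by exact_mod_cast hK i
              have a2 : t ^ i ≤ 1 := pow_le_one₀ h0.le h1.le
              calc (hh J i : ℝ) * t ^ i ≤ K * 1 := by gcongr
                _ = K := mul_one _
          _ = N * K := by simp
      · rw [← tsum_geometric_of_lt_one h0.le h1, ← tsum_mul_left]
        refine Summable.tsum_le_tsum (fun i => ?_) ((summable_nat_add_iff N).2 s1)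
          ((summable_geometric_of_lt_one h0.le h1).mul_left _)
        have a1 : (hh J (i + N) : ℝ) ≤ e := by exact_mod_cast he (i + N) (by omega)
        have a2 : t ^ (i + N) ≤ t ^ i := pow_le_pow_of_le_one h0.le h1.le (by omega)
        gcongr
    have h5 := h t h0 h1
    have h6 : 1 - t ^ k = (1 - t) * ∑ i ∈ Finset.range k, t ^ i := (mul_neg_geom_sum t k).symm
    rw [h6, mul_pow, mul_right_comm, ← pow_add, hab] at h5
    have h7 : (1 - t) ^ 4 * (∑ i ∈ Finset.range k, t ^ i) ^ a ≤ (1 - t) ^ 4 * ((1 - t) * HS J t) := by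
      calc _ ≤ _ := h5
        _ = _ := by ring
    have h8 := le_of_mul_le_mul_left h7 (by positivity)
    calc _ ≤ _ := h8
      _ ≤ (1 - t) * (N * K + e * (1 - t)⁻¹) := by gcongr
      _ = _ := by field_simp
  have c1 : Filter.Tendsto (fun t : ℝ => (∑ i ∈ Finset.range k, t ^ i) ^ a)
      (nhdsWithin 1 (Set.Iio 1)) (nhds ((k : ℝ) ^ a)) := by
    have : Continuous (fun t : ℝ => (∑ i ∈ Finset.range k, t ^ i) ^ a) := by fun_prop
    have h := (this.tendsto 1).mono_left (nhdsWithin_le_nhds (s := Set.Iio 1))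
    simpa using h
  have c2 : Filter.Tendsto (fun t : ℝ => (1 - t) * ((N : ℝ) * K) + e)
      (nhdsWithin 1 (Set.Iio 1)) (nhds (e : ℝ)) := by
    have : Continuous (fun t : ℝ => (1 - t) * ((N : ℝ) * K) + e) := by fun_prop
    have h := (this.tendsto 1).mono_left (nhdsWithin_le_nhds (s := Set.Iio 1))
    simpa using h
  have c3 : (k : ℝ) ^ a ≤ e := by
    refine le_of_tendsto_of_tendsto c1 c2 ?_
    filter_upwards [Ioo_mem_nhdsLT (show (0 : ℝ) < 1 by norm_num)] with t ht
    exact key t ht.1 ht.2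
  exact_mod_cast c3

/-- Finite length: vanishing from degree `T` on, total dimension at most `K`. -/
def FL (J : Ideal R5) (T K : ℕ) : Prop :=
  (∀ d, T ≤ d → hh J d = 0) ∧ ∑ d ∈ Finset.range T, hh J d ≤ K

lemma FL_bound {J : Ideal R5} (hJ : HomI J) {l : R5} (hl : l.IsHomogeneous 1) {T K : ℕ}
    (h : FL (J ⊔ Ideal.span {l}) T K) (d : ℕ) : hh J d ≤ K := by
  have h1 : ∀ d, hh J d ≤ ∑ i ∈ Finset.range (d + 1), hh (J ⊔ Ideal.span {l}) i := by
    intro d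
    induction d with
    | zero => simp [hh_lt hJ hl 0 (by norm_num)]
    | succ d ih =>
      rw [Finset.sum_range_succ]
      have := hh_add hJ hl d
      have := rk_le J l d
      omega
  refine (h1 d).trans (le_trans ?_ h.2)
  by_cases hd : d + 1 ≤ T
  · exact Finset.sum_le_sum_of_subset (Finset.range_mono hd)
  · rw [← Finset.sum_subset (Finset.range_mono (not_le.1 hd).le)]
    intro x _ hx
    exact h.1 x (by simpa using hx)

lemma step {k : ℕ} {J : Ideal R5} {a b D : ℕ} (hLB : LB k J a b) (hab : a + b = 4)
    (hJ : HomI J) {l g : R5} (hl : l.IsHomogeneous 1) (hg : g.IsHomogeneous k)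
    (h : FL (J ⊔ Ideal.span {l}) (D + 1) (k ^ a)) {N : ℕ}
    (hN : ∀ d, N ≤ d → hh (J ⊔ Ideal.span {g}) d = 0) :
    FL (J ⊔ Ideal.span {g}) (D + k) (k ^ (a + 1)) := by
  have hb := FL_bound hJ hl h
  -- nonincreasing from D on
  have hmono : ∀ d, D ≤ d → hh J (d + 1) ≤ hh J d := by
    intro d hd
    have h1 := hh_add hJ hl d
    have h2 := rk_le J l d
    have h3 := h.1 (d + 1) (by omega)
    omega
  have hconst : ∀ d, D ≤ d → hh J d = k ^ a := by
    intro d hd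
    refine le_antisymm (hb d) ?_
    refine LB_limit hLB hab hb (N := d) ?_
    intro m hm
    induction m, hm using Nat.le_induction with
    | base => exact le_rfl
    | succ m hm ih => exact (hmono m (by omega)).trans ih
  -- multiplication by l is injective
  have hlrk : ∀ d, hh J d ≤ rk J l d := by
    have h1 : ∀ d, hh J d + ∑ i ∈ Finset.range d, (hh J i - rk J l i) =
        ∑ i ∈ Finset.range (d + 1), hh (J ⊔ Ideal.span {l}) i := by
      intro d
      induction d with
      | zero => simp [hh_lt hJ hl 0 (by norm_num)]
      | succ d ih =>
        rw [Finset.sum_range_succ, Finset.sum_range_succ _ (d + 1), ← ih]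
        have := hh_add hJ hl d
        have := rk_le J l d
        omega
    intro d
    by_cases hd : D ≤ d
    · have h2 := hh_add hJ hl d
      rw [hconst (d + 1) (by omega), h.1 (d + 1) (by omega)] at h2
      rw [hconst d hd]; omega
    · have h2 := h1 D
      have h3 := h.2
      rw [← h2, hconst D le_rfl] at h3
      have h4 : ∑ i ∈ Finset.range D, (hh J i - rk J l i) = 0 := by omega
      rw [Finset.sum_eq_zero_iff] at h4
      have := h4 d (by simpa using hd)
      omega
  have hlinj := fun d => rk_inj (hlrk d)
  have hginjN : ∀ d, N ≤ d → D ≤ d → ∀ y ∈ MM J d, mulf J g y = 0 → y = 0 := by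
    intro d h1 h2
    apply rk_inj
    have h3 := hh_add hJ hg d
    rw [hN (d + k) (by omega), hconst (d + k) (by omega)] at h3
    rw [hconst d h2]; omega
  have hginj : ∀ m d, N + D ≤ d + m → ∀ y ∈ MM J d, mulf J g y = 0 → y = 0 := by
    intro m
    induction m with
    | zero => intro d hd; exact hginjN d (by omega) (by omega)
    | succ m ih =>
      intro d hd y hy hz
      apply hlinj d y hy
      refine ih (d + 1) (by omega) _ (mulf_mem hl hy) ?_
      have : mulf J g (mulf J l y) = mulf J l (mulf J g y) := by
        simp only [mulf, LinearMap.mulLeft_apply]; ring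
      rw [this, hz, map_zero]
  have hgrk : ∀ d, hh J (d + k) = hh (J ⊔ Ideal.span {g}) (d + k) + hh J d := by
    intro d
    rw [hh_add hJ hg d, inj_rk (hginj (N + D) d (by omega))]
  constructor
  · intro d hd
    obtain ⟨e, rfl⟩ := Nat.exists_eq_add_of_le' (show k ≤ d by omega)
    have := hgrk e
    rw [hconst (e + k) (by omega), hconst e (by omega)] at this
    omega
  · have h1 : ∀ m, ∑ d ∈ Finset.range (m + k), hh (J ⊔ Ideal.span {g}) d
        + ∑ d ∈ Finset.range m, hh J d = ∑ d ∈ Finset.range (m + k), hh J d := by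
      intro m
      induction m with
      | zero =>
        simp only [zero_add, Finset.range_zero, Finset.sum_empty, add_zero]
        refine Finset.sum_congr rfl fun i hi => (hh_lt hJ hg i (Finset.mem_range.1 hi)).symm
      | succ m ih =>
        rw [show m + 1 + k = m + k + 1 by ring, Finset.sum_range_succ, Finset.sum_range_succ _ m,
          Finset.sum_range_succ _ (m + k), hgrk m, ← ih]
        ring
    have h2 := h1 D
    have h3 : ∑ d ∈ Finset.range (D + k), hh J d = ∑ d ∈ Finset.range D, hh J d + k * k ^ a := by
      rw [Finset.sum_range_add]
      congr 1
      rw [Finset.sum_congr rfl (fun x _ => hconst (D + x) (by omega))]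
      simp
    have h4 : k ^ (a + 1) = k * k ^ a := by ring
    omega

lemma deg_w (e : Fin 5 →₀ ℕ) : e.degree = Finsupp.weight (1 : Fin 5 → ℕ) e := by
  rw [Finsupp.degree_eq_weight_one]; rfl

lemma lin_sep {P Q : ProjPt 4} (h : Q ≠ P) :
    ∃ l : R5, l.IsHomogeneous 1 ∧ eval Q.rep l = 0 ∧ eval P.rep l ≠ 0 := by
  by_contra! hc
  apply h
  obtain ⟨j, hj⟩ := Function.ne_iff.1 Q.rep_nonzero
  have h1 : ∀ i, Q.rep j * P.rep i - Q.rep i * P.rep j = 0 := by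
    intro i
    have := hc (C (Q.rep j) * X i - C (Q.rep i) * X j)
      (((isHomogeneous_X ℂ i).C_mul _).sub ((isHomogeneous_X ℂ j).C_mul _))
      (by simp; ring)
    simpa using this
  have hj' : Q.rep j ≠ 0 := hj
  rw [← Q.mk_rep, ← P.mk_rep, eq_comm, Projectivization.mk_eq_mk_iff']
  refine ⟨P.rep j / Q.rep j, ?_⟩
  ext i
  have := h1 i
  simp only [Pi.smul_apply, smul_eq_mul]
  field_simp
  linear_combination -this

lemma lin_nz (P : ProjPt 4) : ∃ l : R5, l.IsHomogeneous 1 ∧ eval P.rep l ≠ 0 := by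
  obtain ⟨j, hj⟩ := Function.ne_iff.1 P.rep_nonzero
  exact ⟨X j, isHomogeneous_X ℂ j, by simpa using hj⟩

lemma form_sep (P : ProjPt 4) (s : Finset (ProjPt 4)) (hP : P ∉ s) (N : ℕ) (hN : s.card ≤ N) :
    ∃ F : R5, F.IsHomogeneous N ∧ (∀ Q ∈ s, eval Q.rep F = 0) ∧ eval P.rep F ≠ 0 := by
  classical
  induction s using Finset.induction_on generalizing N with
  | empty =>
    obtain ⟨l, hl, h0⟩ := lin_nz P
    refine ⟨l ^ N, ?_, by simp, by simpa using fun h => absurd h h0⟩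
    simpa using hl.pow N
  | insert a s ha ih =>
    rw [Finset.card_insert_of_notMem ha] at hN
    obtain ⟨M, rfl⟩ := Nat.exists_eq_add_of_le' (show 1 ≤ N by omega)
    obtain ⟨F, hF, h1, h2⟩ := ih (fun h => hP (Finset.mem_insert_of_mem h)) M (by omega)
    obtain ⟨l, hl, h3, h4⟩ := lin_sep (P := P) (Q := a) (by rintro rfl; simp at hP)
    refine ⟨F * l, hF.mul hl, ?_, by simp [h2, h4]⟩
    intro Q hQ
    rcases Finset.mem_insert.1 hQ with rfl | hQ
    · simp [h3]
    · simp [h1 Q hQ]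

lemma avoid_s5 (V : Submodule ℂ R5) (Z : Set (ProjPt 4)) (hZ : Z.Finite)
    (h : ∀ p ∈ Z, ∃ f ∈ V, eval p.rep f ≠ 0) : ∃ f ∈ V, ∀ p ∈ Z, eval p.rep f ≠ 0 := by
  have : Finite Z := hZ
  by_contra! hc
  let W : Z → Subspace ℂ V := fun p =>
    LinearMap.ker ((aeval p.1.rep : R5 →ₐ[ℂ] ℂ).toLinearMap.domRestrict V)
  have hcov : ⋃ i, (W i : Set V) = Set.univ := by
    rw [Set.eq_univ_iff_forall]
    rintro ⟨f, hf⟩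
    obtain ⟨p, hp, h0⟩ := hc f hf
    refine Set.mem_iUnion.2 ⟨⟨p, hp⟩, ?_⟩
    simpa [W, aeval_eq_eval] using h0
  obtain ⟨⟨p, hp⟩, ht⟩ := Subspace.exists_eq_top_of_iUnion_eq_univ hcov
  obtain ⟨f, hf, h0⟩ := h p hp
  apply h0
  have : (⟨f, hf⟩ : V) ∈ W ⟨p, hp⟩ := by rw [ht]; trivial
  simpa [W, aeval_eq_eval] using this

lemma finite_zeros {J : Ideal R5} {K : ℕ} (hK : ∀ d, hh J d ≤ K) :
    {p : ProjPt 4 | ∀ f ∈ J, eval p.rep f = 0}.Finite := by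
  classical
  by_contra hinf
  obtain ⟨s, hs, hc⟩ := Set.Infinite.exists_subset_card_eq hinf (K + 1)
  have : ∀ p : s, ∃ F : R5, F.IsHomogeneous K ∧ (∀ Q ∈ s.erase p.1, eval Q.rep F = 0) ∧
      eval p.1.rep F ≠ 0 := by
    intro p
    apply form_sep
    · simp
    · rw [Finset.card_erase_of_mem p.2, hc]; simp
  choose F hF h0 h1 using this
  have hli : LinearIndependent ℂ
      (fun p : s => (⟨Ideal.Quotient.mk J (F p), mem_MM.2 ⟨F p, hF p, rfl⟩⟩ : MM J K)) := by
    rw [Fintype.linearIndependent_iff]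
    intro c hsum q
    have h2 := congrArg Subtype.val hsum
    simp only [Submodule.coe_sum, Submodule.coe_smul, Submodule.coe_zero] at h2
    have h3 : Ideal.Quotient.mk J (∑ p : s, C (c p) * F p) = 0 := by
      rw [← h2, map_sum]
      refine Finset.sum_congr rfl fun p _ => ?_
      rw [← smul_eq_C_mul]
      rfl
    have h4 := hs q.2 _ (Ideal.Quotient.eq_zero_iff_mem.1 h3)
    rw [map_sum, Finset.sum_eq_single q] at h4
    · simpa [h1 q] using h4
    · intro p _ hp
      rw [map_mul, h0 p q.1 (Finset.mem_erase.2 ⟨fun h => hp (Subtype.ext h.symm), q.2⟩), mul_zero]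
    · simp
  have h5 := hli.fintype_card_le_finrank
  rw [Fintype.card_coe, hc] at h5
  have := hK K
  unfold hh at this
  omega

lemma eval_smul_zero {J : Ideal R5} (hJ : HomI J) (a : ℂ) (v : Fin 5 → ℂ)
    (hv : ∀ f ∈ J, eval v f = 0) : ∀ f ∈ J, eval (a • v) f = 0 := by
  intro f hf
  rw [← sum_homogeneousComponent f, map_sum]
  refine Finset.sum_eq_zero fun d _ => ?_
  have h1 : eval (a • v) (homogeneousComponent d f) = a ^ d * eval v (homogeneousComponent d f) := by
    rw [eval_eq', eval_eq', Finset.mul_sum]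
    refine Finset.sum_congr rfl fun e he => ?_
    have h2 := homogeneousComponent_isHomogeneous d f (mem_support_iff.1 he)
    replace h2 := (deg_w e).trans h2
    have h3 : ∑ i, e i = d := by rw [← h2, Finsupp.degree_eq_sum]
    simp only [Pi.smul_apply, smul_eq_mul, mul_pow, Finset.prod_mul_distrib]
    rw [Finset.prod_pow_eq_pow_sum, h3]
    ring
  rw [h1, hv _ (hJ f hf d), mul_zero]

lemma hom_mem_pow {d N : ℕ} (h : N ≤ d) {x : R5} (hx : x.IsHomogeneous d) :
    x ∈ idealOfVars (Fin 5) ℂ ^ N := by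
  rw [mem_pow_idealOfVars_iff']
  intro e he
  by_contra hne
  have h1 := hx hne
  replace h1 := (deg_w e).trans h1
  omega

lemma nullst {J : Ideal R5} (hJ : HomI J) (h : ∀ p : ProjPt 4, ∃ f ∈ J, eval p.rep f ≠ 0) :
    ∃ N, ∀ d, N ≤ d → hh J d = 0 := by
  have h1 : idealOfVars (Fin 5) ℂ ≤ J.radical := by
    rw [← vanishingIdeal_zeroLocus_eq_radical (K := ℂ)]
    rw [idealOfVars, Ideal.span_le]
    rintro _ ⟨i, rfl⟩
    rw [SetLike.mem_coe, mem_vanishingIdeal_iff]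
    intro v hv
    rw [mem_zeroLocus_iff] at hv
    have hv' : ∀ f ∈ J, eval v f = 0 := fun f hf => by simpa [aeval_eq_eval] using hv f hf
    by_cases h0 : v = 0
    · simp [h0]
    · exfalso
      obtain ⟨f, hf, hne⟩ := h (Projectivization.mk ℂ v h0)
      obtain ⟨a, ha⟩ := Projectivization.exists_smul_eq_mk_rep ℂ v h0
      apply hne
      rw [← ha]
      exact eval_smul_zero hJ (a : ℂ) v hv' f hf
  obtain ⟨N, hN⟩ := J.exists_radical_pow_le_of_fg (IsNoetherian.noetherian _)
  refine ⟨N, fun d hd => hh_zero.2 fun x hx => ?_⟩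
  exact hN (Ideal.pow_right_mono h1 N (hom_mem_pow hd hx))

lemma stage {k : ℕ} {Fam : Set R5} (hFam : ∀ g ∈ Fam, g.IsHomogeneous k) {l5 : R5}
    (hl5 : ∀ p : ProjPt 4, (∀ g ∈ Fam, eval p.rep g = 0) → eval p.rep l5 ≠ 0)
    {J : Ideal R5} {a b D : ℕ} (hLB : LB k J a b) (hab : a + b = 4)
    (hJ : HomI J) {l : R5} (hl : l.IsHomogeneous 1) (h5 : l5 ∈ J)
    (h : FL (J ⊔ Ideal.span {l}) (D + 1) (k ^ a)) :
    ∃ g ∈ Submodule.span ℂ Fam, g.IsHomogeneous k ∧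
      FL (J ⊔ Ideal.span {g}) (D + k) (k ^ (a + 1)) := by
  have hfin := finite_zeros (FL_bound hJ hl h)
  obtain ⟨g, hg, hz⟩ := avoid_s5 (Submodule.span ℂ Fam) _ hfin (by
    intro p hp
    by_contra! hc
    exact hl5 p (fun g hg => hc g (Submodule.subset_span hg)) (hp l5 h5))
  have hgh : g.IsHomogeneous k := by
    have : Submodule.span ℂ Fam ≤ homogeneousSubmodule (Fin 5) ℂ k := Submodule.span_le.2 hFam
    exact this hg
  obtain ⟨N, hN⟩ := nullst (HomI_sup hJ hgh) (by
    intro p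
    by_contra! hc
    exact hz p (fun f hf => hc f (Ideal.mem_sup_left hf))
      (hc g (Ideal.mem_sup_right (Ideal.mem_span_singleton_self g))))
  exact ⟨g, hg, hgh, step hLB hab hJ hl hgh h hN⟩

lemma FL_start {J : Ideal R5} (h : idealOfVars (Fin 5) ℂ ≤ J) : FL J 1 1 := by
  constructor
  · intro d hd
    refine hh_zero.2 fun x hx => h ?_
    simpa using hom_mem_pow hd hx
  · simpa using hh_le J 0

lemma complete_lin {l : R5} (hl : l.IsHomogeneous 1) (h0 : l ≠ 0) :
    ∃ j : Fin 4 → R5, (∀ i, (j i).IsHomogeneous 1) ∧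
      idealOfVars (Fin 5) ℂ ≤ Ideal.span (insert l (Set.range j)) := by
  have h1 : l ∈ Submodule.span ℂ (Set.range (X : Fin 5 → R5)) := by
    rw [← homogeneousSubmodule_one_eq_span_X]; exact hl
  obtain ⟨c, rfl⟩ := (Submodule.mem_span_range_iff_exists_fun ℂ).1 h1
  obtain ⟨m, hm⟩ : ∃ m, c m ≠ 0 := by
    by_contra! hc
    simp [hc] at h0
  refine ⟨fun i => X (m.succAbove i), fun i => isHomogeneous_X _ _, ?_⟩
  set I := Ideal.span (insert (∑ i, c i • (X i : R5)) (Set.range fun i => X (m.succAbove i)))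
  have hX : ∀ i, (X (m.succAbove i) : R5) ∈ I := fun i =>
    Ideal.subset_span (Set.mem_insert_of_mem _ ⟨i, rfl⟩)
  have hl' : (∑ i, c i • (X i : R5)) ∈ I := Ideal.subset_span (Set.mem_insert _ _)
  have hXm : (X m : R5) ∈ I := by
    rw [Fin.sum_univ_succAbove _ m] at hl'
    have h2 : c m • (X m : R5) ∈ I := by
      refine (Ideal.add_mem_iff_left _ ?_).1 hl'
      refine Ideal.sum_mem _ fun i _ => ?_
      rw [smul_eq_C_mul]
      exact Ideal.mul_mem_left _ _ (hX i)
    have h3 : (X m : R5) = C (c m)⁻¹ * (c m • (X m : R5)) := by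
      rw [smul_eq_C_mul, ← mul_assoc, ← C_mul, inv_mul_cancel₀ hm, C_1, one_mul]
    rw [h3]
    exact Ideal.mul_mem_left _ _ h2
  rw [idealOfVars, Ideal.span_le]
  rintro _ ⟨i, rfl⟩
  rcases Fin.eq_self_or_eq_succAbove m i with rfl | ⟨q, rfl⟩
  · exact hXm
  · exact hX q

lemma main_aux (k' : ℕ) {Fam : Set R5} (hFam : ∀ g ∈ Fam, g.IsHomogeneous (k' + 1)) {l5 : R5}
    (h5 : l5.IsHomogeneous 1) (h0 : l5 ≠ 0)
    (hl5 : ∀ p : ProjPt 4, (∀ g ∈ Fam, eval p.rep g = 0) → eval p.rep l5 ≠ 0) :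
    ∃ J : Ideal R5, HomI J ∧ (∀ p : ProjPt 4, (∀ g ∈ Fam, eval p.rep g = 0) →
      ∀ f ∈ J, eval p.rep f = 0) ∧ ∀ d, 4 * k' + 1 ≤ d → hh (J ⊔ Ideal.span {l5}) d = 0 := by
  obtain ⟨j, hj, hid⟩ := complete_lin h5 h0
  have b0 := HomI_bot
  have c0 := LB_bot (k' + 1)
  have b1 := HomI_sup b0 h5
  have c1 := LB_l c0 b0 h5
  have m5 : l5 ∈ (⊥ : Ideal R5) ⊔ Ideal.span {l5} :=
    Ideal.mem_sup_right (Ideal.mem_span_singleton_self l5)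
  have b2 := HomI_sup b1 (hj 0)
  have c2 := LB_l c1 b1 (hj 0)
  have b3 := HomI_sup b2 (hj 1)
  have c3 := LB_l c2 b2 (hj 1)
  have b4 := HomI_sup b3 (hj 2)
  have c4 := LB_l c3 b3 (hj 2)
  obtain ⟨g1, s1, hg1, f1⟩ := stage hFam hl5 c4 rfl b4 (hj 3)
    (Ideal.mem_sup_left (Ideal.mem_sup_left (Ideal.mem_sup_left m5))) (D := 0) (by
      apply FL_start
      refine hid.trans (Ideal.span_le.2 ?_)
      rintro x (rfl | ⟨i, rfl⟩)
      · exact (Ideal.mem_sup_left (Ideal.mem_sup_left (Ideal.mem_sup_left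
          (Ideal.mem_sup_left m5))))
      · fin_cases i
        · exact (Ideal.mem_sup_left (Ideal.mem_sup_left (Ideal.mem_sup_left
            (Ideal.mem_sup_right (Ideal.mem_span_singleton_self _)))))
        · exact (Ideal.mem_sup_left (Ideal.mem_sup_left
            (Ideal.mem_sup_right (Ideal.mem_span_singleton_self _))))
        · exact (Ideal.mem_sup_left
            (Ideal.mem_sup_right (Ideal.mem_span_singleton_self _)))
        · exact (Ideal.mem_sup_right (Ideal.mem_span_singleton_self _)))
  rw [sup_right_comm] at f1
  obtain ⟨g2, s2, hg2, f2⟩ := stage hFam hl5 (LB_g c3 b3 hg1) rfl (HomI_sup b3 hg1) (hj 2)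
    (Ideal.mem_sup_left (Ideal.mem_sup_left (Ideal.mem_sup_left m5))) (D := k')
    (by convert f1 using 1; omega)
  have b22 := HomI_sup (HomI_sup b2 hg1) hg2
  obtain ⟨g3, s3, hg3, f3⟩ := stage hFam hl5 (LB_g (LB_g c2 b2 hg1) (HomI_sup b2 hg1) hg2) rfl
    b22 (hj 1) (Ideal.mem_sup_left (Ideal.mem_sup_left (Ideal.mem_sup_left m5))) (D := 2 * k')
    (by convert f2 using 1
        · ac_rfl
        · omega)
  have b32 := HomI_sup (HomI_sup b1 hg1) hg2
  have b33 := HomI_sup b32 hg3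
  obtain ⟨g4, s4, hg4, f4⟩ := stage hFam hl5
    (LB_g (LB_g (LB_g c1 b1 hg1) (HomI_sup b1 hg1) hg2) b32 hg3) rfl
    b33 (hj 0) (Ideal.mem_sup_left (Ideal.mem_sup_left (Ideal.mem_sup_left m5))) (D := 3 * k')
    (by convert f3 using 1
        · ac_rfl
        · omega)
  refine ⟨⊥ ⊔ Ideal.span {g1} ⊔ Ideal.span {g2} ⊔ Ideal.span {g3} ⊔ Ideal.span {g4},
    HomI_sup (HomI_sup (HomI_sup (HomI_sup b0 hg1) hg2) hg3) hg4, ?_, ?_⟩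
  · intro p hp
    have hs : ∀ g ∈ Submodule.span ℂ Fam, Ideal.span {g} ≤ RingHom.ker (eval p.rep) := by
      intro g hg
      rw [Ideal.span_singleton_le_iff_mem, RingHom.mem_ker]
      have : Submodule.span ℂ Fam ≤ LinearMap.ker (aeval p.rep : R5 →ₐ[ℂ] ℂ).toLinearMap := by
        refine Submodule.span_le.2 fun x hx => ?_
        simpa [aeval_eq_eval] using hp x hx
      simpa [aeval_eq_eval] using this hg
    have : ⊥ ⊔ Ideal.span {g1} ⊔ Ideal.span {g2} ⊔ Ideal.span {g3} ⊔ Ideal.span {g4} ≤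
        RingHom.ker (eval p.rep) :=
      sup_le (sup_le (sup_le (sup_le bot_le (hs g1 s1)) (hs g2 s2)) (hs g3 s3)) (hs g4 s4)
    exact fun f hf => this hf
  · intro d hd
    have := f4.1 d (by omega)
    rw [← this]
    congr 1
    ac_rfl

theorem stmt_5 (n k : ℕ) (hk : 1 ≤ k) (hkn : 2 * k < n)
    (S : Set (ProjPt 4)) (hfin : S.Finite)
    (Fam : Set (MvPolynomial (Fin 5) ℂ))
    (hFamHom : ∀ g ∈ Fam, g.IsHomogeneous k)
    (hS : S = {p : ProjPt 4 | ∀ g ∈ Fam, VanishesAt g p}) :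
    ∀ P ∈ S, ∃ F : MvPolynomial (Fin 5) ℂ,
      F.IsHomogeneous (2 * n - 5) ∧
      (∀ Q ∈ S, Q ≠ P → VanishesAt F Q) ∧ ¬ VanishesAt F P := by
  classical
  intro P hP
  obtain ⟨k', rfl⟩ := Nat.exists_eq_add_of_le' hk
  obtain ⟨l5, h5, hl5⟩ := avoid_s5 (homogeneousSubmodule (Fin 5) ℂ 1) S hfin
    (fun p _ => lin_nz p)
  have h0 : l5 ≠ 0 := by
    rintro rfl
    exact hl5 P hP (map_zero _)
  have hmem : ∀ p, (∀ g ∈ Fam, eval p.rep g = 0) ↔ p ∈ S := by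
    intro p; rw [hS]; rfl
  obtain ⟨J, hJ, hJ0, hJd⟩ := main_aux k' hFamHom h5 h0
    (fun p hp => hl5 p ((hmem p).1 hp))
  have hdesc : ∀ m, (∃ F : R5, F.IsHomogeneous (4 * k' + m) ∧
      (∀ Q ∈ S, Q ≠ P → eval Q.rep F = 0) ∧ eval P.rep F ≠ 0) →
      ∃ F : R5, F.IsHomogeneous (4 * k') ∧
      (∀ Q ∈ S, Q ≠ P → eval Q.rep F = 0) ∧ eval P.rep F ≠ 0 := by
    intro m
    induction m with
    | zero => exact id
    | succ m ih =>
      rintro ⟨F, hF, h1, h2⟩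
      apply ih
      have h3 := hh_zero.1 (hJd (4 * k' + (m + 1)) (by omega)) F hF
      obtain ⟨a, ha, b, hb, hab⟩ := Submodule.mem_sup.1 h3
      obtain ⟨c, rfl⟩ := Ideal.mem_span_singleton'.1 hb
      have h4 := homogeneousComponent_eq_self hF
      rw [← hab, map_add, mul_comm c l5,
        show 4 * k' + (m + 1) = (4 * k' + m) + 1 by ring, comp_mul_s5 l5 c 1 _ h5,
        mul_comm l5 c, hab] at h4
      have h6 : ∀ Q ∈ S, eval Q.rep F =
          eval Q.rep l5 * eval Q.rep (homogeneousComponent (4 * k' + m) c) := by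
        intro Q hQ
        rw [← h4, map_add, hJ0 Q ((hmem Q).2 hQ) _ (hJ a ha _), zero_add, map_mul]
      refine ⟨homogeneousComponent (4 * k' + m) c, homogeneousComponent_isHomogeneous _ _, ?_, ?_⟩
      · intro Q hQ hne
        have h7 := h6 Q hQ
        rw [h1 Q hQ hne] at h7
        exact (mul_eq_zero.1 h7.symm).resolve_left (hl5 Q hQ)
      · intro h8
        apply h2
        rw [h6 P hP, h8, mul_zero]
  obtain ⟨F, hF, h1, h2⟩ := hdesc (hfin.toFinset.erase P).card (by
    obtain ⟨F, hF, h1, h2⟩ := form_sep P (hfin.toFinset.erase P) (by simp)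
      (4 * k' + (hfin.toFinset.erase P).card) (by omega)
    exact ⟨F, hF, fun Q hQ hne => h1 Q (by simp [hQ, hne]), h2⟩)
  refine ⟨F * l5 ^ (2 * n - 5 - 4 * k'), ?_, ?_, ?_⟩
  · have h3 := hF.mul (MvPolynomial.IsHomogeneous.pow h5 (2 * n - 5 - 4 * k'))
    convert h3 using 1
    omega
  · intro Q hQ hne
    simp [VanishesAt, h1 Q hQ hne]
  · have := hl5 P hP
    simp [VanishesAt, h2, this]
end
end

section
/- Let f, g ∈ ℂ[x_0,…,x_5] be homogeneous of degrees n and k respectively, with n ≥ k ≥ 2 and n ≥ 5, such that the hypersurface {g = 0} ⊂ ℙ⁵ is smooth. Let X = {f = g = 0} ⊂ ℙ⁵(ℂ) and suppose that Sing(X) is finite with 5·|Sing(X)| ≤ (n+k−2)(n−1). Then the singular points of X impose independent linear conditions on homogeneous polynomials of degree 2n+k−6: for every point P ∈ Sing(X) there exists a homogeneous polynomial of degree 2n+k−6 in ℂ[x_0,…,x_5] vanishing at every point of Sing(X) \ {P} and not vanishing at P. -/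
open MvPolynomial

noncomputable section

/-- The `2 × 6` Jacobian matrix of `f, g` evaluated at `v`. -/
def Jac6 (f g : MvPolynomial (Fin 6) ℂ) (v : Fin 6 → ℂ) : Matrix (Fin 2) (Fin 6) ℂ :=
  Matrix.of ![fun j : Fin 6 => eval v (pderiv j f), fun j : Fin 6 => eval v (pderiv j g)]

/-- The singular locus of `X = {f = g = 0} ⊂ ℙ⁵(ℂ)`: points of `X` where the Jacobian
matrix has rank at most `1`. -/
def SingCI6 (f g : MvPolynomial (Fin 6) ℂ) : Set (ProjPt 5) :=
  {p : ProjPt 5 | eval p.rep f = 0 ∧ eval p.rep g = 0 ∧ (Jac6 f g p.rep).rank ≤ 1}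

section Abstract
variable {B : Type*} [CommRing B] [Algebra ℂ B]

/-- coefficients of a polynomial with values in a subspace lie in the subspace -/
theorem aux_coeff_mem (S : Submodule ℂ B) (N : ℕ) (b : ℕ → B)
    (h : ∀ s : ℂ, ∑ i ∈ Finset.range N, s ^ i • b i ∈ S) (i : ℕ) (hi : i < N) : b i ∈ S := by
  by_contra hb
  obtain ⟨ψ, hψ, hS⟩ := Submodule.exists_le_ker_of_notMem hb
  have hz : (∑ i ∈ Finset.range N, Polynomial.C (ψ (b i)) * Polynomial.X ^ i) = 0 := by
    apply Polynomial.funext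
    intro s
    have := hS (h s)
    rw [LinearMap.mem_ker, map_sum] at this
    simp only [Polynomial.eval_finsetSum, Polynomial.eval_mul, Polynomial.eval_C,
      Polynomial.eval_pow, Polynomial.eval_X, Polynomial.eval_zero]
    rw [← this]
    refine Finset.sum_congr rfl fun j _ => ?_
    rw [map_smul, smul_eq_mul, mul_comm]
  have := congrArg (fun p => Polynomial.coeff p i) hz
  simp [Polynomial.coeff_C_mul, Polynomial.coeff_X_pow, hi] at this
  exact hψ this

/-- polarization -/
theorem aux_polar (V S : Submodule ℂ B) (n : ℕ) (hS : ∀ y ∈ V, y ^ n ∈ S) : V ^ n ≤ S := by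
  have key : ∀ m, m ≤ n → ∀ y ∈ V, ∀ z ∈ V ^ m, y ^ (n - m) * z ∈ S := by
    intro m
    induction m with
    | zero =>
      intro _ y hy z hz
      rw [pow_zero, Submodule.mem_one] at hz
      obtain ⟨c, rfl⟩ := hz
      rw [mul_comm, ← Algebra.smul_def]
      exact S.smul_mem _ (hS y hy)
    | succ m ih =>
      intro hm y hy z hz
      rw [pow_succ] at hz
      refine Submodule.mul_induction_on hz ?_ ?_
      · intro z hz w hw
        obtain ⟨k, hk⟩ : ∃ k, n - m = k + 1 := ⟨n - m - 1, by omega⟩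
        have hk2 : n - (m + 1) = k := by omega
        rw [hk2]
        have := aux_coeff_mem S (k + 1 + 1)
          (fun i => w ^ i * y ^ (k + 1 - i) * ((k + 1).choose i : ℕ) * z) (by
            intro s
            have h1 := ih (by omega) (s • w + y) (V.add_mem (V.smul_mem _ hw) hy) z hz
            rw [hk, add_pow, Finset.sum_mul] at h1
            convert h1 using 2 with i _
            rw [smul_pow]
            simp only [smul_mul_assoc]) 1 (by omega)
        simp only [pow_one, Nat.choose_one_right, add_tsub_cancel_right] at this
        have h2 := S.smul_mem ((k + 1 : ℂ)⁻¹) this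
        have h3 : (k + 1 : ℂ) ≠ 0 := by exact_mod_cast Nat.succ_ne_zero k
        convert h2 using 1
        have : ((k + 1 : ℕ) : B) = algebraMap ℂ B (k + 1 : ℂ) := by simp
        rw [this]
        have : w * y ^ k * algebraMap ℂ B (k + 1 : ℂ) * z
          = algebraMap ℂ B (k + 1 : ℂ) * (y ^ k * (z * w)) := by ring
        rw [this, ← Algebra.smul_def, smul_smul, inv_mul_cancel₀ h3, one_smul]
      · intro a b ha hb
        rw [mul_add]; exact S.add_mem ha hb
  intro z hz
  simpa using key n le_rfl 0 V.zero_mem z hz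

/-- Subspace `x • W`. -/
def mulSub (x : B) (W : Submodule ℂ B) : Submodule ℂ B := W.map (LinearMap.mulLeft ℂ x)

theorem mem_mulSub {x : B} {W : Submodule ℂ B} {z : B} :
    z ∈ mulSub x W ↔ ∃ u ∈ W, x * u = z := by
  simp [mulSub]

theorem pow_fin (V : Submodule ℂ B) (hV : V.FG) (t : ℕ) : Module.Finite ℂ (V ^ t : Submodule ℂ B) :=
  Module.Finite.iff_fg.mpr (hV.pow t)

theorem mul_mem_pow_succ {V : Submodule ℂ B} {x u : B} {t : ℕ} (hx : x ∈ V) (hu : u ∈ V ^ t) :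
    x * u ∈ V ^ (t + 1) := by
  rw [pow_succ']; exact Submodule.mul_mem_mul hx hu

/-- binary relation step -/
theorem aux_binary (V : Submodule ℂ B) (hV : V.FG) (t : ℕ)
    (h : Module.finrank ℂ (V ^ (t + 1) : Submodule ℂ B) ≤ t + 1) (x y : B) (hx : x ∈ V)
    (hy : y ∈ V) : ∃ p : Polynomial ℂ, p ≠ 0 ∧
      ∀ s : ℂ, p.eval s ≠ 0 → y ^ (t + 1) ∈ mulSub (x + s • y) (V ^ t) := by
  have := pow_fin V hV (t + 1)
  have hmem : ∀ i ≤ t + 1, x ^ i * y ^ (t + 1 - i) ∈ V ^ (t + 1) := by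
    intro i hi
    have : V ^ (t + 1) = V ^ i * V ^ (t + 1 - i) := by rw [← pow_add]; congr 1; omega
    rw [this]
    exact Submodule.mul_mem_mul (Submodule.pow_mem_pow _ hx _) (Submodule.pow_mem_pow _ hy _)
  let v : Fin (t + 2) → (V ^ (t + 1) : Submodule ℂ B) :=
    fun i => ⟨x ^ (i : ℕ) * y ^ (t + 1 - i), hmem i (by omega)⟩
  have hdep : ¬ LinearIndependent ℂ v := by
    intro hv
    have := hv.fintype_card_le_finrank
    simp at this
    omega
  rw [Fintype.not_linearIndependent_iff] at hdep
  obtain ⟨c, hc, i0, hi0⟩ := hdep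
  refine ⟨∑ i : Fin (t + 2), Polynomial.C (c i * (-1) ^ (i : ℕ)) * Polynomial.X ^ (i : ℕ), ?_, ?_⟩
  · intro h0
    have := congrArg (fun p => Polynomial.coeff p (i0 : ℕ)) h0
    simp only [Polynomial.finsetSum_coeff, Polynomial.coeff_C_mul, Polynomial.coeff_X_pow,
      Polynomial.coeff_zero] at this
    rw [Finset.sum_eq_single i0] at this
    · simp [hi0] at this
    · intro j _ hj
      rw [if_neg, mul_zero]
      intro h; exact hj (Fin.ext h.symm)
    · simp
  · intro s hs
    set W := mulSub (x + s • y) (V ^ t) with hW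
    have hcong : ∀ i ≤ t + 1, x ^ i * y ^ (t + 1 - i) - (-s) ^ i • y ^ (t + 1) ∈ W := by
      intro i
      induction i with
      | zero => intro _; simp
      | succ i ih =>
        intro hi
        have h1 := ih (by omega)
        obtain ⟨j, hj⟩ : ∃ j, t = i + j := ⟨t - i, by omega⟩
        have e1 : t + 1 - i = j + 1 := by omega
        have e2 : t + 1 - (i + 1) = j := by omega
        rw [e1] at h1
        rw [e2]
        have h2 : (x + s • y) * (x ^ i * y ^ j) ∈ W := by
          rw [hW, mem_mulSub]
          refine ⟨_, ?_, rfl⟩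
          rw [hj, pow_add V]
          exact Submodule.mul_mem_mul (Submodule.pow_mem_pow _ hx _) (Submodule.pow_mem_pow _ hy _)
        convert W.add_mem h2 (W.smul_mem (-s) h1) using 1
        simp only [Algebra.smul_def, map_neg, map_pow]
        ring
    have hsum : ∑ i : Fin (t + 2), c i • ((-s) ^ (i : ℕ) • y ^ (t + 1)) ∈ W := by
      have h3 : ∑ i : Fin (t + 2), c i • (x ^ (i : ℕ) * y ^ (t + 1 - i)
          - (-s) ^ (i : ℕ) • y ^ (t + 1)) ∈ W :=
        W.sum_mem fun i _ => W.smul_mem _ (hcong i (by omega))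
      have h4 : ∑ i : Fin (t + 2), c i • (x ^ (i : ℕ) * y ^ (t + 1 - (i : ℕ))) = 0 := by
        have := congrArg (Subtype.val) hc
        simpa [v] using this
      simp only [smul_sub, Finset.sum_sub_distrib, h4, zero_sub] at h3
      simpa using W.neg_mem h3
    simp only [smul_smul, ← Finset.sum_smul] at hsum
    have e : (∑ i : Fin (t + 2), Polynomial.C (c i * (-1) ^ (i : ℕ)) * Polynomial.X ^ (i : ℕ)).eval s
        = ∑ i : Fin (t + 2), c i * (-s) ^ (i : ℕ) := by
      simp only [Polynomial.eval_finsetSum, Polynomial.eval_mul, Polynomial.eval_C,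
      Polynomial.eval_pow, Polynomial.eval_X]
      refine Finset.sum_congr rfl fun i _ => ?_
      rw [neg_pow s]; ring
    rw [e] at hs
    have := W.smul_mem (∑ i : Fin (t + 2), c i * (-s) ^ (i : ℕ))⁻¹ hsum
    rwa [smul_smul, inv_mul_cancel₀ hs, one_smul] at this

/-- openness of linear independence along a line -/
theorem aux_open {E : Type*} [AddCommGroup E] [Module ℂ E] {m : ℕ} (v w : Fin m → E)
    (hv : LinearIndependent ℂ v) : ∃ p : Polynomial ℂ, p ≠ 0 ∧
      ∀ s : ℂ, p.eval s ≠ 0 → LinearIndependent ℂ (fun i => v i + s • w i) := by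
  obtain ⟨ψ, hψ⟩ : ∃ ψ : E →ₗ[ℂ] (Fin m → ℂ), ∀ i, ψ (v i) = Pi.single i 1 := by
    let b := Module.Basis.span hv
    obtain ⟨g, hg⟩ := LinearMap.exists_extend (b.equivFun.toLinearMap)
    refine ⟨g, fun i => ?_⟩
    have h1 : (b i : E) = v i := congrArg Subtype.val (Module.Basis.span_apply hv i)
    rw [← h1]
    have := LinearMap.congr_fun hg (b i)
    simp at this
    rw [this]
    ext j; simp [Finsupp.single_apply, Pi.single_apply, eq_comm]
  let N : Matrix (Fin m) (Fin m) ℂ := Matrix.of fun i => ψ (w i)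
  let M : Matrix (Fin m) (Fin m) (Polynomial ℂ) :=
    Matrix.of fun i j => Polynomial.C ((1 : Matrix (Fin m) (Fin m) ℂ) i j)
      + Polynomial.X * Polynomial.C (N i j)
  have hM : ∀ s : ℂ, M.det.eval s = (Matrix.of fun i => ψ (v i + s • w i)).det := by
    intro s
    rw [← Polynomial.coe_evalRingHom, RingHom.map_det]
    congr 1
    ext i j
    by_cases hij : i = j
    · subst hij; simp [M, N, hψ]; ring
    · simp [M, N, hψ, hij, Ne.symm hij]; ring
  refine ⟨M.det, ?_, ?_⟩
  · intro h0
    have := hM 0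
    rw [h0] at this
    have e : (Matrix.of fun i => ψ (v i + (0 : ℂ) • w i)) = (1 : Matrix (Fin m) (Fin m) ℂ) := by
      ext i j; simp [hψ, Matrix.one_apply, Pi.single_apply, eq_comm]
    rw [e] at this
    simp at this
  · intro s hs
    rw [hM] at hs
    have : LinearIndependent ℂ (ψ ∘ fun i => v i + s • w i) := by
      have := Matrix.linearIndependent_rows_of_det_ne_zero hs
      exact this
    exact this.of_comp ψ

/-- Green-type lemma: small Hilbert function implies surjectivity of a linear form. -/
theorem aux_green (V : Submodule ℂ B) (hV : V.FG) (t : ℕ)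
    (h : Module.finrank ℂ (V ^ (t + 1) : Submodule ℂ B) ≤ t + 1) :
    ∃ x ∈ V, V ^ (t + 1) = mulSub x (V ^ t) := by
  have := pow_fin V hV (t + 1)
  have := pow_fin V hV t
  have hle : ∀ x ∈ V, mulSub x (V ^ t) ≤ V ^ (t + 1) := by
    intro x hx z hz
    obtain ⟨u, hu, rfl⟩ := mem_mulSub.1 hz
    exact mul_mem_pow_succ hx hu
  have hfinm : ∀ x : B, Module.Finite ℂ (mulSub x (V ^ t)) := fun x => by
    unfold mulSub; infer_instance
  obtain ⟨x, hx, hmax⟩ : ∃ x ∈ V, ∀ y ∈ V, Module.finrank ℂ (mulSub y (V ^ t)) ≤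
      Module.finrank ℂ (mulSub x (V ^ t)) := by
    have hne : (Set.range fun x : V => Module.finrank ℂ (mulSub (x : B) (V ^ t))).Nonempty :=
      ⟨_, 0, rfl⟩
    have hbdd : BddAbove (Set.range fun x : V => Module.finrank ℂ (mulSub (x : B) (V ^ t))) := by
      refine ⟨Module.finrank ℂ (V ^ (t + 1) : Submodule ℂ B), ?_⟩
      rintro _ ⟨x, rfl⟩
      exact Submodule.finrank_mono (hle x x.2)
    obtain ⟨x, hx⟩ := Nat.sSup_mem hne hbdd
    refine ⟨x, x.2, fun y hy => ?_⟩
    have := le_csSup hbdd ⟨⟨y, hy⟩, rfl⟩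
    exact this.trans hx.ge
  refine ⟨x, hx, le_antisymm ?_ (hle x hx)⟩
  apply aux_polar
  intro y hy
  by_contra hyn
  have := hfinm x
  set r := Module.finrank ℂ (mulSub x (V ^ t)) with hr
  let b := Module.finBasis ℂ (mulSub x (V ^ t))
  have hb : ∀ i, ∃ u ∈ V ^ t, x * u = (b i : B) := fun i => mem_mulSub.1 (b i).2
  choose u hu hxu using hb
  have hind : LinearIndependent ℂ (Fin.cons (y ^ (t + 1)) (fun i => (b i : B)) : Fin (r + 1) → B) := by
    rw [linearIndependent_finCons]
    refine ⟨b.linearIndependent.map' (Submodule.subtype _) (Submodule.ker_subtype _), ?_⟩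
    intro hmem
    apply hyn
    refine (Submodule.span_le.2 ?_) hmem
    rintro _ ⟨i, rfl⟩
    exact (b i).2
  obtain ⟨p, hp, hp2⟩ := aux_open _ (Fin.cons 0 (fun i => y * u i) : Fin (r + 1) → B) hind
  obtain ⟨q, hq, hq2⟩ := aux_binary V hV t h x y hx hy
  obtain ⟨s, hs⟩ : ∃ s, (p * q).eval s ≠ 0 := by
    by_contra hcon
    push Not at hcon
    exact mul_ne_zero hp hq (Polynomial.funext (by simpa using hcon))
  rw [Polynomial.eval_mul] at hs
  have h1 := hp2 s (left_ne_zero_of_mul hs)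
  have h2 := hq2 s (right_ne_zero_of_mul hs)
  have := hfinm (x + s • y)
  have h3 : Module.finrank ℂ (mulSub (x + s • y) (V ^ t)) ≤ r :=
    hmax _ (V.add_mem hx (V.smul_mem _ hy))
  have h4 : ∀ i, ((Fin.cons (y ^ (t + 1)) (fun i => (b i : B)) : Fin (r + 1) → B) i +
      s • (Fin.cons 0 (fun i => y * u i) : Fin (r + 1) → B) i) ∈ mulSub (x + s • y) (V ^ t) := by
    intro i
    refine Fin.cases ?_ (fun i => ?_) i
    · simpa using h2
    · simp only [Fin.cons_succ]
      rw [mem_mulSub]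
      refine ⟨u i, hu i, ?_⟩
      rw [← hxu]; simp [add_mul]
  have h5 : LinearIndependent ℂ (fun i => (⟨_, h4 i⟩ : mulSub (x + s • y) (V ^ t))) :=
    LinearIndependent.of_comp (Submodule.subtype _) h1
  have := h5.fintype_card_le_finrank
  simp at this
  omega

theorem aux_sym_le (V : Submodule ℂ B) (hV : V.FG) (φ : B →ₗ[ℂ] ℂ) (T : ℕ)
    (hG : ∀ t ≤ T, ∀ u ∈ V ^ t, (∀ v ∈ V ^ (T - t), φ (u * v) = 0) → u = 0) (t : ℕ) (ht : t ≤ T) :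
    Module.finrank ℂ (V ^ t : Submodule ℂ B) ≤ Module.finrank ℂ (V ^ (T - t) : Submodule ℂ B) := by
  have := pow_fin V hV t
  have := pow_fin V hV (T - t)
  let L : (V ^ t : Submodule ℂ B) →ₗ[ℂ] Module.Dual ℂ (V ^ (T - t) : Submodule ℂ B) :=
    ((LinearMap.mul ℂ B).compr₂ φ).domRestrict₁₂ (V ^ t) (V ^ (T - t))
  have hL : Function.Injective L := by
    rw [← LinearMap.ker_eq_bot, LinearMap.ker_eq_bot']
    intro u hu
    apply Subtype.ext
    refine hG t ht u u.2 fun v hv => ?_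
    exact LinearMap.congr_fun hu ⟨v, hv⟩
  have := LinearMap.finrank_le_finrank_of_injective hL
  rwa [Subspace.dual_finrank_eq] at this

theorem aux_sym (V : Submodule ℂ B) (hV : V.FG) (φ : B →ₗ[ℂ] ℂ) (T : ℕ)
    (hG : ∀ t ≤ T, ∀ u ∈ V ^ t, (∀ v ∈ V ^ (T - t), φ (u * v) = 0) → u = 0) (t : ℕ) (ht : t ≤ T) :
    Module.finrank ℂ (V ^ t : Submodule ℂ B) = Module.finrank ℂ (V ^ (T - t) : Submodule ℂ B) := by
  refine le_antisymm (aux_sym_le V hV φ T hG t ht) ?_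
  have := aux_sym_le V hV φ T hG (T - t) (by omega)
  rwa [show T - (T - t) = t by omega] at this

theorem aux_surj (V : Submodule ℂ B) (x : B) (t : ℕ)
    (h : V ^ (t + 1) = mulSub x (V ^ t)) (s : ℕ) (hs : t ≤ s) :
    V ^ (s + 1) = mulSub x (V ^ s) := by
  induction s, hs using Nat.le_induction with
  | base => exact h
  | succ s hs ih =>
    have e : ∀ W : Submodule ℂ B, mulSub x W * V = mulSub x (W * V) := by
      intro W
      apply le_antisymm
      · rw [Submodule.mul_le]
        intro m hm y hy
        obtain ⟨u, hu, rfl⟩ := mem_mulSub.1 hm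
        rw [mul_assoc]
        exact mem_mulSub.2 ⟨_, Submodule.mul_mem_mul hu hy, rfl⟩
      · intro z hz
        obtain ⟨u, hu, rfl⟩ := mem_mulSub.1 hz
        refine Submodule.mul_induction_on hu ?_ ?_
        · intro m hm y hy
          rw [← mul_assoc]
          exact Submodule.mul_mem_mul (mem_mulSub.2 ⟨m, hm, rfl⟩) hy
        · intro a b ha hb
          rw [mul_add]; exact Submodule.add_mem _ ha hb
    rw [pow_succ, ih, e, ← pow_succ, ← ih]

theorem aux_mono (V : Submodule ℂ B) (hV : V.FG) (x : B) (t : ℕ)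
    (h : V ^ (t + 1) = mulSub x (V ^ t)) (s : ℕ) (hs : t ≤ s) :
    Module.finrank ℂ (V ^ s : Submodule ℂ B) ≤ Module.finrank ℂ (V ^ t : Submodule ℂ B) := by
  induction s, hs using Nat.le_induction with
  | base => exact le_rfl
  | succ s hs ih =>
    have := pow_fin V hV s
    refine le_trans ?_ ih
    rw [aux_surj V x t h s hs]
    exact Submodule.finrank_map_le _ _

theorem aux_inj (V : Submodule ℂ B) (φ : B →ₗ[ℂ] ℂ) (T : ℕ)
    (hG : ∀ t ≤ T, ∀ u ∈ V ^ t, (∀ v ∈ V ^ (T - t), φ (u * v) = 0) → u = 0) (x : B) (t : ℕ)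
    (h : V ^ (t + 1) = mulSub x (V ^ t)) (s : ℕ) (hs : s + (t + 1) ≤ T) (u : B) (hu : u ∈ V ^ s)
    (hxu : x * u = 0) : u = 0 := by
  refine hG s (by omega) u hu fun v hv => ?_
  obtain ⟨r, hr⟩ : ∃ r, T - s = r + 1 := ⟨T - s - 1, by omega⟩
  rw [hr, aux_surj V x t h r (by omega)] at hv
  obtain ⟨w, hw, rfl⟩ := mem_mulSub.1 hv
  rw [show u * (x * w) = x * u * w by ring, hxu, zero_mul, map_zero]

theorem aux_inj_pow (V : Submodule ℂ B) (φ : B →ₗ[ℂ] ℂ) (T : ℕ)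
    (hG : ∀ t ≤ T, ∀ u ∈ V ^ t, (∀ v ∈ V ^ (T - t), φ (u * v) = 0) → u = 0) (x : B) (hx : x ∈ V)
    (t : ℕ) (h : V ^ (t + 1) = mulSub x (V ^ t)) (d s : ℕ) (hs : s + d + t ≤ T) (u : B)
    (hu : u ∈ V ^ s) (hxu : x ^ d * u = 0) : u = 0 := by
  induction d generalizing s u with
  | zero => simpa using hxu
  | succ d ih =>
    have h1 : x * u = 0 := ih (s + 1) (by omega) (x * u) (mul_mem_pow_succ hx hu) (by
      rw [← mul_assoc, ← pow_succ]; exact hxu)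
    exact aux_inj V φ T hG x t h s (by omega) u hu h1

/-- Common eigenvector. -/
theorem aux_eigen {ι : Type*} (X : ι → B) (x : B) (W : Submodule ℂ B) [Module.Finite ℂ W]
    (hW : W ≠ ⊥) (hinj : ∀ u ∈ W, x * u = 0 → u = 0)
    (hinj2 : ∀ i, ∀ u ∈ W, ∀ c : ℂ, x * (X i * u - c • (x * u)) = 0 → X i * u - c • (x * u) = 0)
    (hst : ∀ i, ∀ u ∈ W, ∃ v ∈ W, X i * u = x * v) :
    ∃ u ∈ W, u ≠ 0 ∧ ∃ l : ι → ℂ, ∀ i, X i * u = l i • (x * u) := by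
  let good : ℕ → Prop := fun d => ∃ N : Submodule ℂ B, N ≤ W ∧ N ≠ ⊥ ∧ Module.finrank ℂ N = d ∧
    ∀ i, ∀ u ∈ N, ∃ v ∈ N, X i * u = x * v
  have hex : ∃ d, good d := ⟨_, W, le_rfl, hW, rfl, hst⟩
  classical
  obtain ⟨N, hNW, hN0, hNd, hNst⟩ := Nat.find_spec hex
  have hmin : ∀ N' : Submodule ℂ B, N' ≤ N → N' ≠ ⊥ →
      (∀ i, ∀ u ∈ N', ∃ v ∈ N', X i * u = x * v) → N' = N := by
    intro N' h1 h2 h3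
    have : Module.Finite ℂ N := Submodule.finiteDimensional_of_le hNW
    apply Submodule.eq_of_le_of_finrank_le h1
    rw [hNd]
    exact Nat.find_min' hex ⟨N', h1.trans hNW, h2, rfl, h3⟩
  have hfin : Module.Finite ℂ N := Submodule.finiteDimensional_of_le hNW
  have hscal : ∀ i, ∃ c : ℂ, ∀ u ∈ N, X i * u = c • (x * u) := by
    intro i
    choose! v hvN hv using hNst i
    have huniq : ∀ a ∈ N, ∀ b ∈ N, x * a = x * b → a = b := by
      intro a ha b hb hab
      have := hinj (a - b) (hNW (N.sub_mem ha hb)) (by rw [mul_sub, hab, sub_self])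
      exact sub_eq_zero.1 this
    let M : N →ₗ[ℂ] N :=
      { toFun := fun u => ⟨v u, hvN u u.2⟩
        map_add' := by
          intro a b
          apply Subtype.ext
          apply huniq _ (hvN _ (a + b).2) _ (N.add_mem (hvN a a.2) (hvN b b.2))
          rw [← hv _ (a + b).2, mul_add, ← hv a a.2, ← hv b b.2, Submodule.coe_add, mul_add]
        map_smul' := by
          intro c a
          apply Subtype.ext
          apply huniq _ (hvN _ (c • a).2) _ (N.smul_mem c (hvN a a.2))
          rw [← hv _ (c • a).2, mul_smul_comm, ← hv a a.2, Submodule.coe_smul, mul_smul_comm] }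
    have : Nontrivial N := Submodule.nontrivial_iff_ne_bot.2 hN0
    obtain ⟨c, hc⟩ := Module.End.exists_eigenvalue M
    obtain ⟨e, he⟩ := hc.exists_hasEigenvector
    refine ⟨c, ?_⟩
    let N' : Submodule ℂ B := N ⊓ LinearMap.ker (LinearMap.mulLeft ℂ (X i) - c • LinearMap.mulLeft ℂ x)
    have hN' : ∀ u, u ∈ N' ↔ u ∈ N ∧ X i * u = c • (x * u) := by
      intro u
      simp [N', sub_eq_zero]
    have : N' = N := by
      apply hmin N' inf_le_left
      · intro h0
        have : (e : B) ∈ N' := by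
          rw [hN']
          refine ⟨e.2, ?_⟩
          have h1 := congrArg Subtype.val he.apply_eq_smul
          have h2 : v e = c • (e : B) := h1
          rw [hv e e.2, h2, mul_smul_comm]
        rw [h0, Submodule.mem_bot] at this
        exact he.2 (Subtype.ext this)
      · intro j u hu
        rw [hN'] at hu
        obtain ⟨w, hw, hjw⟩ := hNst j u hu.1
        refine ⟨w, ?_, hjw⟩
        rw [hN']
        refine ⟨hw, ?_⟩
        rw [← sub_eq_zero]
        apply hinj2 i w (hNW hw)
        have : x * (X i * w - c • (x * w)) = X i * (x * w) - c • (x * (x * w)) := by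
          rw [mul_sub, mul_smul_comm]; ring
        rw [this, ← hjw, show X i * (X j * u) = X j * (X i * u) by ring, hu.2, mul_smul_comm,
          show X j * (x * u) = x * (X j * u) by ring, sub_self]
    intro u hu
    rw [← this, hN'] at hu
    exact hu.2
  choose l hl using hscal
  obtain ⟨u, hu, hu0⟩ := Submodule.exists_mem_ne_zero_of_ne_bot hN0
  exact ⟨u, hNW hu, hu0, l, fun i => hl i u hu⟩

theorem aux_hom_eval {ι : Type*} (X : ι → B) (x u : B) (l : ι → ℂ)
    (h : ∀ i, X i * u = l i • (x * u)) (F : MvPolynomial ι ℂ) (d : ℕ) (hF : F.IsHomogeneous d) :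
    aeval X F * u = eval l F • (x ^ d * u) := by
  have hmon : ∀ m : ι →₀ ℕ, aeval X (monomial m (1 : ℂ)) * u
      = eval l (monomial m (1 : ℂ)) • (x ^ m.degree * u) := by
    intro m
    induction m using Finsupp.induction_linear with
    | zero => simp
    | add a b ha hb =>
      have e : (monomial (a + b) (1 : ℂ)) = monomial a 1 * monomial b 1 := by
        rw [monomial_mul, one_mul]
      rw [e, map_mul, map_mul, mul_assoc, hb, mul_smul_comm,
        show ∀ p q : B, p * (q * u) = q * (p * u) by intros; ring, ha, mul_smul_comm, smul_smul,
        mul_comm (eval l _), map_add, pow_add]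
      congr 1; ring
    | single i k =>
      simp only [aeval_monomial, eval_monomial, map_one, one_mul, Finsupp.degree_single]
      rw [Finsupp.prod_single_index (by simp), Finsupp.prod_single_index (by simp)]
      induction k with
      | zero => simp
      | succ k ih =>
        rw [pow_succ', mul_assoc, ih, mul_smul_comm, show X i * (x ^ k * u) = x ^ k * (X i * u) by ring,
          h, mul_smul_comm, smul_smul, ← pow_succ]
        congr 1; ring
  conv_lhs => rw [F.as_sum]
  conv_rhs => rw [F.as_sum]
  rw [map_sum, map_sum, Finset.sum_mul, Finset.sum_smul]
  refine Finset.sum_congr rfl fun m hm => ?_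
  have hd : m.degree = d := (hF.degree_eq_sum_deg_support hm).symm
  have e : monomial m (coeff m F) = (coeff m F) • monomial m (1 : ℂ) := by
    rw [smul_monomial, smul_eq_mul, mul_one]
  rw [e, map_smul, smul_mul_assoc, hmon, smul_eval, hd, mul_smul]

theorem aux_core {ι : Type*} [Finite ι] (X : ι → B) (V : Submodule ℂ B)
    (hVX : V = Submodule.span ℂ (Set.range X)) (φ : B →ₗ[ℂ] ℂ) (T : ℕ)
    (hG : ∀ t ≤ T, ∀ u ∈ V ^ t, (∀ v ∈ V ^ (T - t), φ (u * v) = 0) → u = 0) [Nontrivial B]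
    (a b N : ℕ) (hb : 2 ≤ b) (hab : b < a) (hT : a + b ≤ T + 2) (hN : 5 * N ≤ a * b)
    (hsum : ∑ s ∈ Finset.range T, Module.finrank ℂ (V ^ (s + 1) : Submodule ℂ B) ≤ N) :
    ∃ l : ι → ℂ, l ≠ 0 ∧ ∀ d ≤ a, ∀ F : MvPolynomial ι ℂ, F.IsHomogeneous d → aeval X F = 0 →
      eval l F = 0 := by
  have hV : V.FG := hVX ▸ Submodule.fg_span (Set.finite_range X)
  have hXV : ∀ i, X i ∈ V := fun i => hVX ▸ Submodule.subset_span ⟨i, rfl⟩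
  -- h(0) ≥ 1
  have h0 : 1 ≤ Module.finrank ℂ (V ^ 0 : Submodule ℂ B) := by
    have := pow_fin V hV 0
    rw [Nat.one_le_iff_ne_zero, ← Nat.pos_iff_ne_zero, Module.finrank_pos_iff]
    rw [Submodule.nontrivial_iff_ne_bot]
    intro h
    have : (1 : B) ∈ V ^ 0 := by rw [pow_zero]; exact Submodule.one_le.1 le_rfl
    rw [h, Submodule.mem_bot] at this
    exact one_ne_zero this
  obtain ⟨c, hc, hc1⟩ : ∃ c, 2 * c ≤ b ∧ b ≤ 2 * c + 1 := ⟨b / 2, by omega, by omega⟩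
  obtain ⟨t, htc, ht⟩ : ∃ t, t ≤ c ∧ Module.finrank ℂ (V ^ t : Submodule ℂ B) ≤ t := by
    by_contra hcon
    push Not at hcon
    have hmid : ∀ t, c ≤ t → t ≤ T - c → c + 1 ≤ Module.finrank ℂ (V ^ t : Submodule ℂ B) := by
      intro t h1 h2
      by_contra h3
      obtain ⟨r, rfl⟩ : ∃ r, t = r + 1 := ⟨t - 1, by omega⟩
      obtain ⟨x, hx, hxs⟩ := aux_green V hV r (by omega)
      have h4 := aux_mono V hV x (r + 1) (aux_surj V x r hxs (r + 1) (by omega)) (T - c) h2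
      rw [← aux_sym V hV φ T hG c (by omega)] at h4
      have := hcon c le_rfl
      omega
    have hsub : Finset.Ico (c - 1) (T - c) ⊆ Finset.range T := by
      intro s hs
      simp at hs ⊢; omega
    have h5 : (T - c - (c - 1)) * (c + 1) ≤ N := by
      refine le_trans ?_ hsum
      refine le_trans ?_ (Finset.sum_le_sum_of_subset hsub)
      have := Finset.card_nsmul_le_sum (Finset.Ico (c - 1) (T - c))
        (fun s => Module.finrank ℂ (V ^ (s + 1) : Submodule ℂ B)) (c + 1) (by
          intro s hs
          simp at hs
          exact hmid (s + 1) (by omega) (by omega))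
      simpa using this
    have h6 : a ≤ T - c - (c - 1) + 1 := by omega
    obtain ⟨m, hm⟩ : ∃ m, a = m + 1 := ⟨a - 1, by omega⟩
    have h7 : m * (c + 1) ≤ N := le_trans (Nat.mul_le_mul_right _ (by omega)) h5
    subst hm
    have h8 : b ≤ m := by omega
    nlinarith
  obtain ⟨r, rfl⟩ : ∃ r, t = r + 1 := by
    refine ⟨t - 1, ?_⟩
    rcases Nat.eq_zero_or_pos t with h | h
    · subst h; omega
    · omega
  obtain ⟨x, hx, hxs⟩ := aux_green V hV r ht
  have := pow_fin V hV r
  have hne : (V ^ r : Submodule ℂ B) ≠ ⊥ := by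
    intro h
    have h1 : ∀ u ∈ V ^ T, u = 0 := by
      intro u hu
      rw [show T = r + (T - r) by omega, pow_add, h, Submodule.bot_mul] at hu
      simpa using hu
    have : (1 : B) = 0 := by
      apply hG 0 (by omega) 1
      · rw [pow_zero]; exact Submodule.one_le.1 le_rfl
      · intro v hv
        rw [h1 v hv]; simp
    exact one_ne_zero this
  obtain ⟨u, hu, hu0, l, hl⟩ := aux_eigen X x (V ^ r) hne
    (fun u hu h => aux_inj V φ T hG x r hxs r (by omega) u hu h)
    (fun i u hu c h => aux_inj V φ T hG x r hxs (r + 1) (by omega) _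
      (Submodule.sub_mem _ (mul_mem_pow_succ (hXV i) hu)
        (Submodule.smul_mem _ _ (mul_mem_pow_succ hx hu))) h)
    (by
      intro i u hu
      have := mul_mem_pow_succ (hXV i) hu
      rw [hxs] at this
      obtain ⟨v, hv, h⟩ := mem_mulSub.1 this
      exact ⟨v, hv, h.symm⟩)
  have hxu : x * u ≠ 0 := fun h => hu0 (aux_inj V φ T hG x r hxs r (by omega) u hu h)
  refine ⟨l, ?_, ?_⟩
  · intro hl0
    apply hxu
    have : ∀ y ∈ V, y * u = 0 := by
      intro y hy
      rw [hVX] at hy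
      induction hy using Submodule.span_induction with
      | mem y hy => obtain ⟨i, rfl⟩ := hy; rw [hl i, hl0]; simp
      | zero => simp
      | add a b _ _ ha hb => rw [add_mul, ha, hb, add_zero]
      | smul c a _ ha => rw [smul_mul_assoc, ha, smul_zero]
    exact this x hx
  · intro d hd F hF h
    have h1 := aux_hom_eval X x u l hl F d hF
    rw [h, zero_mul] at h1
    rcases smul_eq_zero.1 h1.symm with h2 | h2
    · exact h2
    · exact absurd (aux_inj_pow V φ T hG x hx r hxs d r (by omega) u hu h2) hu0
end Abstract

section Points
variable {ι : Type*}

/-- Evaluation at a family of points. -/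
def evS {S : Type*} (v : S → ι → ℂ) : MvPolynomial ι ℂ →ₐ[ℂ] (S → ℂ) :=
  AlgHom.pi fun p => aeval (v p)

theorem evS_apply {S : Type*} (v : S → ι → ℂ) (F : MvPolynomial ι ℂ) (p : S) :
    evS v F p = eval (v p) F := by
  simp [evS, aeval_eq_eval]

/-- The functional picking the degree `T` part. -/
def phiT {S : Type*} (v : S → ι → ℂ) (w : Module.Dual ℂ (S → ℂ)) (T : ℕ) :
    MvPolynomial ι ℂ →ₗ[ℂ] ℂ :=
  w ∘ₗ (evS v).toLinearMap ∘ₗ homogeneousComponent T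

theorem phiT_same {S : Type*} (v : S → ι → ℂ) (w : Module.Dual ℂ (S → ℂ)) (T : ℕ)
    (F : MvPolynomial ι ℂ) (hF : F.IsHomogeneous T) : phiT v w T F = w (evS v F) := by
  simp [phiT, homogeneousComponent_eq_self hF]

theorem phiT_ne {S : Type*} (v : S → ι → ℂ) (w : Module.Dual ℂ (S → ℂ)) (T d : ℕ)
    (F : MvPolynomial ι ℂ) (hF : F.IsHomogeneous d) (h : d ≠ T) : phiT v w T F = 0 := by
  have : homogeneousComponent T F = 0 := by
    rw [homogeneousComponent_of_mem ((mem_homogeneousSubmodule _ _).2 hF), if_neg h.symm]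
  simp [phiT, this]

/-- The Gorenstein ideal. -/
def idJ {S : Type*} (v : S → ι → ℂ) (w : Module.Dual ℂ (S → ℂ)) (T : ℕ) :
    Ideal (MvPolynomial ι ℂ) where
  carrier := {F | ∀ G, phiT v w T (F * G) = 0}
  add_mem' := by
    intro a b ha hb G
    rw [add_mul, map_add, ha, hb, add_zero]
  zero_mem' := by intro G; simp
  smul_mem' := by
    intro c x hx G
    rw [smul_eq_mul, mul_comm c x, mul_assoc]
    exact hx _

theorem mem_idJ {S : Type*} (v : S → ι → ℂ) (w : Module.Dual ℂ (S → ℂ)) (T : ℕ)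
    (F : MvPolynomial ι ℂ) : F ∈ idJ v w T ↔ ∀ G, phiT v w T (F * G) = 0 := Iff.rfl

theorem mem_idJ_of {S : Type*} (v : S → ι → ℂ) (w : Module.Dual ℂ (S → ℂ)) (T d : ℕ)
    (F : MvPolynomial ι ℂ) (hF : F.IsHomogeneous d)
    (h : ∀ j, d + j = T → ∀ G : MvPolynomial ι ℂ, G.IsHomogeneous j → w (evS v (F * G)) = 0) :
    F ∈ idJ v w T := by
  rw [mem_idJ]
  intro G
  rw [← sum_homogeneousComponent G, Finset.mul_sum, map_sum]
  refine Finset.sum_eq_zero fun j _ => ?_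
  have hj := homogeneousComponent_isHomogeneous j G
  by_cases hd : d + j = T
  · rw [phiT_same _ _ _ _ (hd ▸ hF.mul hj)]
    exact h j hd _ hj
  · exact phiT_ne _ _ _ _ _ (hF.mul hj) hd

theorem aux_points [Finite ι] {S : Type*} [Fintype S] (v : S → ι → ℂ) (L : MvPolynomial ι ℂ)
    (hL : L.IsHomogeneous 1) (hLv : ∀ p, eval (v p) L = 1) (hvinj : Function.Injective v)
    (a b D : ℕ) (hb : 2 ≤ b) (hab : b < a) (hD : D + 3 = a + b) (hcard : 5 * Fintype.card S ≤ a * b)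
    (P : S) (hno : ¬ ∃ F : MvPolynomial ι ℂ, F.IsHomogeneous D ∧
      (∀ q, q ≠ P → eval (v q) F = 0) ∧ eval (v P) F ≠ 0) :
    ∃ l : ι → ℂ, l ≠ 0 ∧ eval l L = 0 ∧ ∀ d ≤ a, ∀ F : MvPolynomial ι ℂ, F.IsHomogeneous d →
      (∀ p, eval (v p) F = 0) → eval l F = 0 := by
  classical
  have hLev : evS v L = 1 := by
    ext p; rw [evS_apply, hLv]; rfl
  -- the functional w
  obtain ⟨w, hwP, hwD⟩ : ∃ w : Module.Dual ℂ (S → ℂ), w (Pi.single P 1) ≠ 0 ∧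
      ∀ F : MvPolynomial ι ℂ, F.IsHomogeneous D → w (evS v F) = 0 := by
    have hn : (Pi.single P 1 : S → ℂ) ∉ (homogeneousSubmodule ι ℂ D).map (evS v).toLinearMap := by
      rintro ⟨F, hF, hFe⟩
      have hFe' : evS v F = Pi.single P 1 := hFe
      refine hno ⟨F, hF, fun q hq => ?_, ?_⟩
      · rw [← evS_apply, hFe', Pi.single_eq_of_ne hq]
      · rw [← evS_apply, hFe', Pi.single_eq_same]; exact one_ne_zero
    obtain ⟨w, h1, h2⟩ := Submodule.exists_le_ker_of_notMem hn
    exact ⟨w, h1, fun F hF => h2 ⟨F, hF, rfl⟩⟩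
  have hex : ∃ t, ∃ F : MvPolynomial ι ℂ, F.IsHomogeneous t ∧ w (evS v F) ≠ 0 := by
    have hq : ∀ q : S, ∃ G : MvPolynomial ι ℂ, G.IsHomogeneous 1 ∧ (q ≠ P → eval (v q) G = 0) ∧
        eval (v P) G ≠ 0 := by
      intro q
      by_cases h : q = P
      · exact ⟨L, hL, fun h' => absurd h h', by rw [hLv]; exact one_ne_zero⟩
      · obtain ⟨j, hj⟩ := Function.ne_iff.1 (hvinj.ne h)
        refine ⟨X j - C (v q j) * L, (isHomogeneous_X _ _).sub (hL.C_mul _), fun _ => ?_, ?_⟩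
        · simp [hLv]
        · simp only [map_sub, map_mul, eval_X, eval_C, hLv, mul_one]
          exact sub_ne_zero.2 hj.symm
    choose G hG1 hG2 hG3 using hq
    refine ⟨_, ∏ q, G q, IsHomogeneous.prod _ _ (fun _ => 1) (fun q _ => hG1 q), ?_⟩
    have : evS v (∏ q, G q) = (∏ q, eval (v P) (G q)) • Pi.single P 1 := by
      ext p
      rw [evS_apply, map_prod]
      by_cases h : p = P
      · subst h; simp
      · rw [Finset.prod_eq_zero (Finset.mem_univ p) (hG2 p h)]
        simp [h]
    rw [this, map_smul, smul_eq_mul]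
    exact mul_ne_zero (Finset.prod_ne_zero_iff.2 fun q _ => hG3 q) hwP
  obtain ⟨F0, hF0, hwF0⟩ := Nat.find_spec hex
  have hmin : ∀ t < Nat.find hex, ∀ F : MvPolynomial ι ℂ, F.IsHomogeneous t → w (evS v F) = 0 := by
    intro t ht F hF
    by_contra h
    exact Nat.find_min hex ht ⟨F, hF, h⟩
  set T := Nat.find hex with hTdef
  have hTD : D < T := by
    by_contra h
    apply hwF0
    have h1 := hwD (L ^ (D - T) * F0) (by
      have := (hL.pow (D - T)).mul hF0
      rwa [one_mul, show D - T + T = D by omega] at this)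
    rwa [map_mul, map_pow, hLev, one_pow, one_mul] at h1
  clear_value T
  let J := idJ v w T
  let B := MvPolynomial ι ℂ ⧸ J
  let π : MvPolynomial ι ℂ →ₐ[ℂ] B := Ideal.Quotient.mkₐ ℂ J
  have hπ0 : ∀ F, π F = 0 ↔ F ∈ J := fun F => Ideal.Quotient.eq_zero_iff_mem
  let φ : B →ₗ[ℂ] ℂ := (J.restrictScalars ℂ).liftQ (phiT v w T) (by
    intro F hF
    have := hF 1
    rwa [mul_one] at this)
  have hφ : ∀ F, φ (π F) = phiT v w T F := fun F => rfl
  let V : Submodule ℂ B := (homogeneousSubmodule ι ℂ 1).map π.toLinearMap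
  have hVpow : ∀ t, V ^ t = (homogeneousSubmodule ι ℂ t).map π.toLinearMap := by
    intro t
    rw [← homogeneousSubmodule_one_pow, Submodule.map_pow]
  have hVmem : ∀ t u, u ∈ V ^ t ↔ ∃ F : MvPolynomial ι ℂ, F.IsHomogeneous t ∧ π F = u := by
    intro t u
    rw [hVpow]; rfl
  have hVX : V = Submodule.span ℂ (Set.range fun i => π (X i)) := by
    show Submodule.map _ _ = _
    rw [homogeneousSubmodule_one_eq_span_X, Submodule.map_span, ← Set.range_comp]
    rfl
  have hG : ∀ t ≤ T, ∀ u ∈ V ^ t, (∀ z ∈ V ^ (T - t), φ (u * z) = 0) → u = 0 := by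
    intro t ht u hu h
    obtain ⟨F, hF, rfl⟩ := (hVmem t u).1 hu
    rw [hπ0]
    refine mem_idJ_of v w T t F hF fun j hj G hGj => ?_
    have h1 := h (π G) ((hVmem _ _).2 ⟨G, by rwa [show T - t = j by omega], rfl⟩)
    rw [← map_mul, hφ, phiT_same] at h1
    · exact h1
    · exact hj ▸ hF.mul hGj
  have hnt : Nontrivial B := by
    refine ⟨π F0, 0, ?_⟩
    rw [Ne, hπ0]
    intro h
    have := h 1
    rw [mul_one, phiT_same _ _ _ _ hF0] at this
    exact hwF0 this
  let E : ℕ → Submodule ℂ (S → ℂ) := fun t => (homogeneousSubmodule ι ℂ t).map (evS v).toLinearMap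
  have hEstep : ∀ t, t + 1 ≤ T → Module.finrank ℂ (E t) +
      Module.finrank ℂ (V ^ (t + 1) : Submodule ℂ B) ≤ Module.finrank ℂ (E (t + 1)) := by
    intro t ht
    let R' := homogeneousSubmodule ι ℂ (T - (t + 1))
    -- functionals on forms of complementary degree
    let K : (S → ℂ) →ₗ[ℂ] Module.Dual ℂ R' :=
      ((LinearMap.mul ℂ (S → ℂ)).compr₂ w).compl₂ ((evS v).toLinearMap ∘ₗ R'.subtype)
    let K' : B →ₗ[ℂ] Module.Dual ℂ R' :=
      ((LinearMap.mul ℂ B).compr₂ φ).compl₂ (π.toLinearMap ∘ₗ R'.subtype)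
    have hK : ∀ e (G : R'), K e G = w (e * evS v G) := fun _ _ => rfl
    have hK' : ∀ u (G : R'), K' u G = φ (u * π G) := fun _ _ => rfl
    have hKK : ∀ F : MvPolynomial ι ℂ, F.IsHomogeneous (t + 1) → K (evS v F) = K' (π F) := by
      intro F hF
      ext G
      rw [hK, hK', ← map_mul, ← map_mul, hφ, phiT_same]
      have := hF.mul G.2
      rwa [show t + 1 + (T - (t + 1)) = T by omega] at this
    have hmap : (E (t + 1)).map K = (V ^ (t + 1)).map K' := by
      rw [hVpow]
      apply le_antisymm
      · rintro _ ⟨_, ⟨F, hF, rfl⟩, rfl⟩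
        exact ⟨_, ⟨F, hF, rfl⟩, (hKK F hF).symm⟩
      · rintro _ ⟨_, ⟨F, hF, rfl⟩, rfl⟩
        exact ⟨_, ⟨F, hF, rfl⟩, (hKK F hF)⟩
    have hinj : Function.Injective (K'.domRestrict (V ^ (t + 1))) := by
      rw [← LinearMap.ker_eq_bot, LinearMap.ker_eq_bot']
      intro u hu
      apply Subtype.ext
      refine hG (t + 1) ht u u.2 fun z hz => ?_
      obtain ⟨G, hGG, rfl⟩ := (hVmem _ _).1 hz
      exact LinearMap.congr_fun hu ⟨G, hGG⟩
    have hf1 : Module.finrank ℂ ((E (t + 1)).map K) = Module.finrank ℂ (V ^ (t + 1) : Submodule ℂ B) := by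
      rw [hmap, ← LinearMap.finrank_range_of_inj hinj, LinearMap.range_domRestrict]
    have hEE : E t ≤ E (t + 1) := by
      rintro _ ⟨F, hF, rfl⟩
      refine ⟨L * F, ?_, ?_⟩
      · have := hL.mul hF
        rwa [add_comm] at this
      · show evS v (L * F) = evS v F
        rw [map_mul, hLev, one_mul]
    have hker : E t ≤ LinearMap.ker K := by
      rintro _ ⟨F, hF, rfl⟩
      rw [LinearMap.mem_ker]
      ext G
      show w (evS v F * evS v G) = 0
      rw [← map_mul]
      exact hmin (t + (T - (t + 1))) (by omega) _ (hF.mul G.2)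
    have hrn := LinearMap.finrank_range_add_finrank_ker (K.domRestrict (E (t + 1)))
    rw [LinearMap.range_domRestrict, hf1] at hrn
    have hle : Module.finrank ℂ (E t) ≤ Module.finrank ℂ (LinearMap.ker (K.domRestrict (E (t + 1)))) := by
      let i : E t →ₗ[ℂ] LinearMap.ker (K.domRestrict (E (t + 1))) :=
        (Submodule.inclusion hEE).codRestrict _ (fun e => hker e.2)
      apply LinearMap.finrank_le_finrank_of_injective (f := i)
      intro x y hxy
      have h1 := congrArg (fun z => (z.1.1 : S → ℂ)) hxy
      exact Subtype.ext h1
    omega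
  have hsumE : ∀ t ≤ T, ∑ s ∈ Finset.range t, Module.finrank ℂ (V ^ (s + 1) : Submodule ℂ B)
      ≤ Module.finrank ℂ (E t) := by
    intro t
    induction t with
    | zero => intro _; simp
    | succ t ih =>
      intro ht
      rw [Finset.sum_range_succ]
      have := ih (by omega)
      have := hEstep t ht
      omega
  have hsum := (hsumE T le_rfl).trans (Submodule.finrank_le (E T))
  rw [Module.finrank_fintype_fun_eq_card] at hsum
  obtain ⟨l, hl0, hl⟩ := aux_core (fun i => π (X i)) V hVX φ T hG a b _ hb hab (by omega) hcard hsum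
  have haev : ∀ F : MvPolynomial ι ℂ, aeval (fun i => π (X i)) F = π F := by
    intro F
    have : aeval (fun i => π (X i)) = π := by
      ext i; simp
    rw [this]
  refine ⟨l, hl0, ?_, ?_⟩
  · refine hl 1 (by omega) L hL ?_
    rw [haev, hπ0]
    refine mem_idJ_of v w T 1 L hL fun j hj G hGj => ?_
    rw [map_mul, hLev, one_mul]
    exact hmin j (by omega) G hGj
  · intro d hd F hF hFv
    refine hl d hd F hF ?_
    rw [haev, hπ0]
    refine mem_idJ_of v w T d F hF fun j hj G hGj => ?_
    have : evS v F = 0 := by ext p; rw [evS_apply, hFv]; rfl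
    rw [map_mul, this, zero_mul, map_zero]
end Points

theorem rank26_iff (M : Matrix (Fin 2) (Fin 6) ℂ) :
    M.rank ≤ 1 ↔ ∀ i j, M 0 i * M 1 j - M 0 j * M 1 i = 0 := by
  constructor
  · intro h i j
    by_contra hne
    have hli : LinearIndependent ℂ M.row := by
      rw [Fintype.linearIndependent_iff]
      intro c hc
      have h1 := congrFun hc i
      have h2 := congrFun hc j
      simp only [Fin.sum_univ_two, Matrix.row, Pi.add_apply, Pi.smul_apply, smul_eq_mul,
        Pi.zero_apply] at h1 h2
      have h3 : c 0 * (M 0 i * M 1 j - M 0 j * M 1 i) = 0 := by linear_combination M 1 j * h1 - M 1 i * h2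
      have h4 : c 1 * (M 0 i * M 1 j - M 0 j * M 1 i) = 0 := by linear_combination M 0 i * h2 - M 0 j * h1
      intro q
      fin_cases q
      · exact (mul_eq_zero.1 h3).resolve_right hne
      · exact (mul_eq_zero.1 h4).resolve_right hne
    have := hli.rank_matrix
    simp at this
    omega
  · intro h
    by_cases h0 : ∀ i, M 0 i = 0
    · have : M = Matrix.vecMulVec ![0, 1] (M 1) := by
        ext q j
        fin_cases q
        · simp [Matrix.vecMulVec, h0]
        · simp [Matrix.vecMulVec]
      rw [this]; exact Matrix.rank_vecMulVec_le _ _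
    · push Not at h0
      obtain ⟨i, hi⟩ := h0
      have : M = Matrix.vecMulVec ![1, M 1 i / M 0 i] (M 0) := by
        ext q j
        fin_cases q
        · simp [Matrix.vecMulVec]
        · simp [Matrix.vecMulVec]
          field_simp
          linear_combination h i j
      rw [this]; exact Matrix.rank_vecMulVec_le _ _

/-- The minors of the Jacobian matrix. -/
def minor6 (f g : MvPolynomial (Fin 6) ℂ) (i j : Fin 6) : MvPolynomial (Fin 6) ℂ :=
  pderiv i f * pderiv j g - pderiv j f * pderiv i g

theorem minor6_hom (n k : ℕ) (f g : MvPolynomial (Fin 6) ℂ)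
    (hf : f.IsHomogeneous n) (hg : g.IsHomogeneous k) (hk : 1 ≤ k) (hn : 1 ≤ n) (i j : Fin 6) :
    (minor6 f g i j).IsHomogeneous (n + k - 2) := by
  have e : n + k - 2 = (n - 1) + (k - 1) := by omega
  rw [e]
  exact (hf.pderiv.mul hg.pderiv).sub (hf.pderiv.mul hg.pderiv)

theorem jac_iff (f g : MvPolynomial (Fin 6) ℂ) (v : Fin 6 → ℂ) :
    (Jac6 f g v).rank ≤ 1 ↔ ∀ i j, eval v (minor6 f g i j) = 0 := by
  rw [rank26_iff]
  simp [Jac6, minor6]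

theorem eval_smul_hom {σ : Type*} (F : MvPolynomial σ ℂ) (d : ℕ) (hF : F.IsHomogeneous d) (c : ℂ) (v : σ → ℂ) :
    eval (c • v) F = c ^ d * eval v F := by
  have := aux_hom_eval (B := ℂ) (c • v) c 1 v (by intro i; simp [mul_comm]) F d hF
  simp only [mul_one, smul_eq_mul] at this
  rw [aeval_eq_eval] at this
  change eval (c • v) F = _ at this
  rw [mul_comm, ← this]

theorem stmt_6 (n k : ℕ) (f g : MvPolynomial (Fin 6) ℂ)
    (hf : f.IsHomogeneous n) (hg : g.IsHomogeneous k)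
    (hk : 2 ≤ k) (hkn : k ≤ n) (hn : 5 ≤ n)
    (hGsmooth : ∀ p : ProjPt 5, eval p.rep g = 0 → ∃ j : Fin 6, eval p.rep (pderiv j g) ≠ 0)
    (hfin : (SingCI6 f g).Finite)
    (hcard : 5 * (SingCI6 f g).ncard ≤ (n + k - 2) * (n - 1)) :
    ∀ P ∈ SingCI6 f g, ∃ F : MvPolynomial (Fin 6) ℂ,
      F.IsHomogeneous (2 * n + k - 6) ∧
      (∀ Q ∈ SingCI6 f g, Q ≠ P → VanishesAt F Q) ∧ ¬ VanishesAt F P := by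
  intro P hP
  by_contra hno
  have : Finite (SingCI6 f g) := hfin
  have : Fintype (SingCI6 f g) := Fintype.ofFinite _
  -- a linear form nonvanishing at the singular points
  obtain ⟨ψ, hψ⟩ := Module.exists_dual_forall_apply_ne_zero (K := ℂ)
    (fun p : SingCI6 f g => p.1.rep) (fun p => p.1.rep_nonzero)
  let L : MvPolynomial (Fin 6) ℂ := ∑ i, C (ψ (Pi.single i 1)) * X i
  have hL : L.IsHomogeneous 1 := IsHomogeneous.sum _ _ _ fun i _ => isHomogeneous_C_mul_X _ _
  have hLψ : ∀ v : Fin 6 → ℂ, eval v L = ψ v := by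
    intro v
    conv_rhs => rw [pi_eq_sum_univ' v, map_sum]
    simp only [L, map_sum, map_mul, eval_C, eval_X, map_smul, smul_eq_mul]
    refine Finset.sum_congr rfl fun i _ => ?_
    rw [mul_comm]
  let v : SingCI6 f g → Fin 6 → ℂ := fun p => (ψ p.1.rep)⁻¹ • p.1.rep
  have hv0 : ∀ p, (ψ (p : SingCI6 f g).1.rep)⁻¹ ≠ 0 := fun p => inv_ne_zero (hψ p)
  have hev : ∀ (F : MvPolynomial (Fin 6) ℂ) d, F.IsHomogeneous d → ∀ p,
      (eval (v p) F = 0 ↔ eval p.1.rep F = 0) := by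
    intro F d hF p
    rw [eval_smul_hom F d hF, mul_eq_zero]
    simp [hv0 p, pow_eq_zero_iff', hψ p]
  have hvinj : Function.Injective v := by
    intro p q hpq
    apply Subtype.ext
    rw [← p.1.mk_rep, ← q.1.mk_rep, Projectivization.mk_eq_mk_iff']
    refine ⟨ψ p.1.rep * (ψ q.1.rep)⁻¹, ?_⟩
    rw [mul_smul]
    show ψ p.1.rep • v q = _
    rw [← hpq]
    show ψ p.1.rep • (ψ p.1.rep)⁻¹ • p.1.rep = _
    rw [smul_smul, mul_inv_cancel₀ (hψ p), one_smul]
  obtain ⟨l, hl0, hlL, hl⟩ := aux_points v L hL (by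
      intro p
      rw [hLψ, map_smul, smul_eq_mul, inv_mul_cancel₀ (hψ p)]) hvinj (n + k - 2) (n - 1)
    (2 * n + k - 6) (by omega) (by omega) (by omega) (by
      rwa [← Nat.card_eq_fintype_card, Nat.card_coe_set_eq]) ⟨P, hP⟩ (by
      rintro ⟨F, hF, h1, h2⟩
      refine hno ⟨F, hF, ?_, ?_⟩
      · intro Q hQ hQP
        exact (hev F _ hF ⟨Q, hQ⟩).1 (h1 ⟨Q, hQ⟩ (fun h => hQP (congrArg Subtype.val h)))
      · intro h
        exact h2 ((hev F _ hF ⟨P, hP⟩).2 h))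
  have hlf : eval l f = 0 := hl n (by omega) f hf fun p => (hev f n hf p).2 p.2.1
  have hlg : eval l g = 0 := hl k (by omega) g hg fun p => (hev g k hg p).2 p.2.2.1
  have hlm : ∀ i j, eval l (minor6 f g i j) = 0 := fun i j =>
    hl _ le_rfl _ (minor6_hom n k f g hf hg (by omega) (by omega) i j) fun p =>
      (hev _ _ (minor6_hom n k f g hf hg (by omega) (by omega) i j) p).2
        ((jac_iff f g _).1 p.2.2.2 i j)
  let p : ProjPt 5 := Projectivization.mk ℂ l hl0
  obtain ⟨c, hc⟩ := Projectivization.exists_smul_eq_mk_rep ℂ l hl0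
  have hrep : ∀ (F : MvPolynomial (Fin 6) ℂ) d, F.IsHomogeneous d → eval l F = 0 →
      eval p.rep F = 0 := by
    intro F d hF h
    have : p.rep = (c : ℂ) • l := hc.symm
    rw [this, eval_smul_hom F d hF, h, mul_zero]
  have hp : p ∈ SingCI6 f g := by
    refine ⟨hrep f n hf hlf, hrep g k hg hlg, ?_⟩
    rw [jac_iff]
    exact fun i j => hrep _ _ (minor6_hom n k f g hf hg (by omega) (by omega) i j) (hlm i j)
  have h1 := hrep L 1 hL hlL
  rw [hLψ] at h1
  exact hψ ⟨p, hp⟩ h1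
end
end
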